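/- For every n ≥ 2, the automorphism group Aut(F_n) of the free group F_n of rank n has uniformly exponential growth, i.e., ω(Aut(F_n)) > 1. -/

import Mathlib

open Filter

variable {G : Type*} [Group G]

noncomputable def wordLength (S : Set G) (g : G) : ℕ :=
  sInf {k | ∃ w : List G, w.length = k ∧ (∀ x ∈ w, x ∈ S ∨ x⁻¹ ∈ S) ∧ w.prod = g}

noncomputable def ballCard (S : Set G) (n : ℕ) : ℕ :=
  Set.ncard {g : G | wordLength S g ≤ n}

noncomputable def growthRate (S : Set G) : ℝ :=
  limUnder atTop (fun n : ℕ => (ballCard S n : ℝ) ^ ((n : ℝ)⁻¹))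

noncomputable def minGrowth (G : Type*) [Group G] : ℝ :=
  sInf {x : ℝ | ∃ S : Finset G, Subgroup.closure (S : Set G) = ⊤ ∧ growthRate (S : Set G) = x}

/-!
The action of `Aut(F_n)` on the abelianization `ℤⁿ` is an integral representation whose image is
stable under transposition and contains every elementary transvection. The transvections are
Zariski dense in `SL_n`, so for every finite generating set `S` the matrices in a ball of `S`
whose radius does not depend on `S` already span, through their Veronese images, all polynomial
functions of a given degree on the image. Since the entries are integers, the nonzero Gram
determinants of the kernel `(1 + tr AB)ᵈ` are at least `1` in absolute value; this makes the
interpolation quantitative, and yields a norm on matrices, adapted to `S`, all of whose constants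
are polynomial in the largest trace `R` on a ball of bounded radius. As integers of bounded size are
finite in number, on a large enough ball, again independent of `S`, the largest trace is as large as
we please. An element of large trace has a gap in the moduli of its eigenvalues, hence a dominated
splitting with some projection `P`, and by density a short element moves the range of `P` away
from itself. Ping-pong then gives two elements of length at most `l` generating a free monoid, so
the growth rate is at least `2 ^ (1 / l)` for every `S`.
-/

namespace UniformGrowth

section Roots

open Polynomial

lemma isCoprime_prod_X_sub_C {K : Type*} [Field K] {s t : Multiset K}
    (h : ∀ c ∈ s, ∀ d ∈ t, c ≠ d) :
    IsCoprime (s.map fun c => X - C c).prod (t.map fun c => X - C c).prod := by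
  refine Multiset.prod_induction (IsCoprime · _) _ (fun _ _ => IsCoprime.mul_left)
    isCoprime_one_left fun p hp => ?_
  obtain ⟨c, hc, rfl⟩ := Multiset.mem_map.mp hp
  refine Multiset.prod_induction (IsCoprime (X - C c)) _ (fun _ _ => IsCoprime.mul_right)
    isCoprime_one_right fun q hq => ?_
  obtain ⟨d, hd, rfl⟩ := Multiset.mem_map.mp hq
  exact isCoprime_X_sub_C_of_isUnit_sub (sub_ne_zero.mpr (h c hc d hd)).isUnit

variable {K A : Type*} [Field K] [Ring A] [Algebra K A]

lemma aeval_X_sub_C_mul (x y : A) (c : K) : aeval x (X - C c) * y = x * y - c • y := by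
  simp [sub_mul, Algebra.algebraMap_eq_smul_one]

lemma aeval_prod_X_sub_C_mul_sub_smul {x z : A} {c : K} {s : Multiset K}
    (h : aeval x ((c ::ₘ s).map fun d => X - C d).prod * z = 0) :
    aeval x (s.map fun d => X - C d).prod * (x * z - c • z) = 0 := by
  rw [← aeval_X_sub_C_mul, ← mul_assoc, ← map_mul, mul_comm _ (X - C c)]
  simpa using h

lemma aeval_prod_X_sub_C_mul_of_mul_eq_smul {x V : A} {c : K} (h : x * V = c • V)
    (s : Multiset K) :
    aeval x (s.map fun d => X - C d).prod * V = (s.map fun d => c - d).prod • V := by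
  induction s using Multiset.induction with
  | empty => simp
  | cons d s ih =>
    rw [Multiset.map_cons, Multiset.prod_cons, map_mul, mul_assoc, ih, mul_smul_comm,
      aeval_X_sub_C_mul, h, ← sub_smul, smul_smul, Multiset.map_cons, Multiset.prod_cons, mul_comm]

lemma aeval_prod_X_sub_C_ne_zero {x V : A} {c : K} (hV : V ≠ 0) (h : x * V = c • V)
    {s : Multiset K} (hs : ∀ d ∈ s, c ≠ d) : aeval x (s.map fun d => X - C d).prod ≠ 0 := by
  intro h0
  have hprod : (s.map fun d => c - d).prod • V = 0 := by
    rw [← aeval_prod_X_sub_C_mul_of_mul_eq_smul h, h0, zero_mul]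
  obtain ⟨d, hd, hcd⟩ := Multiset.mem_map.mp
    (Multiset.prod_eq_zero_iff.mp ((smul_eq_zero_iff_left hV).mp hprod))
  exact hs d hd (sub_eq_zero.mp hcd)

lemma aeval_prod_X_sub_C_inv_mul_eq_zero (a : Aˣ) {s : Multiset K} (hs : ∀ c ∈ s, c ≠ 0) {v : A}
    (hv : aeval (a : A) (s.map fun c => X - C c).prod * v = 0) :
    aeval (↑a⁻¹ : A) ((s.map (·⁻¹)).map fun c => X - C c).prod * v = 0 := by
  induction s using Multiset.induction generalizing v with
  | empty => simpa using hv
  | cons c s ih =>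
    have hc := hs c (Multiset.mem_cons_self _ _)
    set w := aeval (↑a⁻¹ : A) (X - C c⁻¹) * v with hw
    have hcomm : Commute (aeval (a : A) (s.map fun c => X - C c).prod) ↑a⁻¹ := by
      apply Commute.units_inv_right
      simpa using (Commute.all (s.map fun c => X - C c).prod X).map (aeval (R := K) (a : A))
    have hwv : w = (-c⁻¹) • (↑a⁻¹ * (aeval (a : A) (X - C c) * v)) := by
      rw [hw, aeval_X_sub_C_mul, aeval_X_sub_C_mul, mul_sub, a.inv_mul_cancel_left, mul_smul_comm,
        neg_smul, smul_sub, smul_smul, inv_mul_cancel₀ hc, one_smul, neg_sub]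
    have hw0 : aeval (a : A) (s.map fun c => X - C c).prod * w = 0 := by
      rw [hwv, mul_smul_comm, ← mul_assoc, hcomm.eq, mul_assoc, ← mul_assoc (aeval _ _), ← map_mul,
        mul_comm _ (X - C c)]
      simp only [Multiset.map_cons, Multiset.prod_cons] at hv
      rw [hv, mul_zero, smul_zero]
    rw [Multiset.map_cons, Multiset.map_cons, Multiset.prod_cons, mul_comm, map_mul, mul_assoc]
    exact ih (fun d hd => hs d (Multiset.mem_cons_of_mem hd)) hw0

lemma exists_idempotent_of_aeval_prod_eq_zero (a : A) {s t : Multiset K}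
    (hst : ∀ c ∈ s, ∀ d ∈ t, c ≠ d) (h : aeval a ((s + t).map fun c => X - C c).prod = 0) :
    ∃ P : A, IsIdempotentElem P ∧ Commute a P ∧
      aeval a (s.map fun c => X - C c).prod * (1 - P) = 0 ∧
      aeval a (t.map fun c => X - C c).prod * P = 0 := by
  obtain ⟨p, q, hpq⟩ := isCoprime_prod_X_sub_C hst
  rw [Multiset.map_add, Multiset.prod_add] at h
  set S := (s.map fun c => X - C c).prod
  set T := (t.map fun c => X - C c).prod
  have hcompl : 1 - aeval a (p * S) = aeval a (q * T) := by
    rw [sub_eq_iff_eq_add', ← map_add, hpq, map_one]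
  have hS : aeval a S * (1 - aeval a (p * S)) = 0 := by
    rw [hcompl, ← map_mul, mul_left_comm, map_mul, h, mul_zero]
  refine ⟨aeval a (p * S), ?_, ?_, hS, ?_⟩
  · have : aeval a (p * S) * (1 - aeval a (p * S)) = 0 := by
      rw [map_mul, mul_assoc, ← map_mul, hS, mul_zero]
    rwa [mul_sub, mul_one, sub_eq_zero, eq_comm] at this
  · simpa using (Commute.all X (p * S)).map (aeval a)
  · rw [← map_mul, mul_left_comm, mul_comm T, map_mul, h, mul_zero]

end Roots

section AlgebraNorm

open Polynomial

variable {K A : Type*} [NormedField K] [Ring A] [Algebra K A] (ν : AlgebraNorm K A)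

lemma map_mul_le_of_map_le {x : A} {a : ℝ} (hx : ν x ≤ a) (y : A) : ν (x * y) ≤ a * ν y :=
  (map_mul_le_mul ν x y).trans (mul_le_mul_of_nonneg_right hx (apply_nonneg ν y))

lemma map_pow_mul_le {x : A} {a : ℝ} (hx : ν x ≤ a) (y : A) (m : ℕ) :
    ν (x ^ m * y) ≤ a ^ m * ν y := by
  have ha : 0 ≤ a := (apply_nonneg ν x).trans hx
  induction m with
  | zero => simp
  | succ m ih =>
    calc ν (x ^ (m + 1) * y) = ν (x * (x ^ m * y)) := by rw [pow_succ', mul_assoc]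
      _ ≤ a * (a ^ m * ν y) := (map_mul_le_of_map_le ν hx _).trans (by gcongr)
      _ = a ^ (m + 1) * ν y := by ring

lemma map_mul_sub_smul_le {x : A} {c : K} {a b : ℝ} (hx : ν x ≤ a) (hc : ‖c‖ ≤ b) (z : A) :
    ν (x * z - c • z) ≤ (a + b) * ν z := by
  refine (map_sub_le_add ν _ _).trans ?_
  rw [add_mul, map_smul_eq_mul]
  exact add_le_add (map_mul_le_of_map_le ν hx z)
    (mul_le_mul_of_nonneg_right hc (apply_nonneg ν z))

lemma map_sub_map_le_map_add (x y : A) : ν x - ν y ≤ ν (x + y) := by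
  simpa [sub_le_iff_le_add] using map_sub_le_add ν (x + y) y

lemma le_pow_mul_of_succ_le {β C : ℝ} {u : ℕ → ℝ} (hβ : 0 < β) (hC : 0 ≤ C) (hu : 0 ≤ u 0)
    (h : ∀ m, u (m + 1) ≤ β * u m + (2 * β) ^ m * C) (m : ℕ) :
    u m ≤ (2 * β) ^ m * (u 0 + C / β) := by
  induction m with
  | zero => simpa using div_nonneg hC hβ.le
  | succ m ih =>
    have hpos : 0 ≤ (2 * β) ^ m * (β * u 0) := by positivity
    calc u (m + 1) ≤ β * ((2 * β) ^ m * (u 0 + C / β)) + (2 * β) ^ m * C :=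
          (h m).trans (by gcongr)
      _ = (2 * β) ^ m * (β * u 0) + (2 * β) ^ m * (2 * C) := by field_simp; ring
      _ ≤ (2 * β) ^ m * (2 * (β * u 0)) + (2 * β) ^ m * (2 * C) := by linarith
      _ = (2 * β) ^ (m + 1) * (u 0 + C / β) := by field_simp; ring

lemma map_pow_mul_le_of_prod_roots_mul_eq_zero {x : A} {M β : ℝ} (hβ : 0 < β) (hx : ν x ≤ M)
    (s : Multiset K) (hs : ∀ c ∈ s, ‖c‖ ≤ β) (z : A)
    (hz : aeval x (s.map fun c => X - C c).prod * z = 0) (m : ℕ) :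
    ν (x ^ m * z) ≤ (2 * β) ^ m * (2 + M / β) ^ s.card * ν z := by
  have hM : 0 ≤ M := (apply_nonneg ν x).trans hx
  induction s using Multiset.induction generalizing z m with
  | empty =>
    have : z = 0 := by simpa using hz
    simp [this]
  | cons c s ih =>
    set q := 2 + M / β with hqdef
    have hqβ : (M + β) / β = q - 1 := by
      rw [hqdef]
      field_simp
      ring
    have hq : 1 ≤ q ^ s.card := one_le_pow₀ (by linarith [div_nonneg hM hβ.le])
    have hc : ‖c‖ ≤ β := hs c (Multiset.mem_cons_self _ _)
    have hnorm : ν (x * z - c • z) ≤ (M + β) * ν z := map_mul_sub_smul_le ν hx hc z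
    have hstep (m : ℕ) : ν (x ^ (m + 1) * z) ≤
        β * ν (x ^ m * z) + (2 * β) ^ m * (q ^ s.card * ν (x * z - c • z)) := by
      have hsplit : x ^ (m + 1) * z = c • (x ^ m * z) + x ^ m * (x * z - c • z) := by
        rw [pow_succ, mul_sub, mul_smul_comm, mul_assoc, add_sub_cancel]
      rw [hsplit, ← mul_assoc]
      refine (map_add_le_add ν _ _).trans (add_le_add ?_ ?_)
      · rw [map_smul_eq_mul]
        gcongr
      · exact ih (fun d hd => hs d (Multiset.mem_cons_of_mem hd)) _
          (aeval_prod_X_sub_C_mul_sub_smul hz) m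
    calc ν (x ^ m * z) ≤ (2 * β) ^ m * (ν z + q ^ s.card * ν (x * z - c • z) / β) := by
          simpa using le_pow_mul_of_succ_le (u := fun m => ν (x ^ m * z)) hβ (by positivity)
            (apply_nonneg ν _) hstep m
      _ ≤ (2 * β) ^ m * (q ^ s.card * ν z + q ^ s.card * ((M + β) * ν z) / β) := by
          gcongr
          exact le_mul_of_one_le_left (apply_nonneg ν z) hq
      _ = (2 * β) ^ m * q ^ (c ::ₘ s).card * ν z := by
          rw [Multiset.card_cons]
          linear_combination (2 * β) ^ m * q ^ s.card * ν z * hqβ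

lemma map_le_map_mul_of_prod_roots_mul_eq_zero {x : A} {B δ : ℝ} (hδ : 0 < δ) (hδ1 : δ ≤ 1)
    (hx : ν x ≤ B) (s : Multiset K) (hs : ∀ c ∈ s, δ ≤ ‖c‖ ∧ ‖c‖ ≤ B) (v : A)
    (hv : aeval x (s.map fun c => X - C c).prod * v = 0) :
    ν v ≤ ((1 + 2 * B) / δ) ^ s.card * ν (x * v) := by
  have hB : 0 ≤ B := (apply_nonneg ν x).trans hx
  induction s using Multiset.induction generalizing v with
  | empty =>
    have : v = 0 := by simpa using hv
    simp [this]
  | cons c s ih =>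
    obtain ⟨hcδ, hcB⟩ := hs c (Multiset.mem_cons_self _ _)
    set r := (1 + 2 * B) / δ
    have hδr : δ * r = 1 + 2 * B := mul_div_cancel₀ _ hδ.ne'
    have hr1 : 1 ≤ r ^ s.card := one_le_pow₀ ((one_le_div hδ).mpr (hδ1.trans (by linarith)))
    set z := x * v - c • v with hz
    have hxz : ν (x * z) ≤ 2 * B * ν (x * v) := by
      rw [hz, mul_sub, mul_smul_comm, two_mul]
      exact map_mul_sub_smul_le ν hx hcB (x * v)
    have hδv : δ * ν v ≤ ν (x * v) + ν z := by
      calc δ * ν v ≤ ‖c‖ * ν v := by gcongr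
        _ = ν (x * v - z) := by rw [← map_smul_eq_mul, hz, sub_sub_cancel]
        _ ≤ ν (x * v) + ν z := map_sub_le_add ν _ _
    have hzle : ν z ≤ r ^ s.card * (2 * B * ν (x * v)) :=
      (ih (fun d hd => hs d (Multiset.mem_cons_of_mem hd)) z
        (aeval_prod_X_sub_C_mul_sub_smul hv)).trans (by gcongr)
    refine le_of_mul_le_mul_left ?_ hδ
    calc δ * ν v ≤ ν (x * v) + ν z := hδv
      _ ≤ r ^ s.card * ν (x * v) + r ^ s.card * (2 * B * ν (x * v)) := by
        gcongr
        exact le_mul_of_one_le_left (apply_nonneg ν _) hr1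
      _ = δ * (r ^ (c ::ₘ s).card * ν (x * v)) := by
        rw [Multiset.card_cons]
        linear_combination -(r ^ s.card * ν (x * v)) * hδr

end AlgebraNorm

section PingPong

variable {K A : Type*} [NormedField K] [Ring A] [Algebra K A]

/-- The cone of aperture `κ` around the range of left multiplication by the idempotent `P`,
measured in the norm `ν`. -/
def cone (ν : AlgebraNorm K A) (P : A) (κ : ℝ) : Set A :=
  {v | ν ((1 - P) * v) ≤ κ * ν (P * v)}

/-- The hypotheses of the ping-pong argument for left multiplication by `x` and `h * x`: the map
`x` dilates the range of the idempotent `P` much more than its kernel, and `h` moves the range of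
`P` to a position that is transverse both to the kernel and to the range of `P`, all of this
quantified by `E`. -/
structure IsPingPongPair (ν : AlgebraNorm K A) (P x h : A) (E : ℝ) : Prop where
  idem : IsIdempotentElem P
  ne_zero : P ≠ 0
  commute : Commute x P
  isUnit_left : IsUnit x
  isUnit_right : IsUnit h
  one_le : 1 ≤ E
  map_mul_le : ∀ v, ν (P * v) ≤ E * ν v
  map_compl_mul_le : ∀ v, ν ((1 - P) * v) ≤ E * ν v
  map_right_le : ν h ≤ E
  transverse_ker : ∀ p, P * p = p → ν p ≤ E * ν (P * (h * p))
  transverse_range : ν P ≤ E * ν ((1 - P) * (h * P))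
  dominated : ∀ z p, P * z = 0 → P * p = p →
    40 * E ^ 6 * (ν (x * z) * ν p) ≤ ν z * ν (x * p)

variable {ν : AlgebraNorm K A} {P x h : A} {E : ℝ}

lemma mem_cone {κ : ℝ} {v : A} : v ∈ cone ν P κ ↔ ν ((1 - P) * v) ≤ κ * ν (P * v) := Iff.rfl

lemma mem_cone_of_mul_eq_self {κ : ℝ} (hκ : 0 ≤ κ) {v : A} (hv : P * v = v) : v ∈ cone ν P κ := by
  have : 0 ≤ κ * ν v := by positivity
  simpa [mem_cone, sub_mul, hv] using this

lemma cone_mono {κ κ' : ℝ} (h : κ ≤ κ') : cone ν P κ ⊆ cone ν P κ' := fun v hv =>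
  le_trans hv (mul_le_mul_of_nonneg_right h (apply_nonneg ν (P * v)))

lemma mul_add_one_sub_mul (P v : A) : P * v + (1 - P) * v = v := by
  rw [← add_mul, add_sub_cancel, one_mul]

lemma mul_mul_of_idem (hP : IsIdempotentElem P) (v : A) : P * (P * v) = P * v := by
  rw [← mul_assoc, hP.eq]

lemma mul_one_sub_mul_of_idem (hP : IsIdempotentElem P) (v : A) : P * ((1 - P) * v) = 0 := by
  rw [← mul_assoc, hP.mul_one_sub_self, zero_mul]

-- Left multiplication by `P g P + (1 - P)` is block triangular with respect to `P`; it is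
-- injective because `g` keeps the range of `P` in a cone, away from the kernel of `P`.
lemma exists_mul_eq_of_mapsTo_cone [FiniteDimensional K A] (hP : IsIdempotentElem P) {g : A}
    (hg : IsUnit g) {ε : ℝ} (hcone : ∀ v, P * v = v → g * v ∈ cone ν P ε) :
    ∃ v, P * v = v ∧ P * (g * v) = P := by
  have : IsArtinianRing Aᵐᵒᵖ := .of_finite K _
  set N : A := P * g * P + (1 - P) with hN
  have hPN (v : A) : P * (N * v) = P * (g * (P * v)) := by
    rw [hN, add_mul, mul_add, mul_one_sub_mul_of_idem hP, add_zero, mul_assoc, mul_assoc,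
      mul_mul_of_idem hP]
  have hQN (v : A) : (1 - P) * (N * v) = (1 - P) * v := by
    rw [hN, add_mul, mul_add, ← mul_assoc _ (P * g * P), ← mul_assoc, ← mul_assoc,
      hP.one_sub_mul_self, ← mul_assoc _ (1 - P), hP.one_sub.eq]
    simp
  have hfix {v : A} (hv : (1 - P) * v = 0) : P * v = v := by
    simpa [hv] using mul_add_one_sub_mul P v
  have hreg : IsLeftRegular N := isLeftRegular_of_non_zero_divisor N fun v hv => by
    have hPv : P * v = v := hfix (by rw [← hQN, hv, mul_zero])
    have hPgv : P * (g * v) = 0 := by rw [← hPv, ← hPN, hv, mul_zero]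
    have hQgv : (1 - P) * (g * v) = 0 := by
      have := mem_cone.mp (hcone v hPv)
      rw [hPgv, map_zero, mul_zero] at this
      exact eq_zero_of_map_eq_zero ν (this.antisymm (apply_nonneg ν _))
    rw [← hg.mul_right_eq_zero, ← mul_add_one_sub_mul P (g * v), hPgv, hQgv, add_zero]
  obtain ⟨N', hN'⟩ := (IsArtinianRing.isUnit_iff_isLeftRegular.mpr hreg).exists_right_inv
  obtain ⟨v, hv⟩ : ∃ v, N * v = P := ⟨N' * P, by rw [← mul_assoc, hN', one_mul]⟩
  have hPv : P * v = v := hfix (by rw [← hQN, hv, hP.one_sub_mul_self])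
  exact ⟨v, hPv, by rw [← hPv, ← hPN, hv, hP.eq]⟩

namespace IsPingPongPair

lemma mul_mem_cone_of_mem_cone (hx : IsPingPongPair ν P x h E) {v : A}
    (hv : v ∈ cone ν P (4 * E ^ 3)) : x * v ∈ cone ν P (1 / (10 * E ^ 3)) := by
  have hE : 0 < E := one_pos.trans_le hx.one_le
  have hPx : P * (x * v) = x * (P * v) := by rw [← mul_assoc, ← hx.commute.eq, mul_assoc]
  have hQx : (1 - P) * (x * v) = x * ((1 - P) * v) := by
    rw [sub_mul, sub_mul, mul_sub, hPx, one_mul, one_mul]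
  rw [mem_cone] at hv ⊢
  rw [hPx, hQx]
  rcases (apply_nonneg ν (P * v)).eq_or_lt with hPv | hPv
  · rw [← hPv, mul_zero] at hv
    rw [eq_zero_of_map_eq_zero ν (hv.antisymm (apply_nonneg ν _)), mul_zero, map_zero]
    positivity
  · have hdom := hx.dominated _ _ (mul_one_sub_mul_of_idem hx.idem v) (mul_mul_of_idem hx.idem v)
    have hPv' : 40 * E ^ 6 * ν (x * ((1 - P) * v)) ≤ 4 * E ^ 3 * ν (x * (P * v)) := by
      refine le_of_mul_le_mul_right ?_ hPv
      calc 40 * E ^ 6 * ν (x * ((1 - P) * v)) * ν (P * v)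
          ≤ ν ((1 - P) * v) * ν (x * (P * v)) := by linarith
        _ ≤ 4 * E ^ 3 * ν (P * v) * ν (x * (P * v)) := by gcongr
        _ = 4 * E ^ 3 * ν (x * (P * v)) * ν (P * v) := by ring
    rw [div_mul_eq_mul_div, one_mul, le_div_iff₀ (by positivity)]
    refine le_of_mul_le_mul_left ?_ (by positivity : 0 < 4 * E ^ 3)
    linarith

variable (hx : IsPingPongPair ν P x h E)
include hx

lemma map_proj_mul_right_mul_le (v : A) : ν (P * (h * v)) ≤ E ^ 2 * ν v := by
  have hE : 0 < E := one_pos.trans_le hx.one_le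
  calc ν (P * (h * v)) ≤ E * (E * ν v) :=
        (hx.map_mul_le _).trans (by gcongr; exact map_mul_le_of_map_le ν hx.map_right_le v)
    _ = E ^ 2 * ν v := by ring

lemma map_compl_mul_right_mul_le (v : A) : ν ((1 - P) * (h * v)) ≤ E ^ 2 * ν v := by
  have hE : 0 < E := one_pos.trans_le hx.one_le
  calc ν ((1 - P) * (h * v)) ≤ E * (E * ν v) :=
        (hx.map_compl_mul_le _).trans (by gcongr; exact map_mul_le_of_map_le ν hx.map_right_le v)
    _ = E ^ 2 * ν v := by ring

lemma right_mul_mem_cone_of_mem_cone {v : A} (hv : v ∈ cone ν P (1 / (10 * E ^ 3))) :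
    h * v ∈ cone ν P (4 * E ^ 3) := by
  have hE := hx.one_le
  have hE3 : 1 ≤ E ^ 3 := one_le_pow₀ hE
  rw [mem_cone, div_mul_eq_mul_div, one_mul, le_div_iff₀ (by positivity)] at hv
  have hQv : E ^ 3 * ν ((1 - P) * v) ≤ 1 / 10 * ν (P * v) := by linarith
  have hPhv : ν (P * v) ≤ 2 * E * ν (P * (h * v)) := by
    have hsplit : ν (P * (h * (P * v))) - ν (P * (h * ((1 - P) * v))) ≤ ν (P * (h * v)) := by
      conv_rhs => rw [← mul_add_one_sub_mul P v, mul_add, mul_add]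
      exact map_sub_map_le_map_add ν _ _
    have hPhP := hx.transverse_ker (P * v) (mul_mul_of_idem hx.idem v)
    have hPhQ := hx.map_proj_mul_right_mul_le ((1 - P) * v)
    have : ν (P * v) ≤ E * ν (P * (h * v)) + E ^ 3 * ν ((1 - P) * v) := by
      calc ν (P * v) ≤ E * (ν (P * (h * v)) + E ^ 2 * ν ((1 - P) * v)) :=
            hPhP.trans (by gcongr; linarith)
        _ = E * ν (P * (h * v)) + E ^ 3 * ν ((1 - P) * v) := by ring
    linarith [hQv, mul_nonneg (zero_le_one.trans hE) (apply_nonneg ν (P * (h * v)))]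
  have hvP : ν v ≤ 2 * ν (P * v) := by
    have hadd := map_add_le_add ν (P * v) ((1 - P) * v)
    rw [mul_add_one_sub_mul] at hadd
    have : ν ((1 - P) * v) ≤ E ^ 3 * ν ((1 - P) * v) :=
      le_mul_of_one_le_left (apply_nonneg ν _) hE3
    linarith [apply_nonneg ν (P * v)]
  calc ν ((1 - P) * (h * v)) ≤ E ^ 2 * ν v := hx.map_compl_mul_right_mul_le v
    _ ≤ E ^ 2 * (2 * (2 * E * ν (P * (h * v)))) := by gcongr; linarith
    _ = 4 * E ^ 3 * ν (P * (h * v)) := by ring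

lemma inv_ten_mul_le_four_mul : 1 / (10 * E ^ 3) ≤ 4 * E ^ 3 := by
  have hE3 : 1 ≤ E ^ 3 := one_le_pow₀ hx.one_le
  calc 1 / (10 * E ^ 3) ≤ 1 := (div_le_one (by positivity)).mpr (by linarith)
    _ ≤ 4 * E ^ 3 := by linarith

lemma mul_mem_cone_of_mem_closure {w : A} (hw : w ∈ Submonoid.closure {x, h * x}) {v : A}
    (hv : v ∈ cone ν P (4 * E ^ 3)) : w * v ∈ cone ν P (4 * E ^ 3) := by
  induction hw using Submonoid.closure_induction generalizing v with
  | mem y hy =>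
    rcases hy with rfl | rfl
    · exact cone_mono hx.inv_ten_mul_le_four_mul (hx.mul_mem_cone_of_mem_cone hv)
    · rw [mul_assoc]
      exact hx.right_mul_mem_cone_of_mem_cone (hx.mul_mem_cone_of_mem_cone hv)
  | one => rwa [one_mul]
  | mul y z _ _ hy hz => rw [mul_assoc]; exact hy (hz hv)

lemma isUnit_of_mem_closure {w : A} (hw : w ∈ Submonoid.closure {x, h * x}) : IsUnit w := by
  have : Submonoid.closure {x, h * x} ≤ IsUnit.submonoid A := by
    rw [Submonoid.closure_le, Set.pair_subset_iff]
    exact ⟨hx.isUnit_left, hx.isUnit_right.mul hx.isUnit_left⟩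
  exact this hw

lemma mul_mem_cone_of_mul_eq_self {w v : A} (hw : w ∈ Submonoid.closure {x, h * x})
    (hv : P * v = v) : x * (w * v) ∈ cone ν P (1 / (10 * E ^ 3)) := by
  have hE : 0 ≤ 4 * E ^ 3 := by linarith [one_le_pow₀ hx.one_le (n := 3)]
  exact hx.mul_mem_cone_of_mem_cone
    (hx.mul_mem_cone_of_mem_closure hw (mem_cone_of_mul_eq_self hE hv))

lemma mul_add_notMem_cone {q : A} (hq : E ^ 3 * ν q ≤ 1 / 10 * ν P) :
    h * (P + q) ∉ cone ν P (1 / (10 * E ^ 3)) := by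
  intro hcone
  have hE := hx.one_le
  have hE3 : 1 ≤ E ^ 3 := one_le_pow₀ hE
  have hthin : E ^ 3 * ν ((1 - P) * (h * (P + q))) ≤ 1 / 10 * ν (P * (h * (P + q))) := by
    rw [mem_cone, div_mul_eq_mul_div, one_mul, le_div_iff₀ (by positivity)] at hcone
    linarith
  have hqle : ν q ≤ ν P := by
    have : ν q ≤ E ^ 3 * ν q := le_mul_of_one_le_left (apply_nonneg ν q) hE3
    linarith [apply_nonneg ν P]
  have hPhle : ν (P * (h * (P + q))) ≤ E ^ 2 * (2 * ν P) :=
    (hx.map_proj_mul_right_mul_le _).trans (by gcongr; linarith [map_add_le_add ν P q])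
  have hQhP : ν ((1 - P) * (h * P)) ≤ ν ((1 - P) * (h * (P + q))) + E ^ 2 * ν q := by
    have := map_sub_map_le_map_add ν ((1 - P) * (h * P)) ((1 - P) * (h * q))
    rw [← mul_add, ← mul_add] at this
    linarith [hx.map_compl_mul_right_mul_le q]
  have hsmall : E ^ 2 * ν P ≤ E ^ 2 * (3 / 10 * ν P) := by
    calc E ^ 2 * ν P ≤ E ^ 2 * (E * ν ((1 - P) * (h * P))) := by
          gcongr
          exact hx.transverse_range
      _ ≤ E ^ 2 * (E * (ν ((1 - P) * (h * (P + q))) + E ^ 2 * ν q)) := by gcongr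
      _ = E ^ 3 * ν ((1 - P) * (h * (P + q))) + E ^ 2 * (E ^ 3 * ν q) := by ring
      _ ≤ 1 / 10 * (E ^ 2 * (2 * ν P)) + E ^ 2 * (1 / 10 * ν P) := by
          refine add_le_add (hthin.trans ?_) ?_ <;> gcongr
      _ = E ^ 2 * (3 / 10 * ν P) := by ring
  have hP := map_pos_of_ne_zero ν hx.ne_zero
  linarith [le_of_mul_le_mul_left hsmall (by positivity)]

-- If the two products agreed, then `g = x w'` and `h g = x w` would both send the range of `P`
-- into a thin cone; so `h` would almost preserve the range of `P`.
theorem mul_ne_mul [FiniteDimensional K A] {w w' : A} (hw : w ∈ Submonoid.closure {x, h * x})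
    (hw' : w' ∈ Submonoid.closure {x, h * x}) : x * w ≠ h * x * w' := by
  intro heq
  have hE3 : 0 < E ^ 3 := by linarith [one_le_pow₀ hx.one_le (n := 3)]
  have hg (v : A) (hv : P * v = v) : x * w' * v ∈ cone ν P (1 / (10 * E ^ 3)) := by
    rw [mul_assoc]
    exact hx.mul_mem_cone_of_mul_eq_self hw' hv
  obtain ⟨v, hPv, hPgv⟩ := exists_mul_eq_of_mapsTo_cone hx.idem
    (hx.isUnit_left.mul (hx.isUnit_of_mem_closure hw')) hg
  set q := (1 - P) * (x * w' * v)
  have hsplit : x * w' * v = P + q := by rw [← mul_add_one_sub_mul P (x * w' * v), hPgv]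
  have hq : E ^ 3 * ν q ≤ 1 / 10 * ν P := by
    have := hg v hPv
    rw [mem_cone, hPgv, div_mul_eq_mul_div, one_mul, le_div_iff₀ (by positivity)] at this
    linarith
  refine hx.mul_add_notMem_cone hq ?_
  rw [← hsplit, ← mul_assoc, ← mul_assoc, ← heq, mul_assoc]
  exact hx.mul_mem_cone_of_mul_eq_self hw hPv

end IsPingPongPair

end PingPong

section DominatedSplitting

open Polynomial

variable {K A : Type*} [NormedField K] [Ring A] [Algebra K A]

/-- The idempotent `P` splits left multiplication by `a` into a part `ker P`, on which `a ^ m`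
expands by at most `μ ^ m`, and a part `range P`, on which `a ^ m` expands by at least
`(θ * μ) ^ m`, in both cases up to the factor `Q`. -/
structure IsDominatedSplitting (ν : AlgebraNorm K A) (a P : A) (μ θ Q : ℝ) : Prop where
  idem : IsIdempotentElem P
  commute : Commute a P
  map_pow_mul_ker_le : ∀ z, P * z = 0 → ∀ m, ν (a ^ m * z) ≤ μ ^ m * Q * ν z
  le_map_pow_mul_range : ∀ p, P * p = p → ∀ m, (θ * μ) ^ m * ν p ≤ Q * ν (a ^ m * p)

variable {ν : AlgebraNorm K A}

lemma pow_mul_map_le_of_prod_roots_mul_eq_zero (a : Aˣ) {M α : ℝ} (hα : 0 < α)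
    (ha : ν ↑a⁻¹ ≤ M) {t : Multiset K} (ht : ∀ c ∈ t, α ≤ ‖c‖) {p : A}
    (hp : aeval (a : A) (t.map fun c => X - C c).prod * p = 0) (m : ℕ) :
    (α / 2) ^ m * ν p ≤ (2 + M * α) ^ t.card * ν ((a : A) ^ m * p) := by
  have hp' : aeval (a : A) (t.map fun c => X - C c).prod * ((a : A) ^ m * p) = 0 := by
    rw [← mul_assoc, ← aeval_X_pow (R := K), ← map_mul, mul_comm _ (X ^ m), map_mul, mul_assoc, hp,
      mul_zero]
  have hinv (c) (hc : c ∈ t.map (·⁻¹)) : ‖c‖ ≤ α⁻¹ := by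
    obtain ⟨d, hd, rfl⟩ := Multiset.mem_map.mp hc
    rw [norm_inv]
    exact inv_anti₀ hα (ht d hd)
  have hne (c) (hc : c ∈ t) : c ≠ 0 := norm_pos_iff.mp (hα.trans_le (ht c hc))
  have hbound := map_pow_mul_le_of_prod_roots_mul_eq_zero ν (inv_pos.mpr hα) ha _ hinv _
    (aeval_prod_X_sub_C_inv_mul_eq_zero a hne hp') m
  rw [← mul_assoc, ← Units.val_pow_eq_pow_val, ← Units.val_pow_eq_pow_val, ← Units.val_mul,
    inv_pow, inv_mul_cancel, Units.val_one, one_mul, Multiset.card_map, div_inv_eq_mul] at hbound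
  calc (α / 2) ^ m * ν p ≤ (α / 2) ^ m *
        ((2 * α⁻¹) ^ m * (2 + M * α) ^ t.card * ν ((a : A) ^ m * p)) := by gcongr; exact hbound
    _ = (α / 2 * (2 * α⁻¹)) ^ m * ((2 + M * α) ^ t.card * ν ((a : A) ^ m * p)) := by
      rw [mul_pow (α / 2)]
      ring
    _ = (2 + M * α) ^ t.card * ν ((a : A) ^ m * p) := by
      rw [div_mul_eq_mul_div, mul_div_assoc, mul_div_cancel_left₀ _ two_ne_zero,
        mul_inv_cancel₀ hα.ne', one_pow, one_mul]

theorem exists_isDominatedSplitting (a : Aˣ) {M β θ : ℝ} (hβ : 1 ≤ β) (hθ : 1 ≤ θ)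
    (ha : ν a ≤ M) (ha' : ν ↑a⁻¹ ≤ M) (hM : 4 * θ * β ≤ M) {s t : Multiset K}
    (hs : ∀ c ∈ s, ‖c‖ ≤ β) (ht : ∀ c ∈ t, 4 * θ * β ≤ ‖c‖)
    (hst : aeval (a : A) ((s + t).map fun c => X - C c).prod = 0) :
    ∃ P : A, IsDominatedSplitting ν (a : A) P (2 * β) θ ((2 + M ^ 2) ^ (s + t).card) ∧
      aeval (a : A) (s.map fun c => X - C c).prod * (1 - P) = 0 ∧
      aeval (a : A) (t.map fun c => X - C c).prod * P = 0 := by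
  have hβθ : β ≤ θ * β := le_mul_of_one_le_left (by linarith) hθ
  have hM1 : 1 ≤ M := by linarith
  have hdisj (c) (hc : c ∈ s) (d) (hd : d ∈ t) : c ≠ d := by
    rintro rfl
    linarith [hs c hc, ht c hd]
  have hpow {r : Multiset K} {b : ℝ} (hr : r ≤ s + t) (hb : 0 ≤ b) (hbM : b ≤ M * M) :
      (2 + b) ^ r.card ≤ (2 + M ^ 2) ^ (s + t).card := by
    calc (2 + b) ^ r.card ≤ (2 + M ^ 2) ^ r.card := by gcongr; linarith
      _ ≤ (2 + M ^ 2) ^ (s + t).card :=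
        pow_le_pow_right₀ (by linarith [sq_nonneg M]) (Multiset.card_le_card hr)
  obtain ⟨P, hP, hcomm, hPs, hPt⟩ := exists_idempotent_of_aeval_prod_eq_zero (a : A) hdisj hst
  refine ⟨P, ⟨hP, hcomm, fun z hz m => ?_, fun p hp m => ?_⟩, hPs, hPt⟩
  · have hz' : aeval (a : A) (s.map fun c => X - C c).prod * z = 0 := by
      have : z = (1 - P) * z := by rw [sub_mul, hz, one_mul, sub_zero]
      rw [this, ← mul_assoc, hPs, zero_mul]
    refine (map_pow_mul_le_of_prod_roots_mul_eq_zero ν (by linarith) ha s hs z hz' m).trans ?_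
    gcongr
    exact hpow (Multiset.le_add_right s t) (by positivity)
      ((div_le_self (by linarith) hβ).trans (le_mul_of_one_le_left (by linarith) hM1))
  · have hp' : aeval (a : A) (t.map fun c => X - C c).prod * p = 0 := by
      rw [← hp, ← mul_assoc, hPt, zero_mul]
    have := pow_mul_map_le_of_prod_roots_mul_eq_zero a (by linarith) ha' ht hp' m
    rw [show 4 * θ * β / 2 = θ * (2 * β) by ring] at this
    refine this.trans ?_
    gcongr
    exact hpow (Multiset.le_add_left t s) (by positivity) (by gcongr)

namespace IsDominatedSplitting

variable {a P : A} {μ θ Q : ℝ} (h : IsDominatedSplitting ν a P μ θ Q)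
include h

lemma pow_mul_map_mul_map_le (hμ : 0 < μ) (hQ : 0 ≤ Q) {z p : A} (hz : P * z = 0)
    (hp : P * p = p) (m : ℕ) :
    θ ^ m * (ν (a ^ m * z) * ν p) ≤ Q ^ 2 * (ν z * ν (a ^ m * p)) := by
  refine le_of_mul_le_mul_left ?_ (pow_pos hμ m)
  calc μ ^ m * (θ ^ m * (ν (a ^ m * z) * ν p)) = ν (a ^ m * z) * ((θ * μ) ^ m * ν p) := by
        rw [mul_pow]
        ring
    _ ≤ ν (a ^ m * z) * (Q * ν (a ^ m * p)) :=
      mul_le_mul_of_nonneg_left (h.le_map_pow_mul_range p hp m) (apply_nonneg ν _)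
    _ ≤ μ ^ m * Q * ν z * (Q * ν (a ^ m * p)) := by gcongr; exact h.map_pow_mul_ker_le z hz m
    _ = μ ^ m * (Q ^ 2 * (ν z * ν (a ^ m * p))) := by ring

-- For large `m` the vector `a ^ m * v` is dominated by its component in the range of `P`, so that
-- component cannot be much longer than `v`.
lemma map_proj_mul_le (hμ : 1 ≤ μ) (hQ : 1 ≤ Q) {M : ℝ} (ha : ν a ≤ M) {m : ℕ}
    (hm : 2 * Q ^ 2 ≤ θ ^ m) (v : A) : ν (P * v) ≤ (M ^ m + Q) * ν v := by
  have hM : 0 ≤ M := (apply_nonneg ν a).trans ha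
  have hT : 1 ≤ μ ^ m := one_le_pow₀ hμ
  set p := P * v
  set q := (1 - P) * v
  have hpq : p + q = v := mul_add_one_sub_mul P v
  have hq : ν q ≤ ν v + ν p := by
    rw [← add_sub_cancel_left p q, hpq]
    exact map_sub_le_add ν v p
  have hexpand : θ ^ m * μ ^ m * ν p ≤ Q * (M ^ m * ν v + μ ^ m * Q * (ν v + ν p)) := by
    rw [← mul_pow]
    refine (h.le_map_pow_mul_range p (mul_mul_of_idem h.idem v) m).trans ?_
    gcongr
    calc ν (a ^ m * p) = ν (a ^ m * v - a ^ m * q) := by rw [← hpq, mul_add, add_sub_cancel_right]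
      _ ≤ ν (a ^ m * v) + ν (a ^ m * q) := map_sub_le_add ν _ _
      _ ≤ M ^ m * ν v + μ ^ m * Q * (ν v + ν p) :=
        add_le_add (map_pow_mul_le ν ha v m)
          ((h.map_pow_mul_ker_le q (mul_one_sub_mul_of_idem h.idem v) m).trans (by gcongr))
  have hp : 2 * Q * ν p ≤ M ^ m * ν v + Q * (ν v + ν p) := by
    refine le_of_mul_le_mul_left ?_ (by positivity : 0 < μ ^ m * Q)
    calc μ ^ m * Q * (2 * Q * ν p) = 2 * Q ^ 2 * μ ^ m * ν p := by ring
      _ ≤ θ ^ m * μ ^ m * ν p := by gcongr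
      _ ≤ Q * (M ^ m * ν v + μ ^ m * Q * (ν v + ν p)) := hexpand
      _ ≤ Q * (μ ^ m * (M ^ m * ν v) + μ ^ m * Q * (ν v + ν p)) := by
        gcongr Q * (?_ + _)
        exact le_mul_of_one_le_left (by positivity) hT
      _ = μ ^ m * Q * (M ^ m * ν v + Q * (ν v + ν p)) := by ring
  have hpQ : ν p ≤ Q * ν p := le_mul_of_one_le_left (apply_nonneg ν p) hQ
  linarith

end IsDominatedSplitting

end DominatedSplitting

section MatrixRoots

open Polynomial Matrix

lemma norm_multiset_prod {K : Type*} [NormedField K] (s : Multiset K) :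
    ‖s.prod‖ = (s.map norm).prod := map_multiset_prod normHom s

lemma norm_multiset_prod_le_pow_card {K : Type*} [NormedField K] {s : Multiset K} {B : ℝ}
    (hs : ∀ c ∈ s, ‖c‖ ≤ B) : ‖s.prod‖ ≤ B ^ s.card := by
  rw [norm_multiset_prod, ← Multiset.prod_replicate, ← Multiset.map_const']
  exact Multiset.prod_map_le_prod_map₀ _ _ (fun c _ => norm_nonneg c) hs

variable {n K : Type*} [Fintype n] [DecidableEq n]

lemma exists_mul_eq_smul_of_mem_roots [Field K] {x : Matrix n n K} {c : K}
    (hc : c ∈ x.charpoly.roots) : ∃ V : Matrix n n K, V ≠ 0 ∧ x * V = c • V := by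
  have hdet : (scalar n c - x).det = 0 := by
    rw [← eval_charpoly]
    exact isRoot_of_mem_roots hc
  obtain ⟨v, hv, hv0⟩ := exists_mulVec_eq_zero_iff.mpr hdet
  obtain ⟨i, -⟩ := Function.ne_iff.mp hv
  have : Nonempty n := ⟨i⟩
  refine ⟨replicateCol n v, (replicateCol_eq_zero v).not.mpr hv, ?_⟩
  have hV : (scalar n c - x) * replicateCol n v = 0 := by
    rw [← replicateCol_mulVec, hv0, replicateCol_zero]
  rwa [sub_mul, sub_eq_zero, scalar_apply, ← smul_eq_diagonal_mul, eq_comm] at hV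

lemma aeval_prod_X_sub_C_ne_zero_of_mem_roots_charpoly [Field K] {x : Matrix n n K} {c : K}
    (hc : c ∈ x.charpoly.roots) {s : Multiset K} (hs : ∀ d ∈ s, c ≠ d) :
    Polynomial.aeval x (s.map fun d => Polynomial.X - Polynomial.C d).prod ≠ 0 := by
  obtain ⟨V, hV, hxV⟩ := exists_mul_eq_smul_of_mem_roots hc
  exact aeval_prod_X_sub_C_ne_zero hV hxV hs

variable [NormedField K] (ν : AlgebraNorm K (Matrix n n K))

lemma norm_le_of_mem_roots_charpoly {x : Matrix n n K} {c : K} (hc : c ∈ x.charpoly.roots) :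
    ‖c‖ ≤ ν x := by
  obtain ⟨V, hV, hxV⟩ := exists_mul_eq_smul_of_mem_roots hc
  refine le_of_mul_le_mul_right ?_ (map_pos_of_ne_zero ν hV)
  rw [← map_smul_eq_mul, ← hxV]
  exact map_mul_le_mul ν x V

variable [IsAlgClosed K]

lemma card_roots_charpoly (x : Matrix n n K) : x.charpoly.roots.card = Fintype.card n := by
  rw [splits_iff_card_roots.mp (IsAlgClosed.splits _), charpoly_natDegree_eq_dim]

lemma aeval_prod_roots_charpoly (x : Matrix n n K) :
    aeval x (x.charpoly.roots.map fun c => X - C c).prod = 0 := by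
  rw [← (IsAlgClosed.splits _).eq_prod_roots_of_monic x.charpoly_monic, aeval_self_charpoly]

lemma norm_det_le {x : Matrix n n K} {B : ℝ} (hx : ν x ≤ B) : ‖x.det‖ ≤ B ^ Fintype.card n := by
  rw [det_eq_prod_roots_charpoly_of_splits (IsAlgClosed.splits _), ← card_roots_charpoly x]
  exact norm_multiset_prod_le_pow_card fun c hc => (norm_le_of_mem_roots_charpoly ν hc).trans hx

lemma norm_trace_le (x : Matrix n n K) : ‖x.trace‖ ≤ Fintype.card n * ν x := by
  rw [trace_eq_sum_roots_charpoly_of_splits (IsAlgClosed.splits _), ← card_roots_charpoly x,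
    ← nsmul_eq_mul, ← Multiset.card_map norm]
  refine (norm_multiset_sum_le _).trans (Multiset.sum_le_card_nsmul _ _ fun r hr => ?_)
  obtain ⟨c, hc, rfl⟩ := Multiset.mem_map.mp hr
  exact norm_le_of_mem_roots_charpoly ν hc

-- A root is at least `η / B ^ (card n)`, because the other roots are at most `B`.
lemma map_le_map_mul_of_le_norm_det {x : Matrix n n K} {B η : ℝ} (hB1 : 1 ≤ B) (hB : ν x ≤ B)
    (hη : 0 < η) (hη1 : η ≤ 1) (hdet : η ≤ ‖x.det‖) (v : Matrix n n K) :
    ν v ≤ ((1 + 2 * B) * B ^ Fintype.card n / η) ^ Fintype.card n * ν (x * v) := by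
  have hBn : 1 ≤ B ^ Fintype.card n := one_le_pow₀ hB1
  have hroot {c : K} (hc : c ∈ x.charpoly.roots) : ‖c‖ ≤ B :=
    (norm_le_of_mem_roots_charpoly ν hc).trans hB
  have hlower {c : K} (hc : c ∈ x.charpoly.roots) : η / B ^ Fintype.card n ≤ ‖c‖ := by
    obtain ⟨t, ht⟩ := Multiset.exists_cons_of_mem hc
    rw [det_eq_prod_roots_charpoly_of_splits (IsAlgClosed.splits _), ht, Multiset.prod_cons,
      norm_mul] at hdet
    have htB : ‖t.prod‖ ≤ B ^ Fintype.card n := by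
      refine (norm_multiset_prod_le_pow_card fun d hd => hroot ?_).trans
        (pow_le_pow_right₀ hB1 ?_)
      · exact ht ▸ Multiset.mem_cons_of_mem hd
      · rw [← card_roots_charpoly x, ht, Multiset.card_cons]
        exact Nat.le_succ _
    rw [div_le_iff₀ (by positivity)]
    exact hdet.trans (by gcongr)
  have hbound := map_le_map_mul_of_prod_roots_mul_eq_zero ν (div_pos hη (by positivity))
    ((div_le_one (by positivity)).mpr (hη1.trans hBn)) hB x.charpoly.roots
    (fun c hc => ⟨hlower hc, hroot hc⟩) v (by rw [aeval_prod_roots_charpoly, zero_mul])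
  rwa [card_roots_charpoly, div_div_eq_mul_div] at hbound

end MatrixRoots

section SpectralGap

open Matrix

-- Otherwise each of the `s.card` intervals `(t ^ k, t ^ (k + 1))` contains an element of `s`, and
-- `b` is one more.
lemma exists_gap {s : Finset ℝ} {t b : ℝ} {N : ℕ} (ht : 1 < t) (hN : s.card ≤ N) (hb : b ∈ s)
    (hbt : t ^ N ≤ b) : ∃ k < N, ∀ c ∈ s, c ≤ t ^ k ∨ t ^ (k + 1) ≤ c := by
  by_contra! hcon
  choose! f hfs hlt hgt using hcon
  have hinj : Set.InjOn f (Finset.range N) := by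
    refine StrictMonoOn.injOn fun i hi j hj hij => ?_
    rw [Finset.mem_coe, Finset.mem_range] at hi hj
    exact (hgt i hi).trans ((pow_le_pow_right₀ ht.le hij).trans_lt (hlt j hj))
  have hmaps : Set.MapsTo f (Finset.range N) (s.erase b) := by
    intro k hk
    rw [Finset.mem_coe, Finset.mem_range] at hk
    refine Finset.mem_erase.mpr ⟨?_, hfs k hk⟩
    exact ((hgt k hk).trans_le ((pow_le_pow_right₀ ht.le hk).trans hbt)).ne
  have hcard := Finset.card_le_card_of_injOn f hmaps hinj
  rw [Finset.card_range, Finset.card_erase_of_mem hb] at hcard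
  have := Finset.card_pos.mpr ⟨b, hb⟩
  omega

variable {n K : Type*} [Fintype n] [DecidableEq n] [NormedField K] [IsAlgClosed K]

lemma exists_mem_roots_le_norm [Nonempty n] {a : Matrix n n K} {T : ℝ}
    (h : Fintype.card n * T ≤ ‖a.trace‖) : ∃ c ∈ a.charpoly.roots, T ≤ ‖c‖ := by
  by_contra! hcon
  have hne : a.charpoly.roots ≠ ∅ := by
    rw [Multiset.empty_eq_zero, ← Multiset.card_pos, card_roots_charpoly]
    exact Fintype.card_pos
  refine h.not_gt ?_
  rw [trace_eq_sum_roots_charpoly_of_splits (IsAlgClosed.splits _)]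
  calc ‖a.charpoly.roots.sum‖ ≤ (a.charpoly.roots.map norm).sum := norm_multiset_sum_le _
    _ < (a.charpoly.roots.map fun _ => T).sum := Multiset.sum_lt_sum_of_nonempty hne hcon
    _ = Fintype.card n * T := by
      rw [Multiset.map_const', Multiset.sum_replicate, card_roots_charpoly, nsmul_eq_mul]

lemma exists_mem_roots_norm_le_one [Nonempty n] {a : Matrix n n K} (h : ‖a.det‖ = 1) :
    ∃ c ∈ a.charpoly.roots, ‖c‖ ≤ 1 := by
  by_contra! hcon
  have hne : a.charpoly.roots ≠ 0 := by
    rw [← Multiset.card_pos, card_roots_charpoly]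
    exact Fintype.card_pos
  have hprod := Multiset.prod_map_lt_prod_map hne (fun _ => (1 : ℝ)) norm (fun _ _ => one_pos) hcon
  rw [Multiset.prod_map_one, ← norm_multiset_prod,
    ← det_eq_prod_roots_charpoly_of_splits (IsAlgClosed.splits _), h] at hprod
  exact hprod.false

theorem exists_isDominatedSplitting_of_le_norm_trace [Nonempty n]
    {ν : AlgebraNorm K (Matrix n n K)} (a : (Matrix n n K)ˣ) {M θ : ℝ} (hθ : 1 ≤ θ)
    (ha : ν a ≤ M) (ha' : ν ↑a⁻¹ ≤ M) (hdet : ‖(a : Matrix n n K).det‖ = 1)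
    (htr : Fintype.card n * (4 * θ) ^ Fintype.card n ≤ ‖(a : Matrix n n K).trace‖) :
    ∃ P μ, 1 ≤ μ ∧ P ≠ 0 ∧ P ≠ 1 ∧
      IsDominatedSplitting ν (a : Matrix n n K) P μ θ ((2 + M ^ 2) ^ Fintype.card n) := by
  classical
  set r := (a : Matrix n n K).charpoly.roots with hr
  have ht : 1 < 4 * θ := by linarith
  obtain ⟨b, hb, hbt⟩ := exists_mem_roots_le_norm htr
  obtain ⟨d, hd, hd1⟩ := exists_mem_roots_norm_le_one hdet
  obtain ⟨k, hk, hgap⟩ := exists_gap (s := (r.map norm).toFinset) (b := ‖b‖) ht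
    (by rw [← card_roots_charpoly (a : Matrix n n K), ← Multiset.card_map norm]
        exact Multiset.toFinset_card_le _)
    (Multiset.mem_toFinset.mpr (Multiset.mem_map_of_mem _ hb)) hbt
  have hβ : 1 ≤ (4 * θ) ^ k := one_le_pow₀ ht.le
  have hβb : 4 * θ * (4 * θ) ^ k ≤ ‖b‖ := by
    rw [← pow_succ']
    exact (pow_le_pow_right₀ ht.le hk).trans hbt
  set s := r.filter (‖·‖ ≤ (4 * θ) ^ k)
  set t := r.filter (¬ ‖·‖ ≤ (4 * θ) ^ k)
  have hst : s + t = r := Multiset.filter_add_not _ _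
  have hs (c) (hc : c ∈ s) : ‖c‖ ≤ (4 * θ) ^ k := (Multiset.mem_filter.mp hc).2
  have ht' (c) (hc : c ∈ t) : 4 * θ * (4 * θ) ^ k ≤ ‖c‖ := by
    obtain ⟨hcr, hc⟩ := Multiset.mem_filter.mp hc
    rw [← pow_succ']
    exact (hgap _ (Multiset.mem_toFinset.mpr (Multiset.mem_map_of_mem _ hcr))).resolve_left hc
  obtain ⟨P, hP, hPs, hPt⟩ := exists_isDominatedSplitting a hβ hθ ha ha'
    (hβb.trans ((norm_le_of_mem_roots_charpoly ν hb).trans ha)) hs ht'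
    (by rw [hst, hr, aeval_prod_roots_charpoly])
  rw [hst, hr, card_roots_charpoly] at hP
  have hlt : (4 * θ) ^ k < 4 * θ * (4 * θ) ^ k := lt_mul_of_one_lt_left (by linarith) ht
  refine ⟨P, _, by linarith, ?_, ?_, hP⟩
  · rintro rfl
    refine aeval_prod_X_sub_C_ne_zero_of_mem_roots_charpoly hb (s := s) ?_ (by simpa using hPs)
    rintro c hc rfl
    linarith [hs _ hc]
  · rintro rfl
    refine aeval_prod_X_sub_C_ne_zero_of_mem_roots_charpoly hd (s := t) ?_ (by simpa using hPt)
    rintro c hc rfl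
    linarith [ht' _ hc]

end SpectralGap

section PolynomialFunctions

lemma prod_mem_pow_card {R A ι : Type*} [CommSemiring R] [CommSemiring A] [Algebra R A]
    {S : Submodule R A} (s : Finset ι) {f : ι → A} (hf : ∀ i ∈ s, f i ∈ S) :
    ∏ i ∈ s, f i ∈ S ^ s.card := by
  classical
  induction s using Finset.induction_on with
  | empty => exact Submodule.one_le.mp le_rfl
  | insert a s ha ih =>
    rw [Finset.prod_insert ha, Finset.card_insert_of_notMem ha, pow_succ']
    exact Submodule.mul_mem_mul (hf a (Finset.mem_insert_self a s))
      (ih fun i hi => hf i (Finset.mem_insert_of_mem hi))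

variable {n K : Type*}

/-- The coordinate functions on square matrices, together with the constant function `1`, which
sits at the index `none` so that monomials of degree at most `d` become products of exactly `d`
coordinates. -/
def coord [One K] : Option (n × n) → Matrix n n K → K
  | none => 1
  | some p => fun M => M p.1 p.2

/-- The Veronese map of degree `d`: the family of all monomials of degree at most `d` in the
entries of a matrix, with repetitions. -/
def veronese [CommSemiring K] (d : ℕ) (M : Matrix n n K) : (Fin d → Option (n × n)) → K :=
  fun I => ∏ k, coord (I k) M

lemma veronese_transpose [CommSemiring K] {d : ℕ} (M : Matrix n n K) (I : Fin d → Option (n × n)) :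
    veronese d M.transpose I = veronese d M fun k => (I k).map Prod.swap := by
  refine Finset.prod_congr rfl fun k _ => ?_
  rcases hI : I k with _ | ⟨i, j⟩ <;> simp [coord, hI]

-- The Veronese map is the feature map of the polynomial kernel `(1 + tr (A B)) ^ d`.
lemma veronese_dotProduct_veronese_transpose [Fintype n] [CommSemiring K] (d : ℕ)
    (A B : Matrix n n K) :
    veronese d A ⬝ᵥ veronese d B.transpose = (1 + (A * B).trace) ^ d := by
  classical
  have hcoord : ∑ o, coord o A * coord o B.transpose = 1 + (A * B).trace := by
    simp [Fintype.sum_option, Fintype.sum_prod_type, coord, Matrix.trace, Matrix.mul_apply]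
  rw [← hcoord, ← Fin.prod_const, Finset.prod_univ_sum, Fintype.piFinset_univ]
  simp only [dotProduct, veronese, Finset.prod_mul_distrib]

variable (n K) in
/-- The functions on square matrices which are affine in the entries. The `d`-th power of this
submodule consists of the polynomial functions of degree at most `d`. -/
def affineFunctions [CommSemiring K] : Submodule K (Matrix n n K → K) :=
  Submodule.span K (Set.range coord)

section CommSemiring

variable [CommSemiring K] {d : ℕ} {F : Matrix n n K → K}

lemma coord_mem_affineFunctions (o : Option (n × n)) : coord o ∈ affineFunctions n K :=
  Submodule.subset_span ⟨o, rfl⟩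

lemma const_mem_affineFunctions (c : K) : (fun _ => c) ∈ affineFunctions n K := by
  convert (affineFunctions n K).smul_mem c (coord_mem_affineFunctions none) using 1
  ext M
  simp [coord]

lemma entry_mem_affineFunctions (i j : n) : (fun M => M i j) ∈ affineFunctions n K :=
  coord_mem_affineFunctions (some (i, j))

lemma mul_entry_mem_affineFunctions [Fintype n] (A B : Matrix n n K) (i j : n) :
    (fun M => (A * M * B) i j) ∈ affineFunctions n K := by
  have hsum : (fun M : Matrix n n K => (A * M * B) i j) =
      ∑ l, ∑ k, (A i k * B l j) • fun M : Matrix n n K => M k l := by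
    ext M
    simp only [Matrix.mul_apply, Finset.sum_mul, Finset.sum_apply, Pi.smul_apply, smul_eq_mul]
    exact Finset.sum_congr rfl fun l _ => Finset.sum_congr rfl fun k _ => mul_right_comm _ _ _
  rw [hsum]
  exact Submodule.sum_mem _ fun l _ => Submodule.sum_mem _ fun k _ =>
    Submodule.smul_mem _ _ (entry_mem_affineFunctions k l)

lemma trace_mul_mem_affineFunctions [Fintype n] (A B : Matrix n n K) :
    (fun M => (A * M * B).trace) ∈ affineFunctions n K := by
  have hsum : (fun M : Matrix n n K => (A * M * B).trace) = ∑ i, fun M => (A * M * B) i i := by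
    ext M
    simp [Matrix.trace]
  rw [hsum]
  exact Submodule.sum_mem _ fun i _ => mul_entry_mem_affineFunctions A B i i

lemma exists_eq_dotProduct_veronese [Fintype n] (hF : F ∈ affineFunctions n K ^ d) :
    ∃ c, ∀ M, F M = c ⬝ᵥ veronese d M := by
  have hspan : F ∈ Submodule.span K (Set.range fun I M => veronese d M I) := by
    rw [affineFunctions, Submodule.span_pow] at hF
    refine Submodule.span_mono ?_ hF
    intro f hf
    obtain ⟨g, rfl⟩ := Set.mem_pow.mp hf
    choose I hI using fun k => (g k).2
    exact ⟨I, by ext M; simp [veronese, List.prod_ofFn, ← hI]⟩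
  obtain ⟨c, rfl⟩ := (Submodule.mem_span_range_iff_exists_fun K).mp hspan
  exact ⟨c, fun M => by simp [dotProduct]⟩

lemma dotProduct_veronese_mem [Fintype n] (c : (Fin d → Option (n × n)) → K) :
    (fun M => c ⬝ᵥ veronese d M) ∈ affineFunctions n K ^ d := by
  have hsum : (fun M => c ⬝ᵥ veronese d M) = ∑ I, c I • ∏ k, coord (I k) := by
    ext M
    simp [dotProduct, veronese]
  rw [hsum]
  refine Submodule.sum_mem _ fun I _ => Submodule.smul_mem _ _ ?_
  simpa using prod_mem_pow_card Finset.univ fun k _ => coord_mem_affineFunctions (I k)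

lemma linearMap_veronese_mem [Finite n] (f : ((Fin d → Option (n × n)) → K) →ₗ[K] K) :
    (fun M => f (veronese d M)) ∈ affineFunctions n K ^ d := by
  classical
  cases nonempty_fintype n
  have hdot : ∀ M, f (veronese d M) = (fun I => f (Pi.single I 1)) ⬝ᵥ veronese d M := fun M => by
    conv_lhs => rw [pi_eq_sum_univ' (veronese d M), map_sum]
    exact Finset.sum_congr rfl fun I _ => by rw [map_smul, smul_eq_mul, mul_comm]
  simpa only [hdot] using dotProduct_veronese_mem fun I => f (Pi.single I 1)

lemma comp_mul_mul_mem [Fintype n] (hF : F ∈ affineFunctions n K ^ d) (A B : Matrix n n K) :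
    (fun M => F (A * M * B)) ∈ affineFunctions n K ^ d := by
  let φ : (Matrix n n K → K) →ₐ[K] (Matrix n n K → K) :=
    AlgHom.pi fun M => Pi.evalAlgHom K _ (A * M * B)
  have hφ : (affineFunctions n K).map φ.toLinearMap ≤ affineFunctions n K := by
    rw [affineFunctions, Submodule.map_span_le]
    rintro _ ⟨_ | ⟨i, j⟩, rfl⟩
    · exact const_mem_affineFunctions 1
    · exact mul_entry_mem_affineFunctions A B i j
  have := Submodule.mem_map_of_mem (f := φ.toLinearMap) hF
  rw [Submodule.map_pow] at this
  exact pow_le_pow_left' hφ d this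

end CommSemiring

lemma det_mul_mem_affineFunctions_pow [Fintype n] [DecidableEq n] [CommRing K]
    {L : n → n → Matrix n n K → K} (hL : ∀ i j, L i j ∈ affineFunctions n K)
    {G : Matrix n n K → K} (hG : G ∈ affineFunctions n K) :
    (fun M => (Matrix.of fun i j => L i j M).det * G M) ∈
      affineFunctions n K ^ (Fintype.card n + 1) := by
  have hdet : (fun M => (Matrix.of fun i j => L i j M).det) ∈
      affineFunctions n K ^ Fintype.card n := by
    have hsum : (fun M => (Matrix.of fun i j => L i j M).det) =
        ∑ σ : Equiv.Perm n, ((Equiv.Perm.sign σ : ℤ) : K) • ∏ i, L (σ i) i := by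
      ext M
      simp [Matrix.det_apply', Finset.sum_apply, Finset.prod_apply]
    rw [hsum]
    refine Submodule.sum_mem _ fun σ _ => Submodule.smul_mem _ _ ?_
    simpa using prod_mem_pow_card Finset.univ fun i _ => hL (σ i) i
  rw [pow_succ]
  exact Submodule.mul_mem_mul hdet hG

lemma exists_polynomial_eval_eq [Finite n] [CommRing K] {d : ℕ} {F : Matrix n n K → K}
    (hF : F ∈ affineFunctions n K ^ d) (A B : Matrix n n K) :
    ∃ p : Polynomial K, ∀ t : K, F (A + t • B) = p.eval t := by
  cases nonempty_fintype n
  obtain ⟨c, hc⟩ := exists_eq_dotProduct_veronese hF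
  have hcoord : ∀ o, ∃ q : Polynomial K, ∀ t : K, coord o (A + t • B) = q.eval t := by
    rintro (_ | ⟨i, j⟩)
    · exact ⟨1, fun t => by simp [coord]⟩
    · exact ⟨.C (A i j) + .C (B i j) * .X, fun t => by simp [coord, mul_comm t]⟩
  choose q hq using hcoord
  refine ⟨∑ I, .C (c I) * ∏ k, q (I k), fun t => ?_⟩
  simp [hc, hq, dotProduct, veronese, Polynomial.eval_finsetSum, Polynomial.eval_prod]

end PolynomialFunctions

section Transvections

variable {n K : Type*} [Fintype n] [DecidableEq n] [Field K]

variable (n K) in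
/-- The monoid generated by the elementary matrices; over a field this is the special linear
group. -/
def transvections : Submonoid (Matrix n n K) :=
  Submonoid.closure (Set.range Matrix.TransvectionStruct.toMatrix)

lemma transvection_mem_transvections {i j : n} (hij : i ≠ j) (c : K) :
    Matrix.transvection i j c ∈ transvections n K :=
  Submonoid.subset_closure ⟨⟨i, j, hij, c⟩, rfl⟩

-- The integral transvections are Zariski dense in each one-parameter group of transvections.
lemma eq_zero_of_mem_transvections [CharZero K] {d : ℕ} {Γ : Submonoid (Matrix n n K)}
    (hΓ : ∀ (i j : n) (k : ℤ), i ≠ j → Matrix.transvection i j (k : K) ∈ Γ)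
    {z : Matrix n n K} (hz : z ∈ transvections n K) {F : Matrix n n K → K}
    (hF : F ∈ affineFunctions n K ^ d) (hFΓ : ∀ γ ∈ Γ, F γ = 0) {γ : Matrix n n K} (hγ : γ ∈ Γ) :
    F (z * γ) = 0 := by
  induction hz using Submonoid.closure_induction generalizing F γ with
  | mem y hy =>
    obtain ⟨⟨i, j, hij, c⟩, rfl⟩ := hy
    obtain ⟨p, hp⟩ := exists_polynomial_eval_eq (comp_mul_mul_mem hF 1 γ) 1 (Matrix.single i j 1)
    have htransvection (t : K) : F (Matrix.transvection i j t * γ) = p.eval t := by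
      rw [← hp, one_mul, Matrix.smul_single, smul_eq_mul, mul_one, Matrix.transvection]
    have hp0 : p = 0 := by
      refine p.eq_zero_of_infinite_isRoot <|
        (Set.infinite_range_of_injective (Int.cast_injective (α := K))).mono ?_
      rintro _ ⟨k, rfl⟩
      exact (htransvection k).symm.trans (hFΓ _ (Γ.mul_mem (hΓ i j k hij) hγ))
    exact (htransvection c).trans (by rw [hp0, Polynomial.eval_zero])
  | one => simpa using hFΓ γ hγ
  | mul y z _ _ ihy ihz =>
    have hFy : (fun M => F (y * M)) ∈ affineFunctions n K ^ d := by
      simpa using comp_mul_mul_mem hF y 1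
    simpa [mul_assoc] using ihz hFy (fun γ => ihy hF hFΓ) hγ

lemma veronese_mem_span_of_mem_transvections [CharZero K] {d : ℕ} {Γ : Submonoid (Matrix n n K)}
    (hΓ : ∀ (i j : n) (k : ℤ), i ≠ j → Matrix.transvection i j (k : K) ∈ Γ)
    {z : Matrix n n K} (hz : z ∈ transvections n K) :
    veronese d z ∈ Submodule.span K (veronese d '' (Γ : Set (Matrix n n K))) := by
  by_contra hnot_mem
  obtain ⟨f, hf, hker⟩ := Submodule.exists_le_ker_of_notMem hnot_mem
  have := eq_zero_of_mem_transvections hΓ hz (linearMap_veronese_mem f)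
    (fun γ hγ => hker (Submodule.subset_span ⟨γ, hγ, rfl⟩)) Γ.one_mem
  exact hf (by simpa using this)

lemma one_add_sum_mem {R ι : Type*} [Ring R] (S : Submonoid R) (s : Finset ι) (N : ι → R)
    (hN : ∀ i j, N i * N j = 0) (hS : ∀ i ∈ s, 1 + N i ∈ S) : 1 + ∑ i ∈ s, N i ∈ S := by
  classical
  induction s using Finset.induction_on with
  | empty => simp
  | insert a s ha ih =>
    have hprod : (1 + N a) * (1 + ∑ i ∈ s, N i) = 1 + ∑ i ∈ insert a s, N i := by
      rw [Finset.sum_insert ha, add_mul, mul_add (N a), Finset.mul_sum,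
        Finset.sum_eq_zero fun i _ => hN a i]
      noncomm_ring
    rw [← hprod]
    exact S.mul_mem (hS a (Finset.mem_insert_self a s))
      (ih fun i hi => hS i (Finset.mem_insert_of_mem hi))

lemma one_add_vecMulVec_single_mem_transvections (k : n) {f : n → K} (hf : f k = 0) :
    1 + Matrix.vecMulVec (Pi.single k 1) f ∈ transvections n K := by
  have hsum : Matrix.vecMulVec (Pi.single k 1) f = ∑ j, Matrix.single k j (f j) := by
    ext x y
    simp [Matrix.vecMulVec_apply, Matrix.sum_apply, Matrix.single_apply, Pi.single_apply, ite_and,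
      eq_comm]
  rw [hsum]
  refine one_add_sum_mem _ _ _ (fun i j => ?_) fun j _ => ?_
  · obtain rfl | hi := eq_or_ne i k
    · simp [hf]
    · simp [hi]
  · obtain rfl | hj := eq_or_ne j k
    · simp [hf]
    · exact transvection_mem_transvections hj.symm _

lemma one_add_vecMulVec_single_sub_single_mem_transvections {f : n → K} {i : n} (hi : f i ≠ 0)
    (k : n) (c : K) :
    1 + Matrix.vecMulVec (c • (Pi.single k 1 - Pi.single i (f k / f i))) f ∈
      transvections n K := by
  obtain rfl | hk := eq_or_ne i k
  · simp [hi]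
  set b : n → K := Pi.single k 1 - Pi.single i (f k / f i) with hb
  set T := Matrix.transvection i k (-(f k / f i)) with hT
  have hTb : T.mulVec (Pi.single k 1) = b := by
    rw [hT, Matrix.transvection, Matrix.add_mulVec, Matrix.one_mulVec, Matrix.single_mulVec_eq, hb,
      Pi.single_eq_same, mul_one, neg_smul, ← Pi.single_smul, smul_eq_mul, mul_one, sub_eq_add_neg]
  have hfT : Matrix.vecMul f T k = 0 := by
    rw [← dotProduct_single_one (Matrix.vecMul f T), ← Matrix.dotProduct_mulVec, hTb]
    simp [hb, mul_div_cancel₀ _ hi]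
  have hmem := (transvections n K).mul_mem ((transvections n K).mul_mem
    (transvection_mem_transvections hk (-(f k / f i)))
    (one_add_vecMulVec_single_mem_transvections k (f := c • Matrix.vecMul f T) (by simp [hfT])))
    (transvection_mem_transvections hk (f k / f i))
  convert hmem using 1
  rw [mul_add, add_mul, mul_one, Matrix.transvection_mul_transvection_same _ _ hk,
    Matrix.mul_vecMulVec, Matrix.vecMulVec_mul, ← hT, hTb, Matrix.smul_vecMul,
    Matrix.vecMul_vecMul, hT, Matrix.transvection_mul_transvection_same _ _ hk]
  simp

lemma one_add_vecMulVec_mem_transvections {w f : n → K} (h : f ⬝ᵥ w = 0) :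
    1 + Matrix.vecMulVec w f ∈ transvections n K := by
  obtain rfl | hf := eq_or_ne f 0
  · simp
  obtain ⟨i, hi : f i ≠ 0⟩ := Function.ne_iff.mp hf
  -- The vectors `b k` span the hyperplane `f = 0`.
  set b : n → n → K := fun k => Pi.single k 1 - Pi.single i (f k / f i) with hb
  have hfb (l : n) : f ⬝ᵥ b l = 0 := by simp [hb, mul_div_cancel₀ _ hi]
  have hw : w = ∑ k, w k • b k := by
    have hsum : ∑ k, w k * (f k / f i) = 0 := by
      rw [← zero_div (f i), ← h, dotProduct, Finset.sum_div]
      exact Finset.sum_congr rfl fun k _ => by ring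
    have hsingle : ∑ k, w k • Pi.single i (f k / f i) = (0 : n → K) := by
      ext j
      obtain rfl | hj := eq_or_ne i j
      · simpa using hsum
      · simp [hj]
    simp only [hb, smul_sub, Finset.sum_sub_distrib, hsingle, sub_zero]
    exact pi_eq_sum_univ' w
  have hsum : Matrix.vecMulVec w f = ∑ k, Matrix.vecMulVec (w k • b k) f := by
    conv_lhs => rw [hw]
    ext x y
    simp [Matrix.vecMulVec_apply, Matrix.sum_apply, Finset.sum_mul, mul_assoc]
  rw [hsum]
  refine one_add_sum_mem _ _ _ (fun k l => ?_) fun k _ =>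
    one_add_vecMulVec_single_sub_single_mem_transvections hi k (w k)
  rw [Matrix.vecMulVec_mul_vecMulVec, dotProduct_smul, hfb]
  simp

end Transvections

section IntegralMatrices

variable (n : Type*) [Fintype n] [DecidableEq n]

/-- The complex matrices with entries in `ℤ`. -/
def integralMatrices : Subring (Matrix n n ℂ) :=
  (Int.castRingHom ℂ).mapMatrix.range

variable {n} {M : Matrix n n ℂ}

lemma mem_integralMatrices : M ∈ integralMatrices n ↔ ∀ i j, ∃ k : ℤ, (k : ℂ) = M i j := by
  refine ⟨?_, fun h => ?_⟩
  · rintro ⟨A, rfl⟩ i j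
    exact ⟨A i j, rfl⟩
  · choose A hA using h
    exact ⟨.of A, by ext i j; exact hA i j⟩

lemma exists_intCast_eq_det (hM : M ∈ integralMatrices n) : ∃ k : ℤ, (k : ℂ) = M.det := by
  obtain ⟨A, rfl⟩ := hM
  exact ⟨A.det, (Int.castRingHom ℂ).map_det A⟩

lemma exists_intCast_eq_trace (hM : M ∈ integralMatrices n) : ∃ k : ℤ, (k : ℂ) = M.trace := by
  obtain ⟨A, rfl⟩ := hM
  exact ⟨A.trace, AddMonoidHom.map_trace (Int.castRingHom ℂ) A⟩

lemma one_le_norm_det (hM : M ∈ integralMatrices n) (hdet : M.det ≠ 0) : 1 ≤ ‖M.det‖ := by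
  obtain ⟨k, hk⟩ := exists_intCast_eq_det hM
  rw [← hk] at hdet ⊢
  rw [Complex.norm_intCast]
  exact_mod_cast Int.one_le_abs (Int.cast_ne_zero.mp hdet)

end IntegralMatrices

section GramMatrices

open scoped ComplexOrder in
lemma det_dotProduct_ne_zero {m ι : Type*} [Fintype m] [Fintype ι] [DecidableEq ι]
    {v w : ι → m → ℂ} (hv : LinearIndependent ℂ v) (hreal : ∀ i, star (v i) = v i)
    (hw : ∀ i, v i ∈ Submodule.span ℂ (Set.range w)) :
    (Matrix.of fun i j => v i ⬝ᵥ w j).det ≠ 0 := by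
  intro hdet
  obtain ⟨c, hc, hcT⟩ := Matrix.exists_vecMul_eq_zero_iff.mpr hdet
  set x := ∑ i, c i • v i with hx
  have horth_w : Submodule.span ℂ (Set.range w) ≤ LinearMap.ker (dotProductBilin ℂ ℂ x) := by
    rw [Submodule.span_le, Set.range_subset_iff]
    intro j
    simpa [hx, sum_dotProduct, Matrix.vecMul, dotProduct] using congrFun hcT j
  have horth_v : ∀ i, x ⬝ᵥ v i = 0 := fun i => horth_w (hw i)
  have hx0 : x ⬝ᵥ star x = 0 := by
    conv_lhs => rw [hx, star_sum, ← hx]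
    simp [dotProduct_sum, hreal, horth_v]
  exact hc (funext (Fintype.linearIndependent_iff.mp hv c (dotProduct_self_star_eq_zero.mp hx0)))

lemma norm_inv_apply_le {K ι : Type*} [NormedField K] [Fintype ι] [DecidableEq ι]
    {T : Matrix ι ι K} {b : ℝ} (hdet : 1 ≤ ‖T.det‖) (hb : 1 ≤ b) (hT : ∀ i j, ‖T i j‖ ≤ b)
    (i j : ι) :
    ‖T⁻¹ i j‖ ≤ (Fintype.card ι).factorial * b ^ Fintype.card ι := by
  have hadj : ‖T.adjugate i j‖ ≤ (Fintype.card ι).factorial * b ^ Fintype.card ι := by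
    rw [Matrix.adjugate_apply, ← nsmul_eq_mul]
    refine Matrix.det_le (abv := NormedField.toAbsoluteValue K) fun k l => ?_
    change ‖_‖ ≤ b
    rw [Matrix.updateRow_apply, Pi.single_apply]
    split_ifs
    · simpa using hb
    · simpa using zero_le_one.trans hb
    · exact hT k l
  rw [Matrix.inv_def, Matrix.smul_apply, Ring.inverse_eq_inv', smul_eq_mul, norm_mul, norm_inv]
  exact (mul_le_of_le_one_left (norm_nonneg _) (inv_le_one_of_one_le₀ hdet)).trans hadj

variable {n ι : Type*}

lemma veronese_mem_span_transpose {d : ℕ} {h : ι → Matrix n n ℂ} {M : Matrix n n ℂ}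
    (hM : veronese d M.transpose ∈ Submodule.span ℂ (Set.range fun i => veronese d (h i))) :
    veronese d M ∈ Submodule.span ℂ (Set.range fun i => veronese d (h i).transpose) := by
  let L := LinearMap.funLeft ℂ ℂ fun (I : Fin d → Option (n × n)) k => (I k).map Prod.swap
  have hL : ∀ A, L (veronese d A) = veronese d A.transpose := fun A =>
    funext fun I => (veronese_transpose A I).symm
  have := Submodule.mem_map_of_mem (f := L) hM
  rw [Submodule.map_span, ← Set.range_comp, hL, Matrix.transpose_transpose] at this
  simpa [Function.comp_def, hL] using this

variable [Fintype n]

/-- The Gram matrix of a family of matrices for the polynomial kernel `(1 + tr (A B)) ^ d`. -/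
def kernelMatrix (d : ℕ) (h : ι → Matrix n n ℂ) : Matrix ι ι ℂ :=
  .of fun i j => (1 + (h i * h j).trace) ^ d

lemma kernelMatrix_mem_integralMatrices [DecidableEq n] [Fintype ι] [DecidableEq ι] {d : ℕ}
    {h : ι → Matrix n n ℂ} (hint : ∀ i, h i ∈ integralMatrices n) :
    kernelMatrix d h ∈ integralMatrices ι := by
  refine mem_integralMatrices.mpr fun i j => ?_
  obtain ⟨k, hk⟩ := exists_intCast_eq_trace (mul_mem (hint i) (hint j))
  exact ⟨(1 + k) ^ d, by simp [kernelMatrix, hk]⟩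

lemma star_veronese [DecidableEq n] {d : ℕ} {M : Matrix n n ℂ} (hM : M ∈ integralMatrices n) :
    star (veronese d M) = veronese d M := by
  ext I
  simp only [Pi.star_apply, veronese, star_prod]
  refine Finset.prod_congr rfl fun k _ => ?_
  rcases I k with _ | ⟨i, j⟩
  · simp [coord]
  · obtain ⟨m, hm⟩ := mem_integralMatrices.mp hM i j
    simp [coord, ← hm]

lemma det_kernelMatrix_ne_zero [DecidableEq n] [Fintype ι] [DecidableEq ι] {d : ℕ}
    {h : ι → Matrix n n ℂ} (hli : LinearIndependent ℂ fun i => veronese d (h i))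
    (hint : ∀ i, h i ∈ integralMatrices n)
    (htr : ∀ i, veronese d (h i).transpose ∈
      Submodule.span ℂ (Set.range fun i => veronese d (h i))) :
    (kernelMatrix d h).det ≠ 0 := by
  have := det_dotProduct_ne_zero hli (fun i => star_veronese (hint i))
    fun i => veronese_mem_span_transpose (htr i)
  simpa only [kernelMatrix, veronese_dotProduct_veronese_transpose] using this

lemma eq_dotProduct_of_veronese_mem_span [Fintype ι] [DecidableEq ι] {d : ℕ}
    {h : ι → Matrix n n ℂ} (hdet : (kernelMatrix d h).det ≠ 0) {X : Matrix n n ℂ}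
    (hX : veronese d X ∈ Submodule.span ℂ (Set.range fun i => veronese d (h i)))
    {F : Matrix n n ℂ → ℂ} (hF : F ∈ affineFunctions n ℂ ^ d) :
    F X = Matrix.vecMul (fun j => (1 + (X * h j).trace) ^ d) (kernelMatrix d h)⁻¹ ⬝ᵥ
      fun i => F (h i) := by
  obtain ⟨c, hc⟩ := (Submodule.mem_span_range_iff_exists_fun ℂ).mp hX
  obtain ⟨f, hf⟩ := exists_eq_dotProduct_veronese hF
  have hcT : Matrix.vecMul c (kernelMatrix d h) = fun j => (1 + (X * h j).trace) ^ d := by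
    ext j
    rw [← veronese_dotProduct_veronese_transpose, ← hc, sum_dotProduct]
    simp only [smul_dotProduct, veronese_dotProduct_veronese_transpose]
    rfl
  rw [← hcT, Matrix.vecMul_vecMul, Matrix.mul_nonsing_inv _ hdet.isUnit, Matrix.vecMul_one, hf,
    ← hc, dotProduct_sum]
  simp [dotProduct, hf, Finset.mul_sum, mul_left_comm]

omit [Fintype n] in
lemma exists_linearIndependent_veronese [Finite n] (d : ℕ) (B : Set (Matrix n n ℂ)) :
    ∃ s : Finset (Matrix n n ℂ), ↑s ⊆ B ∧
      LinearIndependent ℂ (fun M : s => veronese d (M : Matrix n n ℂ)) ∧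
      veronese d '' B ⊆
        Submodule.span ℂ (Set.range fun M : s => veronese d (M : Matrix n n ℂ)) := by
  obtain ⟨t, htB, -, hspan, hli⟩ := exists_linearIndepOn_extension
    (linearIndepOn_empty ℂ (veronese d)) (Set.empty_subset B)
  have ht : t.Finite := hli.linearIndependent.finite
  lift t to Finset (Matrix n n ℂ) using ht
  refine ⟨t, htB, hli, hspan.trans (Submodule.span_mono ?_)⟩
  rintro _ ⟨M, hM, rfl⟩
  exact ⟨⟨M, hM⟩, rfl⟩

end GramMatrices

section TransverseElement

/-- A finite family `h` of invertible matrices of controlled size which tests polynomial functions: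
up to the factor `b`, the values of a function of degree at most `card n + 1` on `h` bound its value
at any normalized rank-one unipotent matrix. Moreover the trace form is nondegenerate up to `b`. -/
structure IsInterpolatingFamily {n ι : Type*} [Fintype n] [DecidableEq n] [Fintype ι]
    (ν : AlgebraNorm ℂ (Matrix n n ℂ)) (h : ι → Matrix n n ℂ) (b : ℝ) : Prop where
  card_le : (Fintype.card ι : ℝ) ≤ b
  isUnit : ∀ i, IsUnit (h i)
  map_le : ∀ i, ν (h i) ≤ b
  exists_trace_le : ∀ y, ∃ z, ν z ≤ b ∧ ν y ≤ b * ‖(z * y).trace‖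
  interpolate : ∀ w f, f ⬝ᵥ w = 0 → ν (Matrix.vecMulVec w f) = 1 →
    ∃ c : ι → ℂ, (∀ i, ‖c i‖ ≤ b) ∧ ∀ F ∈ affineFunctions n ℂ ^ (Fintype.card n + 1),
      F (1 + Matrix.vecMulVec w f) = c ⬝ᵥ fun i => F (h i)

variable {n : Type*} [Fintype n] [DecidableEq n] {P M : Matrix n n ℂ}

/-- The block of `M` on the range of the idempotent `P`, completed by the identity on its kernel. -/
def compression (P M : Matrix n n ℂ) : Matrix n n ℂ :=
  1 - P + P * M * P

/-- A polynomial function of `M` which can only be large if `M` moves the range of the idempotent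
`P` to a position transverse to its kernel, but not into itself. -/
def transversality (P z M : Matrix n n ℂ) : ℂ :=
  (compression P M).det * (z * (1 - P) * M * P).trace

lemma transversality_mem_affineFunctions_pow (P z : Matrix n n ℂ) :
    transversality P z ∈ affineFunctions n ℂ ^ (Fintype.card n + 1) :=
  det_mul_mem_affineFunctions_pow
    (L := fun i j => (fun _ => (1 - P) i j) + fun M => (P * M * P) i j)
    (fun i j => Submodule.add_mem _ (const_mem_affineFunctions ((1 - P) i j))
      (mul_entry_mem_affineFunctions P P i j))
    (trace_mul_mem_affineFunctions (z * (1 - P)) P)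

lemma transversality_one_add (hP : IsIdempotentElem P) {y : Matrix n n ℂ} (hPy : P * y = 0)
    (hyP : y * P = y) (z : Matrix n n ℂ) : transversality P z (1 + y) = (z * y).trace := by
  have hcompression : compression P (1 + y) = 1 := by
    simp [compression, mul_add, hPy, hP.eq]
  have hmul : z * (1 - P) * (1 + y) * P = z * y := by
    rw [mul_assoc, add_mul, one_mul, hyP, mul_assoc, mul_add, hP.one_sub_mul_self, zero_add,
      sub_mul, hPy, one_mul, sub_zero]
  rw [transversality, hcompression, hmul, Matrix.det_one, one_mul]

lemma compression_mul_eq (M : Matrix n n ℂ) {p : Matrix n n ℂ} (hp : P * p = p) :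
    compression P M * p = P * (M * p) := by
  simp [compression, add_mul, sub_mul, mul_assoc, hp]

lemma exists_vecMulVec_mul_eq_self (ν : AlgebraNorm ℂ (Matrix n n ℂ)) (hP : IsIdempotentElem P)
    (hP0 : P ≠ 0) (hP1 : P ≠ 1) : ∃ w f : n → ℂ, f ⬝ᵥ w = 0 ∧ ν (Matrix.vecMulVec w f) = 1 ∧
      P * Matrix.vecMulVec w f = 0 ∧ Matrix.vecMulVec w f * P = Matrix.vecMulVec w f := by
  have hrow : ∃ j, P.row j ≠ 0 := by
    by_contra! hrow
    exact hP0 (Matrix.ext fun j k => congrFun (hrow j) k)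
  have hcol : ∃ i, (1 - P).col i ≠ 0 := by
    by_contra! hcol
    exact hP1 (sub_eq_zero.mp (Matrix.ext fun k i => congrFun (hcol i) k)).symm
  obtain ⟨j, hj⟩ := hrow
  obtain ⟨i, hi⟩ := hcol
  have hdot : P.row j ⬝ᵥ (1 - P).col i = 0 := congrFun (congrFun hP.mul_one_sub_self j) i
  have hmulVec : P.mulVec ((1 - P).col i) = 0 :=
    funext fun k => congrFun (congrFun hP.mul_one_sub_self k) i
  have hvecMul : Matrix.vecMul (P.row j) P = P.row j :=
    funext fun k => congrFun (congrFun hP.eq j) k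
  have hν : 0 < ν (Matrix.vecMulVec ((1 - P).col i) (P.row j)) :=
    map_pos_of_ne_zero ν (by simp [Matrix.vecMulVec_eq_zero, hi, hj])
  refine ⟨((ν (Matrix.vecMulVec ((1 - P).col i) (P.row j)))⁻¹ : ℂ) • (1 - P).col i, P.row j,
    ?_, ?_, ?_, ?_⟩
  · rw [dotProduct_smul, hdot, smul_zero]
  · rw [Matrix.smul_vecMulVec, map_smul_eq_mul, norm_inv, Complex.norm_real,
      Real.norm_of_nonneg hν.le, inv_mul_cancel₀ hν.ne']
  · rw [Matrix.mul_vecMulVec, Matrix.mulVec_smul, hmulVec, smul_zero, Matrix.zero_vecMulVec]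
  · rw [Matrix.vecMulVec_mul, hvecMul]

end TransverseElement

section TransverseElement

variable {n ι : Type*} [Fintype n] [DecidableEq n] [Fintype ι]
  {ν : AlgebraNorm ℂ (Matrix n n ℂ)} {P M : Matrix n n ℂ} {h : ι → Matrix n n ℂ} {Z : ℝ}

lemma IsInterpolatingFamily.mono {b : ℝ} (hh : IsInterpolatingFamily ν h b) (hb : b ≤ Z) :
    IsInterpolatingFamily ν h Z where
  card_le := hh.card_le.trans hb
  isUnit := hh.isUnit
  map_le i := (hh.map_le i).trans hb
  exists_trace_le y := by
    obtain ⟨z, hz, hzy⟩ := hh.exists_trace_le y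
    exact ⟨z, hz.trans hb, hzy.trans (by gcongr)⟩
  interpolate w f hwf hν := by
    obtain ⟨c, hc, hcF⟩ := hh.interpolate w f hwf hν
    exact ⟨c, fun i => (hc i).trans hb, hcF⟩

lemma exists_one_le_mul_norm {c x : ι → ℂ} (hcard : (Fintype.card ι : ℝ) ≤ Z)
    (hc : ∀ i, ‖c i‖ ≤ Z) (hcx : 1 ≤ Z * ‖c ⬝ᵥ x‖) : ∃ i, 1 ≤ Z ^ 3 * ‖x i‖ := by
  have hι : Nonempty ι := by
    by_contra! hι
    norm_num [dotProduct] at hcx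
  have hZ : 0 ≤ Z := (Nat.cast_nonneg _).trans hcard
  have hsum : ∑ _i : ι, (1 : ℝ) ≤ ∑ i, Z ^ 3 * ‖x i‖ := by
    calc ∑ _i : ι, (1 : ℝ) ≤ Z * 1 := by simpa using hcard
      _ ≤ Z * (Z * ‖c ⬝ᵥ x‖) := by gcongr
      _ ≤ Z * (Z * ∑ i, Z * ‖x i‖) := by
        gcongr
        refine (norm_sum_le _ _).trans (Finset.sum_le_sum fun i _ => ?_)
        rw [norm_mul]
        gcongr
        exact hc i
      _ = ∑ i, Z ^ 3 * ‖x i‖ := by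
        simp only [Finset.mul_sum]
        exact Finset.sum_congr rfl fun i _ => by ring
  obtain ⟨i, -, hi⟩ := Finset.exists_le_of_sum_le Finset.univ_nonempty hsum
  exact ⟨i, hi⟩

lemma IsInterpolatingFamily.exists_transversality (hh : IsInterpolatingFamily ν h Z)
    (hP : IsIdempotentElem P) (hP0 : P ≠ 0) (hP1 : P ≠ 1) :
    ∃ z i, ν z ≤ Z ∧ 1 ≤ Z ^ 3 * ‖transversality P z (h i)‖ := by
  obtain ⟨w, f, hwf, hν, hPy, hyP⟩ := exists_vecMulVec_mul_eq_self ν hP hP0 hP1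
  obtain ⟨z, hz, hzy⟩ := hh.exists_trace_le (Matrix.vecMulVec w f)
  obtain ⟨c, hc, hcF⟩ := hh.interpolate w f hwf hν
  rw [hν, ← transversality_one_add hP hPy hyP z,
    hcF _ (transversality_mem_affineFunctions_pow P z)] at hzy
  obtain ⟨i, hi⟩ := exists_one_le_mul_norm hh.card_le hc hzy
  exact ⟨z, i, hz, hi⟩

lemma map_le_pow_three (h1 : ν 1 ≤ Z ^ 2) (hP : ∀ v, ν (P * v) ≤ Z * ν v) (hZ : 0 ≤ Z) :
    ν P ≤ Z ^ 3 := by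
  calc ν P = ν (P * 1) := by rw [mul_one]
    _ ≤ Z * Z ^ 2 := (hP 1).trans (by gcongr)
    _ = Z ^ 3 := by ring

lemma map_mul_le_pow_four (h1 : ν 1 ≤ Z ^ 2) (hP : ∀ v, ν (P * v) ≤ Z * ν v) (hM : ν M ≤ Z) :
    ν (M * P) ≤ Z ^ 4 := by
  have hZ : 0 ≤ Z := (apply_nonneg ν M).trans hM
  calc ν (M * P) ≤ Z * Z ^ 3 :=
        (map_mul_le_of_map_le ν hM P).trans (by gcongr; exact map_le_pow_three h1 hP hZ)
    _ = Z ^ 4 := by ring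

lemma map_compression_le (hZ : 2 ≤ Z) (h1 : ν 1 ≤ Z ^ 2) (hP : ∀ v, ν (P * v) ≤ Z * ν v)
    (hP' : ∀ v, ν ((1 - P) * v) ≤ Z * ν v) (hM : ν M ≤ Z) : ν (compression P M) ≤ Z ^ 6 := by
  have hblock : ν (P * M * P) ≤ Z ^ 5 := by
    calc ν (P * M * P) ≤ Z * Z ^ 4 := by
          rw [mul_assoc]
          exact (hP _).trans (by gcongr; exact map_mul_le_pow_four h1 hP hM)
      _ = Z ^ 5 := by ring
  have hpow : Z ^ 3 ≤ Z ^ 5 := pow_le_pow_right₀ (by linarith) (by norm_num)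
  calc ν (compression P M) ≤ ν (1 - P) + ν (P * M * P) := map_add_le_add ν _ _
    _ ≤ Z ^ 5 + Z ^ 5 := add_le_add ((map_le_pow_three h1 hP' (by linarith)).trans hpow) hblock
    _ = 2 * Z ^ 5 := by ring
    _ ≤ Z * Z ^ 5 := by gcongr
    _ = Z ^ 6 := by ring

lemma map_le_pow_mul_map_compression_mul (hZ : 2 ≤ Z) (hM : ν (compression P M) ≤ Z ^ 6)
    (hdet : 1 ≤ Z ^ 10 * ‖(compression P M).det‖) (v : Matrix n n ℂ) :
    ν v ≤ Z ^ (Fintype.card n * (6 * Fintype.card n + 18)) * ν (compression P M * v) := by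
  have hZ1 : 1 ≤ Z := by linarith
  refine (map_le_map_mul_of_le_norm_det ν (one_le_pow₀ hZ1) hM (η := (Z ^ 10)⁻¹) (by positivity)
    (inv_le_one_of_one_le₀ (one_le_pow₀ hZ1)) ?_ v).trans ?_
  · rwa [inv_le_iff_one_le_mul₀' (by positivity)]
  rw [mul_comm (Fintype.card n), pow_mul, div_inv_eq_mul]
  gcongr
  have h6 : 1 ≤ Z ^ 6 := one_le_pow₀ hZ1
  calc (1 + 2 * Z ^ 6) * (Z ^ 6) ^ Fintype.card n * Z ^ 10
      ≤ (2 ^ 2 * Z ^ 6) * (Z ^ 6) ^ Fintype.card n * Z ^ 10 := by gcongr; linarith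
    _ ≤ (Z ^ 2 * Z ^ 6) * (Z ^ 6) ^ Fintype.card n * Z ^ 10 := by gcongr
    _ = Z ^ (6 * Fintype.card n + 18) := by rw [← pow_mul]; ring

lemma norm_transversality_le {z : Matrix n n ℂ} (hn : (Fintype.card n : ℝ) ≤ Z) (hz : ν z ≤ Z) :
    ‖transversality P z M‖ ≤ ‖(compression P M).det‖ * (Z ^ 2 * ν ((1 - P) * (M * P))) := by
  rw [transversality, norm_mul]
  gcongr
  calc ‖(z * (1 - P) * M * P).trace‖ = ‖(z * ((1 - P) * (M * P))).trace‖ := by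
        simp only [mul_assoc]
    _ ≤ Fintype.card n * ν (z * ((1 - P) * (M * P))) := norm_trace_le ν _
    _ ≤ Z * (Z * ν ((1 - P) * (M * P))) := by
      gcongr
      · exact (Nat.cast_nonneg _).trans hn
      · exact map_mul_le_of_map_le ν hz _
    _ = Z ^ 2 * ν ((1 - P) * (M * P)) := by ring

theorem IsInterpolatingFamily.exists_transverse (hh : IsInterpolatingFamily ν h Z)
    (hZ : 2 ≤ Z) (hn : (Fintype.card n : ℝ) ≤ Z) (hP : IsIdempotentElem P) (hP0 : P ≠ 0)
    (hP1 : P ≠ 1) (h1 : ν 1 ≤ Z ^ 2) (hPν : ∀ v, ν (P * v) ≤ Z * ν v)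
    (hPν' : ∀ v, ν ((1 - P) * v) ≤ Z * ν v) :
    ∃ i, (∀ p, P * p = p →
        ν p ≤ Z ^ (Fintype.card n * (6 * Fintype.card n + 18)) * ν (P * (h i * p))) ∧
      ν P ≤ Z ^ (6 * Fintype.card n + 8) * ν ((1 - P) * (h i * P)) := by
  have hZ0 : 0 ≤ Z := by linarith
  obtain ⟨z, i, hz, hi⟩ := hh.exists_transversality hP hP0 hP1
  set g := ν ((1 - P) * (h i * P))
  have hprod : 1 ≤ Z ^ 5 * (‖(compression P (h i)).det‖ * g) := by
    calc 1 ≤ Z ^ 3 * (‖(compression P (h i)).det‖ * (Z ^ 2 * g)) :=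
          hi.trans (by gcongr; exact norm_transversality_le hn hz)
      _ = Z ^ 5 * (‖(compression P (h i)).det‖ * g) := by ring
  have hg5 : g ≤ Z ^ 5 := by
    calc g ≤ Z * Z ^ 4 :=
          (hPν' _).trans (by gcongr; exact map_mul_le_pow_four h1 hPν (hh.map_le i))
      _ = Z ^ 5 := by ring
  have hcompression := map_compression_le hZ h1 hPν hPν' (hh.map_le i)
  have hdet : 1 ≤ Z ^ 10 * ‖(compression P (h i)).det‖ := by
    calc 1 ≤ Z ^ 5 * (‖(compression P (h i)).det‖ * Z ^ 5) := hprod.trans (by gcongr)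
      _ = Z ^ 10 * ‖(compression P (h i)).det‖ := by ring
  refine ⟨i, fun p hp => ?_, ?_⟩
  · rw [← compression_mul_eq _ hp]
    exact map_le_pow_mul_map_compression_mul hZ hcompression hdet p
  · calc ν P ≤ Z ^ 3 * 1 := by simpa using map_le_pow_three h1 hPν hZ0
      _ ≤ Z ^ 3 * (Z ^ 5 * ((Z ^ 6) ^ Fintype.card n * g)) := by
        gcongr
        exact hprod.trans (by gcongr; exact norm_det_le ν hcompression)
      _ = Z ^ (6 * Fintype.card n + 8) * g := by rw [← pow_mul]; ring

end TransverseElement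

section PingPongFromTrace

variable {K A : Type*} [NormedField K] [Ring A] [Algebra K A] {ν : AlgebraNorm K A}
  {a P : A} {μ θ Q : ℝ}

lemma two_add_sq_pow_le (hθ : 4 ≤ θ) (κ N : ℕ) : (2 + (θ ^ κ) ^ 2) ^ N ≤ θ ^ ((2 * κ + 1) * N) := by
  have hM : 1 ≤ (θ ^ κ) ^ 2 := one_le_pow₀ (one_le_pow₀ (by linarith))
  rw [pow_mul]
  gcongr
  calc 2 + (θ ^ κ) ^ 2 ≤ (θ ^ κ) ^ 2 * 4 := by linarith
    _ ≤ (θ ^ κ) ^ 2 * θ := by gcongr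
    _ = θ ^ (2 * κ + 1) := by ring

lemma IsDominatedSplitting.map_proj_mul_le_pow (ha : IsDominatedSplitting ν a P μ θ Q)
    (hθ : 4 ≤ θ) (hμ : 1 ≤ μ) (hQ : 1 ≤ Q) {κ q : ℕ} (hQq : Q ≤ θ ^ q) (haν : ν a ≤ θ ^ κ) (v : A) :
    ν (P * v) ≤ θ ^ (κ * (2 * q + 1) + q + 1) * ν v := by
  have hθ1 : 1 ≤ θ := by linarith
  have hQ2 : 2 * Q ^ 2 ≤ θ ^ (2 * q + 1) := by
    calc 2 * Q ^ 2 ≤ θ * (θ ^ q) ^ 2 := by gcongr; linarith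
      _ = θ ^ (2 * q + 1) := by ring
  refine (ha.map_proj_mul_le hμ hQ haν hQ2 v).trans ?_
  gcongr
  calc (θ ^ κ) ^ (2 * q + 1) + Q
      ≤ θ ^ (κ * (2 * q + 1) + q) + θ ^ (κ * (2 * q + 1) + q) := by
        rw [← pow_mul]
        exact add_le_add (pow_le_pow_right₀ hθ1 (by omega))
          (hQq.trans (pow_le_pow_right₀ hθ1 (by omega)))
    _ = 2 * θ ^ (κ * (2 * q + 1) + q) := by ring
    _ ≤ θ * θ ^ (κ * (2 * q + 1) + q) := by gcongr; linarith
    _ = θ ^ (κ * (2 * q + 1) + q + 1) := by ring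

lemma map_one_sub_mul_le {c : ℝ} (hP : ∀ v, ν (P * v) ≤ c * ν v) (v : A) :
    ν ((1 - P) * v) ≤ (1 + c) * ν v := by
  rw [sub_mul, one_mul]
  linarith [map_sub_le_add ν v (P * v), hP v]

lemma IsDominatedSplitting.dominated (ha : IsDominatedSplitting ν a P μ θ Q) (hμ : 0 < μ)
    (hQ : 0 < Q) {E : ℝ} {m : ℕ} (hE : 40 * E ^ 6 * Q ^ 2 ≤ θ ^ m) {z p : A} (hz : P * z = 0)
    (hp : P * p = p) : 40 * E ^ 6 * (ν (a ^ m * z) * ν p) ≤ ν z * ν (a ^ m * p) := by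
  refine le_of_mul_le_mul_left ?_ (pow_pos hQ 2)
  calc Q ^ 2 * (40 * E ^ 6 * (ν (a ^ m * z) * ν p))
      = 40 * E ^ 6 * Q ^ 2 * (ν (a ^ m * z) * ν p) := by ring
    _ ≤ θ ^ m * (ν (a ^ m * z) * ν p) := by gcongr
    _ ≤ Q ^ 2 * (ν z * ν (a ^ m * p)) := ha.pow_mul_map_mul_map_le hμ hQ.le hz hp m

end PingPongFromTrace

section Exponents

lemma exists_mul_pow_eq {N : ℕ} (hN : N ≠ 0) {R : ℝ} (hR : (N : ℝ) ^ 2 ≤ R)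
    (hR' : (16 : ℝ) ^ (2 * N) ≤ R) : ∃ θ : ℝ, 4 ≤ θ ∧ N * (4 * θ) ^ N = R ∧ R ≤ θ ^ (4 * N) := by
  have hR0 : 0 < R := lt_of_lt_of_le (by positivity) hR
  set t : ℝ := (R / N) ^ ((N : ℝ)⁻¹)
  have ht : t ^ N = R / N := Real.rpow_inv_natCast_pow (by positivity) hN
  have hsq : R ≤ (t ^ N) ^ 2 := by
    rw [ht, div_pow, le_div_iff₀ (by positivity)]
    nlinarith
  have h16 : (16 : ℝ) ≤ t := by
    refine le_of_pow_le_pow_left₀ (n := N * 2) (by omega) (by positivity) ?_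
    rw [pow_mul t, mul_comm N]
    exact hR'.trans hsq
  refine ⟨t / 4, by linarith, by rw [mul_div_cancel₀ t (by norm_num), ht]; field_simp, ?_⟩
  have ht2 : t ≤ (t / 4) ^ 2 := by nlinarith
  calc R ≤ (((t / 4) ^ 2) ^ N) ^ 2 := hsq.trans (by gcongr)
    _ = (t / 4) ^ (4 * N) := by rw [← pow_mul, ← pow_mul]; congr 1; ring

lemma forty_mul_pow_mul_pow_le {θ : ℝ} (hθ : 4 ≤ θ) (k s : ℕ) :
    40 * ((θ ^ k) ^ s) ^ 6 * (θ ^ k) ^ 2 ≤ θ ^ (3 + k * (6 * s + 2)) := by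
  calc 40 * ((θ ^ k) ^ s) ^ 6 * (θ ^ k) ^ 2
      ≤ 4 ^ 3 * ((θ ^ k) ^ s) ^ 6 * (θ ^ k) ^ 2 := by gcongr; norm_num
    _ ≤ θ ^ 3 * ((θ ^ k) ^ s) ^ 6 * (θ ^ k) ^ 2 := by gcongr
    _ = θ ^ (3 + k * (6 * s + 2)) := by ring

end Exponents

section PingPongFromTrace

lemma IsDominatedSplitting.exists_isPingPongPair {n ι : Type*} [Fintype n] [DecidableEq n]
    [Fintype ι] {ν : AlgebraNorm ℂ (Matrix n n ℂ)} {a P : Matrix n n ℂ} {μ θ Q Z : ℝ}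
    {h : ι → Matrix n n ℂ} {m s : ℕ} (ha : IsDominatedSplitting ν a P μ θ Q) (haU : IsUnit a)
    (hP0 : P ≠ 0) (hP1 : P ≠ 1) (hμ : 0 < μ) (hQ : 0 < Q) (hQZ : Q ≤ Z)
    (hh : IsInterpolatingFamily ν h Z) (hZ : 2 ≤ Z) (hn : (Fintype.card n : ℝ) ≤ Z)
    (h1 : ν 1 ≤ Z ^ 2) (hP : ∀ v, ν (P * v) ≤ Z * ν v) (hP' : ∀ v, ν ((1 - P) * v) ≤ Z * ν v)
    (hs : Fintype.card n * (6 * Fintype.card n + 18) + (6 * Fintype.card n + 8) = s)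
    (hm : 40 * (Z ^ s) ^ 6 * Z ^ 2 ≤ θ ^ m) :
    ∃ i, IsPingPongPair ν P (a ^ m) (h i) (Z ^ s) := by
  have hle_E {i : ℕ} (hi : i ≤ s) : Z ^ i ≤ Z ^ s := pow_le_pow_right₀ (by linarith) hi
  have hZE : Z ≤ Z ^ s := by simpa using hle_E (i := 1) (by omega)
  obtain ⟨i, hker, hrange⟩ := hh.exists_transverse hZ hn ha.idem hP0 hP1 h1 hP hP'
  have hE : 40 * (Z ^ s) ^ 6 * Q ^ 2 ≤ θ ^ m := by
    refine le_trans ?_ hm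
    gcongr
  exact ⟨i,
    { idem := ha.idem
      ne_zero := hP0
      commute := ha.commute.pow_left m
      isUnit_left := haU.pow m
      isUnit_right := hh.isUnit i
      one_le := one_le_pow₀ (by linarith)
      map_mul_le := fun v => (hP v).trans (by gcongr)
      map_compl_mul_le := fun v => (hP' v).trans (by gcongr)
      map_right_le := (hh.map_le i).trans hZE
      transverse_ker := fun p hp =>
        (hker p hp).trans (mul_le_mul_of_nonneg_right (hle_E (by omega)) (apply_nonneg ν _))
      transverse_range :=
        hrange.trans (mul_le_mul_of_nonneg_right (hle_E (by omega)) (apply_nonneg ν _))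
      dominated := fun z p hz hp => ha.dominated hμ hQ hE hz hp }⟩

lemma exists_isPingPongPair (n : Type*) [Fintype n] [DecidableEq n] [Nonempty n] (κ : ℕ) :
    ∃ m, ∀ {ι : Type*} [Fintype ι] {ν : AlgebraNorm ℂ (Matrix n n ℂ)} {θ : ℝ}
      (a : (Matrix n n ℂ)ˣ) {h : ι → Matrix n n ℂ}, 4 ≤ θ → (Fintype.card n : ℝ) ≤ θ ^ κ →
      ν a ≤ θ ^ κ → ν ↑a⁻¹ ≤ θ ^ κ → ‖(a : Matrix n n ℂ).det‖ = 1 →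
      Fintype.card n * (4 * θ) ^ Fintype.card n ≤ ‖(a : Matrix n n ℂ).trace‖ →
      IsInterpolatingFamily ν h (θ ^ κ) →
      ∃ i P E, IsPingPongPair ν P ((a : Matrix n n ℂ) ^ m) (h i) E := by
  set q := (2 * κ + 1) * Fintype.card n
  set e := κ * (2 * q + 1) + q + 1
  set s := Fintype.card n * (6 * Fintype.card n + 18) + (6 * Fintype.card n + 8) with hs
  refine ⟨3 + (e + 1) * (6 * s + 2), fun {ι} _ {ν θ} a {h} hθ hn ha ha' hdet htr hh => ?_⟩
  have hθ1 : 1 ≤ θ := by linarith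
  obtain ⟨P, μ, hμ, hP0, hP1, hsplit⟩ :=
    exists_isDominatedSplitting_of_le_norm_trace a hθ1 ha ha' hdet htr
  have hQ : 1 ≤ (2 + (θ ^ κ) ^ 2) ^ Fintype.card n :=
    one_le_pow₀ (by linarith [sq_nonneg (θ ^ κ)])
  have hQq : (2 + (θ ^ κ) ^ 2) ^ Fintype.card n ≤ θ ^ q := two_add_sq_pow_le hθ κ _
  have hPe := hsplit.map_proj_mul_le_pow hθ hμ hQ hQq ha
  have hle {i : ℕ} (hi : i ≤ e + 1) : θ ^ i ≤ θ ^ (e + 1) := pow_le_pow_right₀ hθ1 hi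
  have hκe : κ ≤ κ * (2 * q + 1) := Nat.le_mul_of_pos_right κ (by omega)
  have hκ : θ ^ κ ≤ θ ^ (e + 1) := hle (by omega)
  have h2 : 2 ≤ θ ^ (e + 1) := by linarith [hle (i := 1) (by omega)]
  have h1 : ν 1 ≤ (θ ^ (e + 1)) ^ 2 := by
    rw [← a.inv_mul, pow_two]
    exact (map_mul_le_mul ν _ _).trans
      (mul_le_mul (ha'.trans hκ) (ha.trans hκ) (apply_nonneg ν _) (by linarith))
  have hP' (v : Matrix n n ℂ) : ν ((1 - P) * v) ≤ θ ^ (e + 1) * ν v := by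
    refine (map_one_sub_mul_le hPe v).trans (mul_le_mul_of_nonneg_right ?_ (apply_nonneg ν v))
    calc 1 + θ ^ e ≤ θ ^ e * 4 := by linarith [one_le_pow₀ (n := e) hθ1]
      _ ≤ θ ^ e * θ := by gcongr
      _ = θ ^ (e + 1) := (pow_succ θ e).symm
  obtain ⟨i, hi⟩ := hsplit.exists_isPingPongPair a.isUnit hP0 hP1 (by linarith) (by linarith)
    (hQq.trans (hle (by omega))) (hh.mono hκ) h2 (hn.trans hκ) h1
    (fun v => (hPe v).trans (mul_le_mul_of_nonneg_right (hle (by omega)) (apply_nonneg ν v)))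
    hP' hs.symm (forty_mul_pow_mul_pow_le hθ (e + 1) s)
  exact ⟨i, P, _, hi⟩

theorem exists_pow_mul_ne_mul (n : Type*) [Fintype n] [DecidableEq n] [Nonempty n] (e : ℕ) :
    ∃ m, ∀ {ι : Type*} [Fintype ι] {ν : AlgebraNorm ℂ (Matrix n n ℂ)}
      (a : (Matrix n n ℂ)ˣ) {h : ι → Matrix n n ℂ} {R : ℝ}, (Fintype.card n : ℝ) ^ 2 ≤ R →
      (16 : ℝ) ^ (2 * Fintype.card n) ≤ R → ν a ≤ R ^ e → ν ↑a⁻¹ ≤ R ^ e →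
      ‖(a : Matrix n n ℂ).det‖ = 1 → R ≤ ‖(a : Matrix n n ℂ).trace‖ →
      IsInterpolatingFamily ν h (R ^ e) →
      ∃ i, ∀ w ∈ Submonoid.closure {(a : Matrix n n ℂ) ^ m, h i * (a : Matrix n n ℂ) ^ m},
        ∀ w' ∈ Submonoid.closure {(a : Matrix n n ℂ) ^ m, h i * (a : Matrix n n ℂ) ^ m},
          (a : Matrix n n ℂ) ^ m * w ≠ h i * (a : Matrix n n ℂ) ^ m * w' := by
  obtain ⟨m, hm⟩ := exists_isPingPongPair n (4 * Fintype.card n * (e + 1))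
  refine ⟨m, fun {ι} _ {ν} a {h R} hnR h16 ha ha' hdet htr hh => ?_⟩
  obtain ⟨θ, hθ, hθR, hRθ⟩ := exists_mul_pow_eq Fintype.card_ne_zero hnR h16
  have hR1 : 1 ≤ R := (one_le_pow₀ (by norm_num)).trans h16
  have hReθ : R ^ (e + 1) ≤ θ ^ (4 * Fintype.card n * (e + 1)) := by
    rw [pow_mul]
    gcongr
  have hRe : R ^ e ≤ θ ^ (4 * Fintype.card n * (e + 1)) :=
    (pow_le_pow_right₀ hR1 e.le_succ).trans hReθ
  have hnθ : (Fintype.card n : ℝ) ≤ θ ^ (4 * Fintype.card n * (e + 1)) := by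
    calc (Fintype.card n : ℝ) ≤ (Fintype.card n : ℝ) ^ 2 := by
          exact_mod_cast Nat.le_self_pow two_ne_zero _
      _ ≤ R ^ (e + 1) := hnR.trans (le_self_pow₀ hR1 e.succ_ne_zero)
      _ ≤ _ := hReθ
  obtain ⟨i, P, E, hpair⟩ := hm a hθ hnθ (ha.trans hRe) (ha'.trans hRe) hdet (hθR.le.trans htr)
    (hh.mono hRe)
  exact ⟨i, fun w hw w' hw' => hpair.mul_ne_mul hw hw'⟩

end PingPongFromTrace

section WordBalls

open scoped Pointwise

lemma finite_pow {M : Type*} [Monoid M] {s : Set M} (hs : s.Finite) (k : ℕ) : (s ^ k).Finite := by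
  classical
  lift s to Finset M using hs
  exact_mod_cast (s ^ k).finite_toSet

/-- The ball of radius `k` around `1` for the word metric of `S`, as a pointwise power. -/
def ball (S : Set G) (k : ℕ) : Set G :=
  (insert 1 (S ∪ S⁻¹)) ^ k

variable {S : Set G} {k l : ℕ} {g g' : G}

lemma one_mem_ball (S : Set G) (k : ℕ) : (1 : G) ∈ ball S k :=
  Set.one_mem_pow (Set.mem_insert 1 _)

lemma monotone_ball (S : Set G) : Monotone (ball S) := fun _ _ =>
  Set.pow_subset_pow_right (Set.mem_insert 1 _)

lemma ball_add (S : Set G) (k l : ℕ) : ball S (k + l) = ball S k * ball S l :=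
  pow_add _ k l

lemma mul_mem_ball (hg : g ∈ ball S k) (hg' : g' ∈ ball S l) : g * g' ∈ ball S (k + l) :=
  ball_add S k l ▸ Set.mul_mem_mul hg hg'

lemma pow_mem_ball (hg : g ∈ ball S k) (m : ℕ) : g ^ m ∈ ball S (m * k) := by
  rw [mul_comm, ball, pow_mul]
  exact Set.pow_mem_pow hg

lemma inv_mem_ball (hg : g ∈ ball S k) : g⁻¹ ∈ ball S k := by
  rwa [← Set.mem_inv, ball, ← inv_pow, Set.inv_insert, inv_one, Set.union_inv, inv_inv,
    Set.union_comm]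

lemma finite_ball (hS : S.Finite) (k : ℕ) : (ball S k).Finite :=
  finite_pow ((hS.union hS.inv).insert 1) k

lemma exists_mem_ball (hS : Subgroup.closure S = ⊤) (g : G) : ∃ k, g ∈ ball S k := by
  have hg : g ∈ Subgroup.closure S := hS ▸ Subgroup.mem_top g
  induction hg using Subgroup.closure_induction with
  | mem x hx => exact ⟨1, by simp [ball, hx]⟩
  | one => exact ⟨0, one_mem_ball S 0⟩
  | mul x y _ _ hx hy => exact ⟨_, mul_mem_ball hx.choose_spec hy.choose_spec⟩
  | inv x _ hx => exact ⟨_, inv_mem_ball hx.choose_spec⟩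

lemma mem_ball_iff : g ∈ ball S k ↔
    ∃ w : List G, w.length ≤ k ∧ (∀ x ∈ w, x ∈ S ∨ x⁻¹ ∈ S) ∧ w.prod = g := by
  constructor
  · induction k generalizing g with
    | zero => exact fun hg => ⟨[], by simpa [ball, eq_comm] using hg⟩
    | succ k ih =>
      rw [ball, pow_succ']
      rintro ⟨x, rfl | hx, g', hg', rfl⟩
      all_goals obtain ⟨w, hlen, hw, rfl⟩ := ih hg'
      · exact ⟨w, hlen.trans k.le_succ, hw, by simp⟩
      · exact ⟨x :: w, by simpa using hlen, List.forall_mem_cons.mpr ⟨hx, hw⟩, by simp⟩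
  · rintro ⟨w, hlen, hw, rfl⟩
    refine monotone_ball S hlen ?_
    clear hlen
    induction w with
    | nil => exact one_mem_ball S 0
    | cons x w ih =>
      obtain ⟨hx, hw⟩ := List.forall_mem_cons.mp hw
      rw [List.prod_cons, List.length_cons, ball, pow_succ']
      exact Set.mul_mem_mul (Set.mem_insert_of_mem 1 hx) (ih hw)

lemma ncard_ball_add_le (S : Set G) (k l : ℕ) :
    (ball S (k + l)).ncard ≤ (ball S k).ncard * (ball S l).ncard := by
  simpa only [ball_add, Nat.card_coe_set_eq] using
    Set.natCard_mul_le (s := ball S k) (t := ball S l)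

-- Words in `x` and `y` are distinct, since the first letter can be read off and cancelled.
lemma two_pow_le_ncard_pow_pair {x y : G}
    (hxy : ∀ w ∈ Submonoid.closure {x, y}, ∀ w' ∈ Submonoid.closure {x, y}, x * w ≠ y * w')
    (k : ℕ) : 2 ^ k ≤ (({x, y} : Set G) ^ k).ncard := by
  have hfinite : ∀ k, (({x, y} : Set G) ^ k).Finite := finite_pow (Set.toFinite {x, y})
  have hclosure : ∀ k, ({x, y} : Set G) ^ k ⊆ Submonoid.closure {x, y} := fun k =>
    Submonoid.pow_subset Submonoid.subset_closure
  induction k with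
  | zero => rw [pow_zero, pow_zero, ← Set.singleton_one, Set.ncard_singleton]
  | succ k ih =>
    have hsplit : ({x, y} : Set G) ^ (k + 1) =
        (x * ·) '' ({x, y} : Set G) ^ k ∪ (y * ·) '' ({x, y} : Set G) ^ k := by
      rw [pow_succ', Set.insert_eq, Set.union_mul, Set.singleton_mul, Set.singleton_mul]
    have hdisjoint : Disjoint ((x * ·) '' ({x, y} : Set G) ^ k)
        ((y * ·) '' ({x, y} : Set G) ^ k) := by
      rw [Set.disjoint_left]
      rintro _ ⟨w, hw, rfl⟩ ⟨w', hw', heq⟩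
      exact hxy w (hclosure k hw) w' (hclosure k hw') heq.symm
    rw [hsplit, Set.ncard_union_eq hdisjoint ((hfinite k).image _) ((hfinite k).image _),
      Set.ncard_image_of_injective _ (mul_right_injective x),
      Set.ncard_image_of_injective _ (mul_right_injective y)]
    omega

lemma two_pow_le_ncard_ball (hS : S.Finite) {x y : G} (hx : x ∈ ball S l) (hy : y ∈ ball S l)
    (hxy : ∀ w ∈ Submonoid.closure {x, y}, ∀ w' ∈ Submonoid.closure {x, y}, x * w ≠ y * w')
    (k : ℕ) : 2 ^ k ≤ (ball S (l * k)).ncard := by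
  refine (two_pow_le_ncard_pow_pair hxy k).trans (Set.ncard_le_ncard ?_ (finite_ball hS _))
  rw [ball, pow_mul]
  exact Set.pow_subset_pow_left (Set.pair_subset hx hy)

lemma lt_ncard_image_ball {H : Type*} [Group H] (f : G →* H) (hf : (Set.range f).Infinite)
    (hS : S.Finite) (hgen : Subgroup.closure S = ⊤) (k : ℕ) : k < (f '' ball S k).ncard := by
  classical
  obtain ⟨X, hX⟩ : ∃ X : Finset H, (X : Set H) = f '' ball S 1 :=
    ((finite_ball hS 1).image f).exists_finset_coe
  have hpow : ((X ^ k : Finset H) : Set H) = f '' ball S k := by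
    rw [Finset.coe_pow, hX, ball, pow_one, ball, Set.image_pow]
  rw [← hpow, Set.ncard_coe_finset]
  refine Finset.add_one_le_card_pow ?_ ?_ k
  · exact Finset.mem_coe.mp (hX ▸ ⟨1, one_mem_ball S 1, map_one f⟩)
  · have hclosure : Subgroup.closure (ball S 1) = ⊤ := top_unique <|
      hgen.ge.trans (Subgroup.closure_mono fun x hx => by simp [ball, hx])
    rwa [hX, ← MonoidHom.map_closure, hclosure, ← MonoidHom.range_eq_map, MonoidHom.coe_range]

end WordBalls

section VeroneseSpans

open Matrix

variable {n K : Type*}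

lemma exists_linearMap_veronese_mul [Fintype n] [CommSemiring K] (d : ℕ) (A : Matrix n n K) :
    ∃ L : ((Fin d → Option (n × n)) → K) →ₗ[K] ((Fin d → Option (n × n)) → K),
      ∀ M, L (veronese d M) = veronese d (A * M) := by
  classical
  have hcoord : ∀ I, ∃ c, ∀ M, veronese d (A * M) I = c ⬝ᵥ veronese d M := fun I => by
    simpa using exists_eq_dotProduct_veronese
      (comp_mul_mul_mem (linearMap_veronese_mem (LinearMap.proj I)) A 1)
  choose c hc using hcoord
  exact ⟨(Matrix.of c).mulVecLin, fun M => funext fun I => (hc I M).symm⟩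

lemma exists_linearMap_of_mem_affineFunctions [CommRing K] {F : Matrix n n K → K}
    (hF : F ∈ affineFunctions n K) : ∃ L : Matrix n n K →ₗ[K] K, ∀ M, F M = F 0 + L M := by
  induction hF using Submodule.span_induction with
  | mem F hF =>
    obtain ⟨_ | ⟨i, j⟩, rfl⟩ := hF
    · exact ⟨0, fun M => by simp [coord]⟩
    · exact ⟨Matrix.entryLinearMap K K i j, fun M => by simp [coord]⟩
  | zero => exact ⟨0, fun M => by simp⟩
  | add F F' _ _ hF hF' =>
    obtain ⟨L, hL⟩ := hF
    obtain ⟨L', hL'⟩ := hF'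
    exact ⟨L + L', fun M => by
      rw [Pi.add_apply, hL, hL', Pi.add_apply, LinearMap.add_apply, add_add_add_comm]⟩
  | smul c F _ hF =>
    obtain ⟨L, hL⟩ := hF
    exact ⟨c • L, fun M => by
      rw [Pi.smul_apply, hL, Pi.smul_apply, smul_add, LinearMap.smul_apply]⟩

variable [Fintype n] [DecidableEq n] [Field K] {Γ : Submonoid (Matrix n n K)}

lemma eq_zero_of_mem_affineFunctions [Nontrivial n]
    (hΓ : ∀ i j, i ≠ j → Matrix.transvection i j (1 : K) ∈ Γ) {F : Matrix n n K → K}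
    (hF : F ∈ affineFunctions n K) (hzero : ∀ M ∈ Γ, F M = 0) : F = 0 := by
  obtain ⟨L, hL⟩ := exists_linearMap_of_mem_affineFunctions hF
  have hΓL : ∀ M ∈ Γ, F 0 + L M = 0 := fun M hM => hL M ▸ hzero M hM
  have hone : F 0 + L 1 = 0 := hΓL 1 Γ.one_mem
  have hoffDiag : ∀ i j, i ≠ j → L (Matrix.single i j 1) = 0 := fun i j hij => by
    have := hΓL _ (hΓ i j hij)
    rwa [Matrix.transvection, map_add, ← add_assoc, hone, zero_add] at this
  have hdiag : ∀ j, L (Matrix.single j j 1) = 0 := fun j => by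
    obtain ⟨i, hij⟩ := exists_ne j
    have := hΓL _ (Γ.mul_mem (hΓ j i hij.symm) (hΓ i j hij))
    simp only [Matrix.transvection, mul_add, mul_one, add_mul, one_mul,
      Matrix.single_mul_single_same, map_add, hoffDiag _ _ hij, hoffDiag _ _ hij.symm] at this
    linear_combination this - hone
  have hL0 : L = 0 := Matrix.ext_linearMap K fun i j => LinearMap.ext_ring <| by
    rcases eq_or_ne i j with rfl | hij
    · simpa using hdiag i
    · simpa using hoffDiag i j hij
  ext M
  simpa [hL M, hL0] using hone

lemma veronese_one_mem_span [Nontrivial n]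
    (hΓ : ∀ i j, i ≠ j → Matrix.transvection i j (1 : K) ∈ Γ) (X : Matrix n n K) :
    veronese 1 X ∈ Submodule.span K (veronese 1 '' (Γ : Set (Matrix n n K))) := by
  by_contra hX
  obtain ⟨f, hf, hker⟩ := Submodule.exists_le_ker_of_notMem hX
  have hfV : (fun M => f (veronese 1 M)) = 0 :=
    eq_zero_of_mem_affineFunctions hΓ (by simpa using linearMap_veronese_mem (d := 1) f)
      fun M hM => hker (Submodule.subset_span (Set.mem_image_of_mem _ hM))
  exact hf (congrFun hfV X)

variable {ρ : G →* Matrix n n K} {S : Set G}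

-- The span of the Veronese image of a ball determines the next one, and the dimension can only
-- grow finitely often.
lemma span_veronese_range_le (hS : Subgroup.closure S = ⊤) {d J : ℕ}
    (hJ : Fintype.card (Fin d → Option (n × n)) ≤ J) :
    Submodule.span K (veronese d '' (MonoidHom.mrange ρ : Set (Matrix n n K))) ≤
      Submodule.span K (veronese d '' (ρ '' ball S J)) := by
  let V : ℕ → Submodule K ((Fin d → Option (n × n)) → K) := fun k =>
    Submodule.span K (veronese d '' (ρ '' ball S k))
  have hmem : ∀ {k g}, g ∈ ball S k → veronese d (ρ g) ∈ V k := fun hg =>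
    Submodule.subset_span (Set.mem_image_of_mem _ (Set.mem_image_of_mem _ hg))
  have hmono : Monotone V := fun k l hkl =>
    Submodule.span_mono (Set.image_mono (Set.image_mono (monotone_ball S hkl)))
  have hstab : ∀ k, V k = V (k + 1) → V (k + 1) = V (k + 2) := fun k hk => by
    refine le_antisymm (hmono (by omega)) (Submodule.span_le.mpr ?_)
    rintro _ ⟨_, ⟨g, hg, rfl⟩, rfl⟩
    rw [show k + 2 = 1 + (k + 1) by omega, ball_add] at hg
    obtain ⟨s, hs, g, hg, rfl⟩ := hg
    obtain ⟨L, hL⟩ := exists_linearMap_veronese_mul d (ρ s)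
    have hmap : (V k).map L ≤ V (k + 1) := by
      rw [Submodule.map_span_le]
      rintro _ ⟨_, ⟨g', hg', rfl⟩, rfl⟩
      rw [hL, ← map_mul, add_comm]
      exact hmem (mul_mem_ball hs hg')
    rw [map_mul, ← hL]
    exact hmap (Submodule.mem_map_of_mem (hk ▸ hmem hg))
  have hfinrank : ∀ k, Fintype.card (Fin d → Option (n × n)) ≤ k →
      Module.finrank K (V k) = Module.finrank K (V (Fintype.card (Fin d → Option (n × n)))) :=
    fun k => Nat.stabilises_of_monotone (f := fun k => Module.finrank K (V k))
      (fun k l hkl => Submodule.finrank_mono (hmono hkl))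
      (fun k => (Submodule.finrank_le _).trans (Module.finrank_fintype_fun_eq_card K).le)
      fun k hk => congrArg (fun W : Submodule K _ => Module.finrank K W) <|
        hstab k (Submodule.eq_of_le_of_finrank_eq (hmono k.le_succ) hk)
  refine Submodule.span_le.mpr ?_
  rintro _ ⟨_, ⟨g, rfl⟩, rfl⟩
  obtain ⟨k, hk⟩ := exists_mem_ball hS g
  have hJk : V J = V (max k J) := Submodule.eq_of_le_of_finrank_eq (hmono (le_max_right k J))
    ((hfinrank J hJ).trans (hfinrank _ (hJ.trans (le_max_right k J))).symm)
  exact hJk.ge (hmem (monotone_ball S (le_max_left k J) hk))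

end VeroneseSpans

section TraceNorm

variable {n ι K : Type*} [Fintype n] [Fintype ι]

/-- Every matrix `X` is recovered from its traces against the family `h`, with coefficients given
by `T`. Then the traces `tr (h i * x * h j)` determine `x`. -/
def IsTraceFrame [CommSemiring K] (h : ι → Matrix n n K) (T : Matrix ι ι K) : Prop :=
  ∀ X, ∑ i, Matrix.vecMul (fun j => (X * h j).trace) T i • h i = X

lemma IsTraceFrame.trace_mul_mul [CommSemiring K] {h : ι → Matrix n n K} {T : Matrix ι ι K}
    (hT : IsTraceFrame h T) (x y : Matrix n n K) :
    (x * y).trace = ∑ i, Matrix.vecMul (fun j => (x * h j).trace) T i * (h i * y).trace := by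
  conv_lhs => rw [← hT x]
  simp [Finset.sum_mul, Matrix.trace_sum]

lemma IsTraceFrame.nonempty [Nonempty n] [CommRing K] [Nontrivial K] {h : ι → Matrix n n K}
    {T : Matrix ι ι K} (hT : IsTraceFrame h T) : Nonempty ι := by
  classical
  by_contra hι
  rw [not_nonempty_iff] at hι
  exact one_ne_zero ((hT 1).symm.trans (Fintype.sum_empty _))

lemma IsTraceFrame.eq_zero [CommSemiring K] {h : ι → Matrix n n K} {T : Matrix ι ι K}
    (hT : IsTraceFrame h T) {x : Matrix n n K} (hx : ∀ i j, (h i * x * h j).trace = 0) : x = 0 := by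
  classical
  have hhx : ∀ i, h i * x = 0 := fun i => by
    rw [← hT (h i * x)]
    simp [funext (hx i), Matrix.vecMul, ← Pi.zero_def]
  rw [← one_mul x, ← hT 1, Finset.sum_mul]
  simp [hhx]

variable [NormedField K] {h : ι → Matrix n n K} {T : Matrix ι ι K} {τ : ℝ}

lemma IsTraceFrame.norm_trace_mul_le (hT : IsTraceFrame h T) (hτ : ∀ i j, ‖T i j‖ ≤ τ)
    (x y : Matrix n n K) :
    ‖(x * y).trace‖ ≤ τ * ((∑ l, ‖(x * h l).trace‖) * ∑ k, ‖(h k * y).trace‖) := by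
  have hcoeff : ∀ k, ‖Matrix.vecMul (fun j => (x * h j).trace) T k‖ ≤
      τ * ∑ l, ‖(x * h l).trace‖ := fun k => by
    rw [Matrix.vecMul, dotProduct, Finset.mul_sum]
    refine (norm_sum_le _ _).trans (Finset.sum_le_sum fun l _ => ?_)
    rw [norm_mul, mul_comm]
    gcongr
    exact hτ l k
  rw [hT.trace_mul_mul, ← mul_assoc, Finset.mul_sum]
  refine (norm_sum_le _ _).trans (Finset.sum_le_sum fun k _ => ?_)
  rw [norm_mul]
  gcongr
  exact hcoeff k

variable [DecidableEq n]

/-- The norm `x ↦ τ * ∑ i j, ‖tr (h i * x * h j)‖` attached to a trace frame; it is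
submultiplicative once `τ` dominates the entries of the coefficient matrix. -/
noncomputable def IsTraceFrame.traceNorm (hT : IsTraceFrame h T) (hτ0 : 0 < τ)
    (hτ : ∀ i j, ‖T i j‖ ≤ τ) : AlgebraNorm K (Matrix n n K) where
  toFun x := τ * ∑ i, ∑ j, ‖(h i * x * h j).trace‖
  map_zero' := by simp
  add_le' x y := by
    rw [← mul_add]
    refine mul_le_mul_of_nonneg_left ?_ hτ0.le
    simp only [← Finset.sum_add_distrib, mul_add, add_mul, Matrix.trace_add]
    gcongr
    exact norm_add_le _ _
  neg' x := by simp
  smul' c x := by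
    simp [mul_left_comm, Finset.mul_sum]
  mul_le' x y := by
    calc τ * ∑ i, ∑ j, ‖(h i * (x * y) * h j).trace‖
        ≤ τ * ∑ i, ∑ j, τ *
            ((∑ l, ‖(h i * x * h l).trace‖) * ∑ k, ‖(h k * y * h j).trace‖) := by
          gcongr with i _ j _
          simpa only [mul_assoc] using hT.norm_trace_mul_le hτ (h i * x) (y * h j)
      _ = τ * (τ * ((∑ i, ∑ l, ‖(h i * x * h l).trace‖) *
            ∑ j, ∑ k, ‖(h k * y * h j).trace‖)) := by
          simp only [← Finset.mul_sum, ← Finset.sum_mul]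
      _ = _ := by
          rw [Finset.sum_comm (f := fun j k => ‖(h k * y * h j).trace‖)]
          ring
  eq_zero_of_map_eq_zero' x hx := hT.eq_zero fun i j => by
    have hsum := (mul_eq_zero.mp hx).resolve_left hτ0.ne'
    rw [← Fintype.sum_prod_type' (f := fun i j => ‖(h i * x * h j).trace‖),
      Fintype.sum_eq_zero_iff_of_nonneg fun _ => norm_nonneg _] at hsum
    exact norm_eq_zero.mp (congrFun hsum (i, j))

lemma IsTraceFrame.traceNorm_le (hT : IsTraceFrame h T) (hτ0 : 0 < τ) (hτ : ∀ i j, ‖T i j‖ ≤ τ)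
    {x : Matrix n n K} {r : ℝ} (hr : ∀ i j, ‖(h i * x * h j).trace‖ ≤ r) :
    hT.traceNorm hτ0 hτ x ≤ τ * (Fintype.card ι ^ 2 * r) := by
  refine mul_le_mul_of_nonneg_left ?_ hτ0.le
  calc ∑ i, ∑ j, ‖(h i * x * h j).trace‖ ≤ ∑ _i : ι, ∑ _j : ι, r :=
        Finset.sum_le_sum fun i _ => Finset.sum_le_sum fun j _ => hr i j
    _ = Fintype.card ι ^ 2 * r := by simp [sq, mul_assoc]

lemma IsTraceFrame.exists_traceNorm_le [Nonempty n] (hT : IsTraceFrame h T) (hτ0 : 0 < τ)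
    (hτ : ∀ i j, ‖T i j‖ ≤ τ) (x : Matrix n n K) :
    ∃ i j, hT.traceNorm hτ0 hτ x ≤ τ * (Fintype.card ι ^ 2 * ‖(h i * h j * x).trace‖) := by
  have := hT.nonempty
  obtain ⟨p, hp⟩ := Finite.exists_max fun p : ι × ι => ‖(h p.1 * x * h p.2).trace‖
  refine ⟨p.2, p.1, hT.traceNorm_le hτ0 hτ fun i j => (hp (i, j)).trans_eq ?_⟩
  rw [mul_assoc (h p.2), Matrix.trace_mul_comm (h p.2)]

end TraceNorm

section InverseKernelMatrices

variable {n ι : Type*} [Fintype n] [Fintype ι] [DecidableEq ι] {d J : ℕ} {h : ι → Matrix n n ℂ}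

lemma isTraceFrame_inv_kernelMatrix (hdet : (kernelMatrix 1 h).det ≠ 0)
    (hspan : ∀ X, veronese 1 X ∈ Submodule.span ℂ (Set.range fun i => veronese 1 (h i))) :
    IsTraceFrame h (kernelMatrix 1 h)⁻¹ := by
  classical
  intro X
  ext i j
  have hentry : ∀ Y : Matrix n n ℂ, Y i j =
      Matrix.vecMul (fun k => (1 + (Y * h k).trace) ^ 1) (kernelMatrix 1 h)⁻¹ ⬝ᵥ
        fun k => h k i j := fun Y =>
    eq_dotProduct_of_veronese_mem_span hdet (hspan Y)
      (by simpa using entry_mem_affineFunctions i j)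
  have hsub : (fun k => (X * h k).trace) = (fun k => (1 + (X * h k).trace) ^ 1) -
      fun k => (1 + ((0 : Matrix n n ℂ) * h k).trace) ^ 1 := by
    ext k
    simp
  rw [hsub, Matrix.sub_vecMul, ← sub_zero (X i j), ← Matrix.zero_apply (α := ℂ) i j, hentry X,
    hentry 0, ← sub_dotProduct, Matrix.sum_apply]
  rfl

lemma norm_inv_kernelMatrix_apply_le {R : ℝ} (hdet : 1 ≤ ‖(kernelMatrix d h).det‖)
    (hcard : Fintype.card ι ≤ J) (hR : 2 ≤ R) (hJ : (J.factorial : ℝ) ≤ R)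
    (htr : ∀ i j, ‖(h i * h j).trace‖ ≤ R) (i j : ι) :
    ‖(kernelMatrix d h)⁻¹ i j‖ ≤ R ^ (1 + 2 * d * J) := by
  have hR1 : 1 ≤ R := by linarith
  have hentry : ∀ i j, ‖kernelMatrix d h i j‖ ≤ R ^ (2 * d) := fun i j => by
    rw [kernelMatrix, Matrix.of_apply, norm_pow, pow_mul]
    gcongr
    calc ‖1 + (h i * h j).trace‖ ≤ ‖(1 : ℂ)‖ + ‖(h i * h j).trace‖ := norm_add_le _ _
      _ ≤ 1 + R := by
        rw [norm_one]
        gcongr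
        exact htr i j
      _ ≤ R ^ 2 := by nlinarith
  calc ‖(kernelMatrix d h)⁻¹ i j‖
      ≤ (Fintype.card ι).factorial * (R ^ (2 * d)) ^ Fintype.card ι :=
        norm_inv_apply_le hdet (one_le_pow₀ hR1) hentry i j
    _ ≤ J.factorial * (R ^ (2 * d)) ^ J := by
        gcongr
        exact one_le_pow₀ hR1
    _ ≤ R * (R ^ (2 * d)) ^ J := by gcongr
    _ = R ^ (1 + 2 * d * J) := by ring

end InverseKernelMatrices

section ArithmeticRepresentations

variable {n : Type*} [Fintype n] [DecidableEq n]

/-- A representation by integral matrices whose image is stable under transposition and contains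
every integral transvection; such an image is commensurable with the integral points of `SL n`. -/
structure IsArithmeticRep (ρ : G →* Matrix n n ℂ) : Prop where
  integral : ∀ g, ρ g ∈ integralMatrices n
  transpose_mem : ∀ g, (ρ g).transpose ∈ MonoidHom.mrange ρ
  transvection_mem : ∀ (i j : n) (k : ℤ), i ≠ j →
    Matrix.transvection i j (k : ℂ) ∈ MonoidHom.mrange ρ

variable {ρ : G →* Matrix n n ℂ} {S : Set G} {d J : ℕ}

lemma IsArithmeticRep.infinite_range [Nontrivial n] (hρ : IsArithmeticRep ρ) :
    (Set.range ρ).Infinite := by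
  obtain ⟨i, j, hij⟩ := exists_pair_ne n
  refine Set.infinite_of_injective_forall_mem
    (f := fun k : ℤ => Matrix.transvection i j (k : ℂ)) (fun k l hkl => ?_)
    fun k => hρ.transvection_mem i j k hij
  simpa [Matrix.transvection, hij] using congrFun (congrFun hkl i) j

lemma IsArithmeticRep.norm_det (hρ : IsArithmeticRep ρ) (g : G) : ‖(ρ g).det‖ = 1 := by
  obtain ⟨k, hk⟩ := exists_intCast_eq_det (hρ.integral g)
  obtain ⟨l, hl⟩ := exists_intCast_eq_det (hρ.integral g⁻¹)
  have hkl : k * l = 1 := by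
    have hdet : (ρ g).det * (ρ g⁻¹).det = 1 := by simp [← Matrix.det_mul, ← map_mul]
    exact_mod_cast hk ▸ hl ▸ hdet
  rcases Int.eq_one_or_neg_one_of_mul_eq_one hkl with h | h <;> simp [← hk, h]

lemma IsArithmeticRep.lt_ncard_image_ball [Nontrivial n] (hρ : IsArithmeticRep ρ) (hS : S.Finite)
    (hgen : Subgroup.closure S = ⊤) (k : ℕ) : k < (ρ '' ball S k).ncard := by
  have hval : ∀ A : Set G, ρ '' A = Units.val '' (ρ.toHomUnits '' A) := fun A => by
    simp [Set.image_image]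
  rw [hval, Set.ncard_image_of_injective _ Units.val_injective]
  refine UniformGrowth.lt_ncard_image_ball _ (Set.Infinite.of_image Units.val ?_) hS hgen k
  rw [← Set.image_univ, ← hval, Set.image_univ]
  exact hρ.infinite_range

lemma IsArithmeticRep.exists_spanning_family (hρ : IsArithmeticRep ρ)
    (hgen : Subgroup.closure S = ⊤) (hJ : Fintype.card (Fin d → Option (n × n)) ≤ J) :
    ∃ k ≤ J, ∃ h : Fin k → Matrix n n ℂ, (∀ i, h i ∈ ρ '' ball S J) ∧
      1 ≤ ‖(kernelMatrix d h).det‖ ∧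
      Submodule.span ℂ (veronese d '' (MonoidHom.mrange ρ : Set (Matrix n n ℂ))) ≤
        Submodule.span ℂ (Set.range fun i => veronese d (h i)) := by
  obtain ⟨s, hs, hli, hspan⟩ := exists_linearIndependent_veronese d (ρ '' ball S J)
  have hcard : s.card ≤ Fintype.card (Fin d → Option (n × n)) := by
    simpa using hli.fintype_card_le_finrank
  let h : Fin s.card → Matrix n n ℂ := fun i => s.equivFin.symm i
  have hrange : Set.range (fun i => veronese d (h i)) =
      Set.range fun M : s => veronese d (M : Matrix n n ℂ) :=
    s.equivFin.symm.surjective.range_comp fun M : s => veronese d (M : Matrix n n ℂ)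
  have hle : Submodule.span ℂ (veronese d '' (MonoidHom.mrange ρ : Set (Matrix n n ℂ))) ≤
      Submodule.span ℂ (Set.range fun i => veronese d (h i)) :=
    (span_veronese_range_le hgen hJ).trans (Submodule.span_le.mpr (hrange ▸ hspan))
  have hball : ∀ i, h i ∈ ρ '' ball S J := fun i => hs (s.equivFin.symm i).2
  have hint : ∀ i, h i ∈ integralMatrices n := fun i => by
    obtain ⟨g, -, hg⟩ := hball i
    exact hg ▸ hρ.integral g
  refine ⟨s.card, hcard.trans hJ, h, hball, one_le_norm_det
    (kernelMatrix_mem_integralMatrices hint) (det_kernelMatrix_ne_zero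
      (hli.comp _ s.equivFin.symm.injective) hint fun i => ?_), hle⟩
  obtain ⟨g, -, hg⟩ := hball i
  exact hle (Submodule.subset_span ⟨_, hg ▸ hρ.transpose_mem g, rfl⟩)

end ArithmeticRepresentations

section UniformPingPong

variable {n : Type*} [Fintype n] [DecidableEq n] {ρ : G →* Matrix n n ℂ} {S : Set G} {J : ℕ}

lemma IsArithmeticRep.exists_isTraceFrame [Nontrivial n] (hρ : IsArithmeticRep ρ)
    (hgen : Subgroup.closure S = ⊤) (hJ : Fintype.card (Fin 1 → Option (n × n)) ≤ J) :
    ∃ k ≤ J, ∃ h : Fin k → Matrix n n ℂ, (∀ i, h i ∈ ρ '' ball S J) ∧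
      1 ≤ ‖(kernelMatrix 1 h).det‖ ∧ IsTraceFrame h (kernelMatrix 1 h)⁻¹ := by
  obtain ⟨k, hk, h, hball, hdet, hspan⟩ := hρ.exists_spanning_family hgen hJ
  have hdet0 : (kernelMatrix 1 h).det ≠ 0 := norm_pos_iff.mp (one_pos.trans_le hdet)
  exact ⟨k, hk, h, hball, hdet, isTraceFrame_inv_kernelMatrix hdet0 fun X =>
    hspan (veronese_one_mem_span (fun i j hij => by
      simpa using hρ.transvection_mem i j 1 hij) X)⟩

-- A trace frame determines a matrix from boundedly many traces, which are integers here; bounded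
-- traces would leave only boundedly many elements in the image of a large ball.
lemma IsArithmeticRep.exists_le_norm_trace [Nontrivial n] (hρ : IsArithmeticRep ρ) (C : ℕ) :
    ∃ K₀, ∀ K ≥ K₀, ∀ S : Set G, S.Finite → Subgroup.closure S = ⊤ →
      ∃ g ∈ ball S K, (C : ℝ) ≤ ‖(ρ g).trace‖ := by
  set J := Fintype.card (Fin 1 → Option (n × n)) with hJ
  set N := (2 * C + 1) ^ J
  refine ⟨N + J, fun K hK S hS hgen => ?_⟩
  by_contra! hlt
  obtain ⟨k, hk, h, hball, -, hframe⟩ := hρ.exists_isTraceFrame hgen hJ.ge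
  have htrace : ∀ X ∈ ρ '' ball S N, ∀ j,
      ∃ t ∈ Finset.Icc (-C : ℤ) C, (t : ℂ) = (X * h j).trace := by
    rintro _ ⟨g, hg, rfl⟩ j
    obtain ⟨g', hg', hj⟩ := hball j
    obtain ⟨t, ht⟩ := exists_intCast_eq_trace (hρ.integral (g * g'))
    have htC := hlt (g * g') (monotone_ball S hK (mul_mem_ball hg hg'))
    rw [← ht, Complex.norm_intCast] at htC
    refine ⟨t, Finset.mem_Icc.mpr (abs_le.mp (by exact_mod_cast htC.le)), ?_⟩
    rw [ht, map_mul, hj]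
  choose! t htC ht using htrace
  have hinj : Set.InjOn t (ρ '' ball S N) := fun X hX Y hY hXY => by
    have htraces : (fun j => (X * h j).trace) = fun j => (Y * h j).trace :=
      funext fun j => by rw [← ht X hX, ← ht Y hY, hXY]
    rw [← hframe X, ← hframe Y, htraces]
  have hcard : (Fintype.piFinset fun _ : Fin k => Finset.Icc (-C : ℤ) C).card =
      (2 * C + 1) ^ k := by
    rw [Fintype.card_piFinset_const, Int.card_Icc]
    congr 1
    omega
  have hle : (ρ '' ball S N).ncard ≤ (2 * C + 1) ^ k := by
    rw [← hcard, ← Set.ncard_coe_finset]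
    exact Set.ncard_le_ncard_of_injOn t
      (fun X hX => Finset.mem_coe.mpr (Fintype.mem_piFinset.mpr (htC X hX))) hinj
      (Finset.finite_toSet _)
  have hpow : (2 * C + 1) ^ k ≤ N := Nat.pow_le_pow_right (by omega) hk
  exact absurd (hρ.lt_ncard_image_ball hS hgen N) (by omega)

lemma IsArithmeticRep.exists_algebraNorm [Nontrivial n] (hρ : IsArithmeticRep ρ)
    (hgen : Subgroup.closure S = ⊤) (hJ : Fintype.card (Fin 1 → Option (n × n)) ≤ J) {R : ℝ}
    (hR : 2 ≤ R) (hJR : (J.factorial : ℝ) ≤ R)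
    (htr : ∀ g ∈ ball S (4 * J + 1), ‖(ρ g).trace‖ ≤ R) :
    ∃ ν : AlgebraNorm ℂ (Matrix n n ℂ),
      (∀ g ∈ ball S (2 * J + 1), ν (ρ g) ≤ R ^ (2 * J + 4)) ∧
      ∀ y, ∃ g ∈ ball S (2 * J), ν y ≤ R ^ (2 * J + 3) * ‖(ρ g * y).trace‖ := by
  obtain ⟨k, hk, h, hball, hdet, hframe⟩ := hρ.exists_isTraceFrame hgen hJ
  choose g hg hgh using hball
  have hT : ∀ i j, ‖(kernelMatrix 1 h)⁻¹ i j‖ ≤ R ^ (2 * J + 1) := fun i j => by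
    refine (norm_inv_kernelMatrix_apply_le hdet (by simpa using hk) hR hJR (fun i j => ?_)
      i j).trans_eq (by ring)
    rw [← hgh, ← hgh, ← map_mul]
    exact htr _ (monotone_ball S (by omega) (mul_mem_ball (hg i) (hg j)))
  have hkR : (k : ℝ) ≤ R := (Nat.cast_le.mpr (hk.trans J.self_le_factorial)).trans hJR
  have hR0 : 0 < R := by linarith
  refine ⟨hframe.traceNorm (pow_pos hR0 _) hT, fun x hx => ?_, fun y => ?_⟩
  · refine (hframe.traceNorm_le _ hT (r := R) fun i j => ?_).trans ?_
    · rw [← hgh, ← hgh, ← map_mul, ← map_mul]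
      exact htr _ (monotone_ball S (by omega) (mul_mem_ball (mul_mem_ball (hg i) hx) (hg j)))
    · calc R ^ (2 * J + 1) * (Fintype.card (Fin k) ^ 2 * R) ≤ R ^ (2 * J + 1) * (R ^ 2 * R) := by
            rw [Fintype.card_fin]
            gcongr
        _ = R ^ (2 * J + 4) := by ring
  · obtain ⟨i, j, hij⟩ := hframe.exists_traceNorm_le (pow_pos hR0 _) hT y
    refine ⟨g i * g j, monotone_ball S (by omega) (mul_mem_ball (hg i) (hg j)), hij.trans ?_⟩
    rw [map_mul, hgh, hgh, Fintype.card_fin]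
    calc R ^ (2 * J + 1) * (k ^ 2 * ‖(h i * h j * y).trace‖)
        ≤ R ^ (2 * J + 1) * (R ^ 2 * ‖(h i * h j * y).trace‖) := by gcongr
      _ = R ^ (2 * J + 3) * ‖(h i * h j * y).trace‖ := by ring

lemma map_le_pow_of_mem_ball {ν : AlgebraNorm ℂ (Matrix n n ℂ)} {b : ℝ}
    (hν : ∀ g ∈ ball S 1, ν (ρ g) ≤ b) {k : ℕ} {g : G} (hg : g ∈ ball S k) :
    ν (ρ g) ≤ b ^ (k + 1) := by
  induction k generalizing g with
  | zero => simpa using hν g (monotone_ball S zero_le_one hg)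
  | succ k ih =>
    rw [ball_add] at hg
    obtain ⟨x, hx, s, hs, rfl⟩ := hg
    rw [map_mul, pow_succ]
    exact (map_mul_le_mul ν _ _).trans
      (mul_le_mul (ih hx) (hν s hs) (apply_nonneg ν _) ((apply_nonneg ν _).trans (ih hx)))

omit [DecidableEq n] in
lemma norm_vecMul_apply_le {K m : Type*} [NormedField K] {v : n → K} {T : Matrix n m K} {a b : ℝ}
    (hv : ∀ j, ‖v j‖ ≤ a) (hT : ∀ j i, ‖T j i‖ ≤ b) (i : m) :
    ‖Matrix.vecMul v T i‖ ≤ Fintype.card n * (a * b) := by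
  calc ‖∑ j, v j * T j i‖ ≤ ∑ _j : n, a * b :=
        norm_sum_le_of_le _ fun j _ => norm_mul_le_of_le (hv j) (hT j i)
    _ = Fintype.card n * (a * b) := by simp

lemma norm_one_add_trace_le {ν : AlgebraNorm ℂ (Matrix n n ℂ)} {h y : Matrix n n ℂ} {R : ℝ}
    {e : ℕ} (hR : 3 ≤ R) (hn : Fintype.card n ≤ R) (hh : ν h ≤ R ^ e) (htr : ‖h.trace‖ ≤ R)
    (hy : ν y ≤ 1) : ‖1 + ((1 + y) * h).trace‖ ≤ R ^ (e + 2) := by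
  have hR1 : 1 ≤ R := by linarith
  have hle : R ≤ R ^ (e + 1) := le_self_pow₀ hR1 (by omega)
  have hyh : ‖(y * h).trace‖ ≤ R ^ (e + 1) := by
    calc ‖(y * h).trace‖ ≤ Fintype.card n * ν (y * h) := norm_trace_le ν _
      _ ≤ R * (1 * R ^ e) := by
        gcongr
        exact (map_mul_le_of_map_le ν hy h).trans (by gcongr)
      _ = R ^ (e + 1) := by ring
  rw [add_mul, one_mul, Matrix.trace_add]
  calc ‖1 + (h.trace + (y * h).trace)‖ ≤ ‖(1 : ℂ)‖ + (‖h.trace‖ + ‖(y * h).trace‖) :=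
        (norm_add_le _ _).trans (by gcongr; exact norm_add_le _ _)
    _ ≤ R ^ (e + 1) + (R ^ (e + 1) + R ^ (e + 1)) := by
        rw [norm_one]
        linarith
    _ = 3 * R ^ (e + 1) := by ring
    _ ≤ R * R ^ (e + 1) := by gcongr
    _ = R ^ (e + 2) := by ring

lemma norm_vecMul_one_add_trace_pow_le {ι m : Type*} [Fintype ι] {ν : AlgebraNorm ℂ (Matrix n n ℂ)}
    {h : ι → Matrix n n ℂ} {T : Matrix ι m ℂ} {y : Matrix n n ℂ} {R : ℝ} {e t : ℕ} (hR : 3 ≤ R)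
    (hn : Fintype.card n ≤ R) (hcard : Fintype.card ι ≤ R) (hh : ∀ j, ν (h j) ≤ R ^ e)
    (htr : ∀ j, ‖(h j).trace‖ ≤ R) (hT : ∀ j i, ‖T j i‖ ≤ R ^ t) (hy : ν y ≤ 1) (d : ℕ) (i : m) :
    ‖Matrix.vecMul (fun j => (1 + ((1 + y) * h j).trace) ^ d) T i‖ ≤ R ^ (1 + (e + 2) * d + t) := by
  have hbase : ∀ j, ‖(1 + ((1 + y) * h j).trace) ^ d‖ ≤ (R ^ (e + 2)) ^ d := fun j => by
    rw [norm_pow]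
    gcongr
    exact norm_one_add_trace_le hR hn (hh j) (htr j) hy
  calc _ ≤ Fintype.card ι * ((R ^ (e + 2)) ^ d * R ^ t) := norm_vecMul_apply_le hbase hT i
    _ ≤ R * ((R ^ (e + 2)) ^ d * R ^ t) := by gcongr
    _ = R ^ (1 + (e + 2) * d + t) := by ring

lemma IsArithmeticRep.exists_isInterpolatingFamily (hρ : IsArithmeticRep ρ)
    (hgen : Subgroup.closure S = ⊤)
    (hJ : Fintype.card (Fin (Fintype.card n + 1) → Option (n × n)) ≤ J) {R : ℝ} (hR : 3 ≤ R)
    (hn : Fintype.card n ≤ R) (hJR : (J.factorial : ℝ) ≤ R)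
    (htr : ∀ g ∈ ball S (2 * J), ‖(ρ g).trace‖ ≤ R) {ν : AlgebraNorm ℂ (Matrix n n ℂ)}
    (hν : ∀ g ∈ ball S (2 * J + 1), ν (ρ g) ≤ R ^ (2 * J + 4))
    (hνtr : ∀ y, ∃ g ∈ ball S (2 * J), ν y ≤ R ^ (2 * J + 3) * ‖(ρ g * y).trace‖) :
    ∃ (k : ℕ) (h : Fin k → Matrix n n ℂ), (∀ i, h i ∈ ρ '' ball S J) ∧ IsInterpolatingFamily ν h
      (R ^ (2 + (2 * J + 6) * (Fintype.card n + 1) + 2 * (Fintype.card n + 1) * J)) := by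
  obtain ⟨k, hk, h, hball, hdet, hspan⟩ := hρ.exists_spanning_family hgen hJ
  choose g hg hgh using hball
  set d := Fintype.card n + 1
  have hR1 : 1 ≤ R := by linarith
  have hkR : (k : ℝ) ≤ R := (Nat.cast_le.mpr (hk.trans J.self_le_factorial)).trans hJR
  have hle : 2 * J + 4 ≤ 2 + (2 * J + 6) * d + 2 * d * J := by
    have : 2 * J + 6 ≤ (2 * J + 6) * d := Nat.le_mul_of_pos_right _ (Nat.succ_pos _)
    omega
  have hνh : ∀ i, ν (h i) ≤ R ^ (2 * J + 4) := fun i =>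
    hgh i ▸ hν _ (monotone_ball S (by omega) (hg i))
  have hT : ∀ i j, ‖(kernelMatrix d h)⁻¹ i j‖ ≤ R ^ (1 + 2 * d * J) :=
    norm_inv_kernelMatrix_apply_le hdet (by simpa using hk) (by linarith) hJR fun i j => by
      rw [← hgh, ← hgh, ← map_mul]
      exact htr _ (monotone_ball S (by omega) (mul_mem_ball (hg i) (hg j)))
  refine ⟨k, h, fun i => ⟨g i, hg i, hgh i⟩, ⟨?_, fun i => ?_, fun i => ?_, fun y => ?_,
    fun w f hwf hνwf => ?_⟩⟩
  · exact (Fintype.card_fin k).symm ▸ hkR.trans (le_self_pow₀ hR1 (by omega))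
  · exact hgh i ▸ (Group.isUnit (g i)).map ρ
  · exact (hνh i).trans (pow_le_pow_right₀ hR1 hle)
  · obtain ⟨x, hx, hxy⟩ := hνtr y
    refine ⟨ρ x, (hν x (monotone_ball S (by omega) hx)).trans (pow_le_pow_right₀ hR1 hle),
      hxy.trans (mul_le_mul_of_nonneg_right (pow_le_pow_right₀ hR1 (by omega)) (norm_nonneg _))⟩
  · refine ⟨_, fun i => ?_, fun F hF => eq_dotProduct_of_veronese_mem_span
      (norm_pos_iff.mp (one_pos.trans_le hdet)) (hspan (veronese_mem_span_of_mem_transvections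
        hρ.transvection_mem (one_add_vecMulVec_mem_transvections hwf))) hF⟩
    exact (norm_vecMul_one_add_trace_pow_le hR hn (by simpa using hkR) hνh
      (fun j => hgh j ▸ htr _ (monotone_ball S (by omega) (hg j))) hT hνwf.le d i).trans_eq
        (by ring)

end UniformPingPong

section FreeSubmonoids

variable {n : Type*} [Fintype n] [DecidableEq n] {ρ : G →* Matrix n n ℂ}

lemma mul_ne_mul_of_map {M : Type*} [Monoid M] (f : G →* M) {x y : G}
    (h : ∀ w ∈ Submonoid.closure {f x, f y}, ∀ w' ∈ Submonoid.closure {f x, f y},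
      f x * w ≠ f y * w') :
    ∀ w ∈ Submonoid.closure {x, y}, ∀ w' ∈ Submonoid.closure {x, y}, x * w ≠ y * w' := by
  have hmap : ∀ w ∈ Submonoid.closure {x, y}, f w ∈ Submonoid.closure {f x, f y} := fun w hw => by
    rw [← Set.image_pair, ← MonoidHom.map_mclosure]
    exact Submonoid.mem_map_of_mem f hw
  intro w hw w' hw' heq
  exact h _ (hmap w hw) _ (hmap w' hw') (by rw [← map_mul, heq, map_mul])

omit [DecidableEq n] in
lemma sq_card_lt_card_fin_fun_option (d : ℕ) :
    Fintype.card n ^ 2 < Fintype.card (Fin (d + 1) → Option (n × n)) := by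
  rw [Fintype.card_fun, Fintype.card_option, Fintype.card_prod, Fintype.card_fin, ← sq]
  exact Nat.lt_of_succ_le (Nat.le_self_pow d.succ_ne_zero _)

lemma IsArithmeticRep.exists_norm_isInterpolatingFamily [Nontrivial n] (hρ : IsArithmeticRep ρ)
    {S : Set G} (hgen : Subgroup.closure S = ⊤) {J : ℕ}
    (hJ : Fintype.card (Fin (Fintype.card n + 1) → Option (n × n)) ≤ J) {R : ℝ} (hR : 3 ≤ R)
    (hJR : (J.factorial : ℝ) ≤ R) (htr : ∀ g ∈ ball S (4 * J + 1), ‖(ρ g).trace‖ ≤ R) :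
    ∃ ν : AlgebraNorm ℂ (Matrix n n ℂ),
      (∀ k, ∀ g ∈ ball S k, ν (ρ g) ≤ R ^ ((2 * J + 4) * (k + 1))) ∧
      ∃ (k : ℕ) (h : Fin k → Matrix n n ℂ), (∀ i, h i ∈ ρ '' ball S J) ∧ IsInterpolatingFamily ν h
        (R ^ (2 + (2 * J + 6) * (Fintype.card n + 1) + 2 * (Fintype.card n + 1) * J)) := by
  have hcard := (sq_card_lt_card_fin_fun_option (n := n) (Fintype.card n)).trans_le hJ
  have hJ1 : Fintype.card (Fin 1 → Option (n × n)) ≤ J := by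
    simpa [sq] using hcard
  have hnJ : Fintype.card n ≤ J.factorial :=
    (Nat.le_self_pow two_ne_zero _).trans (hcard.le.trans J.self_le_factorial)
  obtain ⟨ν, hν, hνtr⟩ := hρ.exists_algebraNorm hgen hJ1 (by linarith) hJR htr
  obtain ⟨k, h, hball, hh⟩ := hρ.exists_isInterpolatingFamily hgen hJ hR
    ((Nat.cast_le.mpr hnJ).trans hJR) hJR
    (fun g hg => htr g (monotone_ball S (by omega) hg)) hν hνtr
  refine ⟨ν, fun l g hg => ?_, k, h, hball, hh⟩
  rw [pow_mul]
  exact map_le_pow_of_mem_ball (fun g hg => hν g (monotone_ball S (by omega) hg)) hg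

theorem IsArithmeticRep.exists_mul_ne_mul [Nontrivial n] (hρ : IsArithmeticRep ρ) :
    ∃ l > 0, ∀ S : Set G, S.Finite → Subgroup.closure S = ⊤ → ∃ x ∈ ball S l, ∃ y ∈ ball S l,
      ∀ w ∈ Submonoid.closure {x, y}, ∀ w' ∈ Submonoid.closure {x, y}, x * w ≠ y * w' := by
  set J := Fintype.card (Fin (Fintype.card n + 1) → Option (n × n)) with hJ
  have hcard : Fintype.card n ^ 2 < J := sq_card_lt_card_fin_fun_option (Fintype.card n)
  obtain ⟨K₀, hK₀⟩ := hρ.exists_le_norm_trace (J.factorial + 16 ^ (2 * Fintype.card n))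
  set K := K₀ + 4 * J + 1
  set e := (2 * J + 4) * (K + 1) +
    (2 + (2 * J + 6) * (Fintype.card n + 1) + 2 * (Fintype.card n + 1) * J)
  obtain ⟨m, hm⟩ := exists_pow_mul_ne_mul n e
  refine ⟨J + m * K, by omega, fun S hS hgen => ?_⟩
  obtain ⟨a, ha, hmax⟩ := Set.exists_max_image (ball S K) (fun g => ‖(ρ g).trace‖)
    (finite_ball hS K) ⟨1, one_mem_ball S K⟩
  set R := ‖(ρ a).trace‖
  obtain ⟨g₀, hg₀, hCg₀⟩ := hK₀ K (by omega) S hS hgen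
  have hCR : (J.factorial : ℝ) + 16 ^ (2 * Fintype.card n) ≤ R := by
    exact_mod_cast hCg₀.trans (hmax g₀ hg₀)
  have hJR : (J.factorial : ℝ) ≤ R := le_of_add_le_of_nonneg_left hCR (by positivity)
  have h16 : (16 : ℝ) ^ (2 * Fintype.card n) ≤ R :=
    le_of_add_le_of_nonneg_right hCR (by positivity)
  have hnR : (Fintype.card n : ℝ) ^ 2 ≤ R :=
    le_trans (by exact_mod_cast hcard.le.trans J.self_le_factorial) hJR
  have hR3 : 3 ≤ R := (by norm_num : (3 : ℝ) ≤ 16).trans <|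
    (le_self_pow₀ (by norm_num) (by simp [Fintype.card_ne_zero])).trans h16
  have hR1 : 1 ≤ R := by linarith
  obtain ⟨ν, hν, k, h, hball, hh⟩ := hρ.exists_norm_isInterpolatingFamily hgen hJ.ge hR3 hJR
    fun g hg => hmax g (monotone_ball S (by omega) hg)
  have hνK : ∀ g ∈ ball S K, ν (ρ g) ≤ R ^ e := fun g hg =>
    (hν K g hg).trans (pow_le_pow_right₀ hR1 (Nat.le_add_right _ _))
  obtain ⟨i, hi⟩ := hm (ρ.toHomUnits a) hnR h16 (hνK a ha) (hνK a⁻¹ (inv_mem_ball ha))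
    (hρ.norm_det a) le_rfl (hh.mono (pow_le_pow_right₀ hR1 (Nat.le_add_left _ _)))
  obtain ⟨g, hg, hgi⟩ := hball i
  refine ⟨a ^ m, monotone_ball S (by omega) (pow_mem_ball ha m), g * a ^ m,
    mul_mem_ball hg (pow_mem_ball ha m), mul_ne_mul_of_map ρ ?_⟩
  simpa [hgi] using hi

end FreeSubmonoids

section GrowthRates

variable {S : Set G}

lemma wordLength_le_iff (hgen : Subgroup.closure S = ⊤) {g : G} {k : ℕ} :
    wordLength S g ≤ k ↔ g ∈ ball S k := by
  refine ⟨fun hk => ?_, fun hg => ?_⟩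
  · obtain ⟨l, hl⟩ := exists_mem_ball hgen g
    obtain ⟨w, -, hw, hwg⟩ := mem_ball_iff.mp hl
    obtain ⟨v, hv, hvS, hvg⟩ := Nat.sInf_mem
      (s := {k | ∃ w : List G, w.length = k ∧ (∀ x ∈ w, x ∈ S ∨ x⁻¹ ∈ S) ∧ w.prod = g})
      ⟨w.length, w, rfl, hw, hwg⟩
    exact mem_ball_iff.mpr ⟨v, hv.trans_le hk, hvS, hvg⟩
  · obtain ⟨w, hwk, hw, hwg⟩ := mem_ball_iff.mp hg
    exact (Nat.sInf_le ⟨w, rfl, hw, hwg⟩ : wordLength S g ≤ w.length).trans hwk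

lemma ballCard_eq_ncard_ball (hgen : Subgroup.closure S = ⊤) (k : ℕ) :
    ballCard S k = (ball S k).ncard :=
  congrArg Set.ncard (Set.ext fun _ => wordLength_le_iff hgen)

lemma one_le_ballCard (hS : S.Finite) (hgen : Subgroup.closure S = ⊤) (k : ℕ) :
    1 ≤ ballCard S k := by
  rw [ballCard_eq_ncard_ball hgen, Nat.one_le_iff_ne_zero]
  exact Set.ncard_ne_zero_of_mem (one_mem_ball S k) (finite_ball hS k)

lemma subadditive_log_ballCard (hS : S.Finite) (hgen : Subgroup.closure S = ⊤) :
    Subadditive fun k => Real.log (ballCard S k) := fun k l => by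
  have hpos : ∀ k, (0 : ℝ) < ballCard S k := fun k => by exact_mod_cast one_le_ballCard hS hgen k
  rw [← Real.log_mul (hpos k).ne' (hpos l).ne']
  refine Real.log_le_log (hpos _) ?_
  simp only [ballCard_eq_ncard_ball hgen]
  exact_mod_cast ncard_ball_add_le S k l

lemma tendsto_growthRate (hS : S.Finite) (hgen : Subgroup.closure S = ⊤) :
    Tendsto (fun k : ℕ => (ballCard S k : ℝ) ^ (k : ℝ)⁻¹) atTop (nhds (growthRate S)) := by
  have hbdd : BddBelow (Set.range fun k : ℕ => Real.log (ballCard S k) / k) := by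
    refine ⟨0, ?_⟩
    rintro _ ⟨k, rfl⟩
    exact div_nonneg (Real.log_nonneg (by exact_mod_cast one_le_ballCard hS hgen k)) k.cast_nonneg
  refine tendsto_nhds_limUnder ⟨_, ((Real.continuous_exp.tendsto _).comp
    ((subadditive_log_ballCard hS hgen).tendsto_lim hbdd)).congr fun k => ?_⟩
  rw [Real.rpow_def_of_pos (by exact_mod_cast one_le_ballCard hS hgen k), Function.comp_apply,
    div_eq_mul_inv]

lemma two_rpow_inv_le_growthRate (hS : S.Finite) (hgen : Subgroup.closure S = ⊤) {l : ℕ}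
    (hl : 0 < l) (hpow : ∀ k, 2 ^ k ≤ (ball S (l * k)).ncard) :
    (2 : ℝ) ^ (l : ℝ)⁻¹ ≤ growthRate S := by
  have hsub : Tendsto (fun k : ℕ => l * k) atTop atTop := tendsto_id.const_mul_atTop' hl
  refine ge_of_tendsto ((tendsto_growthRate hS hgen).comp hsub) ?_
  filter_upwards [eventually_ne_atTop 0] with k hk
  calc (2 : ℝ) ^ (l : ℝ)⁻¹ = ((2 : ℝ) ^ k) ^ ((l * k : ℕ) : ℝ)⁻¹ := by
        rw [← Real.rpow_natCast, ← Real.rpow_mul zero_le_two]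
        push_cast
        field_simp
    _ ≤ (ballCard S (l * k) : ℝ) ^ ((l * k : ℕ) : ℝ)⁻¹ := by
        rw [ballCard_eq_ncard_ball hgen]
        gcongr
        exact_mod_cast hpow k

theorem IsArithmeticRep.one_lt_minGrowth [Group.FG G] {n : Type*} [Fintype n] [DecidableEq n]
    [Nontrivial n] {ρ : G →* Matrix n n ℂ} (hρ : IsArithmeticRep ρ) : 1 < minGrowth G := by
  obtain ⟨l, hl, hpair⟩ := hρ.exists_mul_ne_mul
  refine (Real.one_lt_rpow one_lt_two (by positivity : 0 < (l : ℝ)⁻¹)).trans_le (le_csInf ?_ ?_)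
  · obtain ⟨S, hS⟩ := Group.FG.out (G := G)
    exact ⟨_, S, hS, rfl⟩
  · rintro _ ⟨S, hgen, rfl⟩
    obtain ⟨x, hx, y, hy, hxy⟩ := hpair S S.finite_toSet hgen
    exact two_rpow_inv_le_growthRate S.finite_toSet hgen hl
      (two_pow_le_ncard_ball S.finite_toSet hx hy hxy)

end GrowthRates

section CommonPrefix

variable {A : Type*} [DecidableEq A]

/-- The length of the longest common prefix of two lists. -/
def commonPrefixLength : List A → List A → ℕ
  | x :: l, y :: m => if x = y then commonPrefixLength l m + 1 else 0
  | _, _ => 0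

lemma le_commonPrefixLength_iff {k : ℕ} {l m : List A} :
    k ≤ commonPrefixLength l m ↔ k ≤ l.length ∧ k ≤ m.length ∧ l.take k = m.take k := by
  induction l generalizing k m with
  | nil => cases k <;> simp [commonPrefixLength]
  | cons x l ih =>
    rcases m with - | ⟨y, m⟩
    · cases k <;> simp [commonPrefixLength]
    cases k with
    | zero => simp
    | succ k =>
      rw [commonPrefixLength]
      split_ifs with h
      · simp [ih, h]
      · simp [h]

lemma commonPrefixLength_comm (l m : List A) :
    commonPrefixLength l m = commonPrefixLength m l := by
  refine eq_of_forall_le_iff fun k => ?_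
  rw [le_commonPrefixLength_iff, le_commonPrefixLength_iff, and_left_comm, eq_comm]

lemma min_commonPrefixLength_le (l m o : List A) :
    min (commonPrefixLength l m) (commonPrefixLength m o) ≤ commonPrefixLength l o := by
  obtain ⟨hl, -, hlm⟩ := le_commonPrefixLength_iff.mp
    (min_le_left (commonPrefixLength l m) (commonPrefixLength m o))
  obtain ⟨-, ho, hmo⟩ := le_commonPrefixLength_iff.mp
    (min_le_right (commonPrefixLength l m) (commonPrefixLength m o))
  exact le_commonPrefixLength_iff.mpr ⟨hl, ho, hlm.trans hmo⟩

end CommonPrefix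

section GromovProduct

open FreeGroup (mk of IsReduced invRev)

variable {α : Type*}

lemma mk_cons (a : α × Bool) (l : List (α × Bool)) : mk (a :: l) = mk [a] * mk l := by
  rw [FreeGroup.mul_mk, List.singleton_append]

lemma isReduced_invRev {l : List (α × Bool)} (hl : IsReduced l) : IsReduced (invRev l) := by
  classical
  rw [FreeGroup.isReduced_iff_reduce_eq, FreeGroup.reduce_invRev, hl.reduce_eq]

lemma isReduced_invRev_cons_append_cons {x y : α × Bool} {l m : List (α × Bool)}
    (hl : IsReduced (x :: l)) (hm : IsReduced (y :: m)) (hxy : x ≠ y) :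
    IsReduced (invRev (x :: l) ++ y :: m) := by
  have hl' := isReduced_invRev hl
  rw [FreeGroup.invRev_cons] at hl' ⊢
  refine IsReduced.append_overlap hl' (FreeGroup.isReduced_cons_cons.mpr ⟨fun h => ?_, hm⟩)
    (by simp [invRev])
  exact (Bool.eq_not.mpr fun h' => hxy (Prod.ext h h'.symm)).symm

variable [DecidableEq α]

lemma norm_mk_of_isReduced {l : List (α × Bool)} (hl : IsReduced l) : (mk l).norm = l.length := by
  rw [FreeGroup.norm, FreeGroup.toWord_mk, hl.reduce_eq]

lemma norm_inv_mk_mul_mk {l m : List (α × Bool)} (hl : IsReduced l) (hm : IsReduced m) :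
    ((mk l)⁻¹ * mk m).norm + 2 * commonPrefixLength l m = l.length + m.length := by
  induction l generalizing m with
  | nil => simp [commonPrefixLength, ← FreeGroup.one_eq_mk, norm_mk_of_isReduced hm]
  | cons x l ih =>
    rcases m with - | ⟨y, m⟩
    · rw [← FreeGroup.one_eq_mk, mul_one, FreeGroup.norm_inv_eq, norm_mk_of_isReduced hl]
      simp [commonPrefixLength]
    rcases eq_or_ne x y with rfl | hxy
    · have hcancel : (mk (x :: l))⁻¹ * mk (x :: m) = (mk l)⁻¹ * mk m := by
        rw [mk_cons x l, mk_cons x m]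
        group
      have := ih (List.IsChain.tail hl) (m := m) (List.IsChain.tail hm)
      rw [hcancel, commonPrefixLength, if_pos rfl, List.length_cons, List.length_cons]
      omega
    · rw [FreeGroup.inv_mk, FreeGroup.mul_mk,
        norm_mk_of_isReduced (isReduced_invRev_cons_append_cons hl hm hxy), commonPrefixLength,
        if_neg hxy]
      simp

/-- The Gromov product of two elements of a free group for the word metric, based at `1`, encoded as
the length of the longest common prefix of their reduced words. -/
def gromovProduct (g h : FreeGroup α) : ℕ := commonPrefixLength g.toWord h.toWord

lemma norm_inv_mul_add_gromovProduct (g h : FreeGroup α) :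
    (g⁻¹ * h).norm + 2 * gromovProduct g h = g.norm + h.norm := by
  simpa only [FreeGroup.mk_toWord] using!
    norm_inv_mk_mul_mk (FreeGroup.isReduced_toWord (x := g)) (FreeGroup.isReduced_toWord (x := h))

lemma norm_mul_add_gromovProduct (g h : FreeGroup α) :
    (g * h).norm + 2 * gromovProduct g⁻¹ h = g.norm + h.norm := by
  simpa only [inv_inv, FreeGroup.norm_inv_eq] using norm_inv_mul_add_gromovProduct g⁻¹ h

lemma gromovProduct_comm (g h : FreeGroup α) : gromovProduct g h = gromovProduct h g :=
  commonPrefixLength_comm _ _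

lemma min_gromovProduct_le (g h k : FreeGroup α) :
    min (gromovProduct g h) (gromovProduct h k) ≤ gromovProduct g k :=
  min_commonPrefixLength_le _ _ _

/-- Otherwise the middle letter of the reduced word, or the middle pair of letters, would be its own
inverse. -/
lemma two_mul_gromovProduct_inv_self_lt {g : FreeGroup α} (hg : g ≠ 1) :
    2 * gromovProduct g⁻¹ g < g.norm := by
  by_contra! hlen
  have hred := FreeGroup.isReduced_toWord (x := g)
  have hprefix := (le_commonPrefixLength_iff.mp (le_refl (gromovProduct g⁻¹ g))).2.2
  have hpos : g.norm ≠ 0 := mt FreeGroup.norm_eq_zero.mp hg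
  rw [FreeGroup.norm] at hlen hpos
  set w := g.toWord with hw
  obtain ⟨j, hj⟩ : ∃ j, j = (w.length - 1) / 2 := ⟨_, rfl⟩
  have hmid : (w[w.length - 1 - j].1, !w[w.length - 1 - j].2) = w[j] := by
    have hget : g⁻¹.toWord[j]? = w[j]? := by
      simpa [show j < gromovProduct g⁻¹ g by omega] using congrArg (·[j]?) hprefix
    rw [FreeGroup.toWord_inv, ← hw, invRev, List.getElem?_reverse (by simp; omega)] at hget
    simpa [List.getElem?_eq_getElem (show w.length - 1 - j < w.length by omega),
      List.getElem?_eq_getElem (show j < w.length by omega)] using hget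
  rcases Nat.even_or_odd' w.length with ⟨r, hr | hr⟩
  · have hadj := List.isChain_iff_getElem.mp hred j (by omega)
    simp [← hmid, show w.length - 1 - j = j + 1 by omega] at hadj
  · simpa [show w.length - 1 - j = j by omega] using congrArg Prod.snd hmid

end GromovProduct

section NielsenReduced

open FreeGroup (mk of IsReduced)

variable {α β : Type*} [DecidableEq β]

/-- A homomorphism of free groups is Nielsen reduced if, in the image of a reduced word of length
three, the two cancellations next to the image of the middle letter do not exhaust that image. -/
def IsNielsenReduced (f : FreeGroup α →* FreeGroup β) : Prop :=
  ∀ a b c : α × Bool, IsReduced [a, b, c] →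
    gromovProduct (f (mk [a]))⁻¹ (f (mk [b])) + gromovProduct (f (mk [b]))⁻¹ (f (mk [c])) <
      (f (mk [b])).norm

lemma gromovProduct_inv_eq_of_lt {x y p : FreeGroup β}
    (h : gromovProduct x⁻¹ y < gromovProduct p y) : gromovProduct x⁻¹ p = gromovProduct x⁻¹ y := by
  have hle := min_gromovProduct_le x⁻¹ y p
  have hge := min_gromovProduct_le x⁻¹ p y
  rw [gromovProduct_comm y p] at hle
  omega

lemma gromovProduct_mul_self_add (x p : FreeGroup β) :
    gromovProduct (x * p) x + gromovProduct x⁻¹ p = x.norm := by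
  have hmul := norm_mul_add_gromovProduct x p
  have hself := norm_inv_mul_add_gromovProduct x (x * p)
  rw [inv_mul_cancel_left, gromovProduct_comm] at hself
  omega

lemma gromovProduct_self (x : FreeGroup β) : gromovProduct x x = x.norm := by
  have := norm_inv_mul_add_gromovProduct x x
  rw [inv_mul_cancel, FreeGroup.norm_one] at this
  omega

variable {f : FreeGroup α →* FreeGroup β}

lemma IsNielsenReduced.gromovProduct_lt_and_length_add_le (hf : IsNielsenReduced f)
    {a : α × Bool} {l : List (α × Bool)} (hl : IsReduced (a :: l)) :
    (∀ x, IsReduced [x, a] →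
      gromovProduct (f (mk [x]))⁻¹ (f (mk [a])) < gromovProduct (f (mk (a :: l))) (f (mk [a]))) ∧
    l.length + gromovProduct (f (mk (a :: l))) (f (mk [a])) ≤ (f (mk (a :: l))).norm := by
  induction l generalizing a with
  | nil =>
    refine ⟨fun x hx => ?_, by simp [gromovProduct_self]⟩
    have := hf x a a (by simp_all)
    rw [gromovProduct_self]
    omega
  | cons b l ih =>
    rw [FreeGroup.isReduced_cons_cons] at hl
    obtain ⟨hlt, hlen⟩ := ih hl.2
    have hab := hlt a (by simpa using hl.1)
    have hcancel := gromovProduct_inv_eq_of_lt hab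
    have hself := gromovProduct_mul_self_add (f (mk [a])) (f (mk (b :: l)))
    have hnorm := norm_mul_add_gromovProduct (f (mk [a])) (f (mk (b :: l)))
    rw [mk_cons a (b :: l), map_mul]
    refine ⟨fun x hx => ?_, ?_⟩
    · have := hf x a b (by simp_all)
      omega
    · rw [List.length_cons]
      omega

lemma IsNielsenReduced.norm_le_norm_apply [DecidableEq α] (hf : IsNielsenReduced f)
    (g : FreeGroup α) : g.norm ≤ (f g).norm := by
  have hred := FreeGroup.isReduced_toWord (x := g)
  cases hw : g.toWord with
  | nil => simp [FreeGroup.norm, hw]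
  | cons a l =>
    rw [hw] at hred
    obtain ⟨hlt, hlen⟩ := hf.gromovProduct_lt_and_length_add_le hred
    have := hlt a (by simp)
    rw [← hw, FreeGroup.mk_toWord] at this hlen
    rw [FreeGroup.norm, hw, List.length_cons]
    omega

end NielsenReduced

section Complexity

open FreeGroup (mk IsReduced invRev)

/-- The value of a word over a finite alphabet, read as a number whose digits are the letters (for
an arbitrary enumeration of the alphabet). On words of a fixed length, comparing values is comparing
lexicographically. -/
noncomputable def wordValue {A : Type*} [Finite A] (l : List A) : ℕ :=
  Nat.ofDigits (Nat.card A + 2) (l.reverse.map fun a => (Finite.equivFin A a : ℕ))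

section WordValue

variable {A : Type*} [Finite A]

lemma digit_lt (l : List A) :
    ∀ x ∈ l.reverse.map fun a => (Finite.equivFin A a : ℕ), x < Nat.card A + 2 := by
  simp only [List.mem_map]
  rintro - ⟨a, -, rfl⟩
  exact (Finite.equivFin A a).isLt.trans (by omega)

lemma wordValue_append (l m : List A) :
    wordValue (l ++ m) = wordValue l * (Nat.card A + 2) ^ m.length + wordValue m := by
  simp only [wordValue, List.reverse_append, List.map_append, Nat.ofDigits_append,
    List.length_map, List.length_reverse]
  ring

lemma wordValue_lt (l : List A) : wordValue l < (Nat.card A + 2) ^ l.length := by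
  simpa [wordValue] using Nat.ofDigits_lt_base_pow_length (by omega) (digit_lt l)

lemma eq_of_wordValue_eq {l m : List A} (hlen : l.length = m.length)
    (h : wordValue l = wordValue m) : l = m := by
  have hdigits := Nat.ofDigits_inj_of_len_eq (by omega) (by simpa using hlen) (digit_lt l)
    (digit_lt m) h
  exact List.reverse_injective (List.map_injective_iff.mpr
    (Fin.val_injective.comp (Finite.equivFin A).injective) hdigits)

end WordValue

lemma inv_mk_singleton {α : Type*} (a : α × Bool) : (mk [a])⁻¹ = mk [(a.1, !a.2)] :=
  FreeGroup.inv_mk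

lemma toWord_mk_of_length_le {α : Type*} [DecidableEq α] {l : List (α × Bool)}
    (h : l.length ≤ (mk l).norm) : (mk l).toWord = l := by
  rw [FreeGroup.norm, FreeGroup.toWord_mk] at *
  exact FreeGroup.reduce.red.sublist.eq_of_length_le h

lemma toWord_mul_of_toWord_eq {α : Type*} [DecidableEq α] {x y : FreeGroup α}
    {q a b : List (α × Bool)} (hx : x⁻¹.toWord = q ++ a) (hy : y.toWord = q ++ b)
    (hq : gromovProduct x⁻¹ y = q.length) : (x * y).toWord = invRev a ++ b := by
  have hmul : x * y = mk (invRev a ++ b) := by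
    have hx_mk : x⁻¹ = mk q * mk a := by rw [FreeGroup.mul_mk, ← hx, FreeGroup.mk_toWord]
    have hy_mk : y = mk q * mk b := by rw [FreeGroup.mul_mk, ← hy, FreeGroup.mk_toWord]
    rw [← inv_inv x, hx_mk, hy_mk, ← FreeGroup.mul_mk, ← FreeGroup.inv_mk]
    group
  have hnorm := norm_mul_add_gromovProduct x y
  rw [← FreeGroup.norm_inv_eq (x := x), FreeGroup.norm.eq_1 x⁻¹, FreeGroup.norm.eq_1 y, hx, hy,
    List.length_append, List.length_append, hmul] at hnorm
  rw [hmul]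
  refine toWord_mk_of_length_le ?_
  rw [List.length_append, FreeGroup.invRev_length]
  omega

variable {α : Type*} [Finite α]

lemma wordValue_add_lt {q r a : List (α × Bool)} (hlen : r.length = q.length)
    (hle : q.length ≤ a.length) (h : wordValue r < wordValue q) :
    wordValue (invRev a ++ invRev r) + wordValue (r ++ a) <
      wordValue (invRev a ++ invRev q) + wordValue (q ++ a) := by
  have hlow : wordValue (invRev r) < (Nat.card (α × Bool) + 2) ^ a.length :=
    calc wordValue (invRev r) < (Nat.card (α × Bool) + 2) ^ q.length := by
          simpa [hlen] using wordValue_lt (invRev r)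
      _ ≤ (Nat.card (α × Bool) + 2) ^ a.length := Nat.pow_le_pow_right (by omega) hle
  have hhigh : (wordValue r + 1) * (Nat.card (α × Bool) + 2) ^ a.length ≤
      wordValue q * (Nat.card (α × Bool) + 2) ^ a.length := Nat.mul_le_mul_right _ h
  simp only [wordValue_append, FreeGroup.invRev_length, hlen]
  rw [add_mul, one_mul] at hhigh
  omega

variable [DecidableEq α]

/-- The complexity that Nielsen moves decrease: the length of the reduced word, with ties broken by
the words of the element and of its inverse. -/
noncomputable def complexity (u : FreeGroup α) : ℕ ×ₗ ℕ :=
  toLex (u.norm, wordValue u.toWord + wordValue u⁻¹.toWord)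

lemma complexity_inv (u : FreeGroup α) : complexity u⁻¹ = complexity u := by
  rw [complexity, complexity, inv_inv, FreeGroup.norm_inv_eq, add_comm]

lemma norm_le_of_complexity_le {u v : FreeGroup α} (h : complexity u ≤ complexity v) :
    u.norm ≤ v.norm :=
  (Prod.Lex.toLex_le_toLex.mp h).elim le_of_lt fun h => h.1.le

lemma wordValue_add_le_of_complexity_le {u v : FreeGroup α} (h : complexity u ≤ complexity v)
    (hnorm : v.norm ≤ u.norm) :
    wordValue u.toWord + wordValue u⁻¹.toWord ≤ wordValue v.toWord + wordValue v⁻¹.toWord :=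
  (Prod.Lex.toLex_le_toLex.mp h).elim (fun h => absurd h hnorm.not_gt) And.right

/-- If exactly the first half `q` of the word of `y` cancels in `x * y`, then multiplying by `y`
replaces a suffix `q⁻¹` of `x` by the second half of `y`, without changing the length. -/
lemma wordValue_take_le_of_complexity_le {x y : FreeGroup α} {k : ℕ} (hy : y.norm = 2 * k)
    (hx : 2 * k ≤ x.norm) (hxy : gromovProduct x⁻¹ y = k)
    (hmin : complexity x ≤ complexity (x * y)) :
    wordValue (y.toWord.take k) ≤ wordValue (y⁻¹.toWord.take k) := by
  obtain ⟨-, hky, hprefix⟩ := le_commonPrefixLength_iff.mp hxy.ge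
  set q := y.toWord.take k with hq
  set b := y.toWord.drop k with hb
  set a := x⁻¹.toWord.drop k with ha
  have hy_word : y.toWord = q ++ b := (List.take_append_drop k _).symm
  have hxinv_word : x⁻¹.toWord = q ++ a := by rw [← hprefix, List.take_append_drop]
  have hx_word : x.toWord = invRev a ++ invRev q := by
    rw [← inv_inv x, FreeGroup.toWord_inv, hxinv_word, FreeGroup.invRev_append]
  have hyinv_word : y⁻¹.toWord = invRev b ++ invRev q := by
    rw [FreeGroup.toWord_inv, hy_word, FreeGroup.invRev_append]
  have hq_len : q.length = k := List.length_take_of_le hky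
  have hb_len : b.length = k := by
    rw [FreeGroup.norm, hy_word, List.length_append] at hy
    omega
  have ha_len : k ≤ a.length := by
    rw [← FreeGroup.norm_inv_eq, FreeGroup.norm, hxinv_word, List.length_append] at hx
    omega
  have hnorm : (x * y).norm = x.norm := by
    have := norm_mul_add_gromovProduct x y
    omega
  have hmul_word : (x * y).toWord = invRev a ++ b :=
    toWord_mul_of_toWord_eq hxinv_word hy_word (hxy.trans hq_len.symm)
  have htake : y⁻¹.toWord.take k = invRev b := by
    rw [hyinv_word, List.take_left' (by rw [FreeGroup.invRev_length, hb_len])]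
  have hvalue := wordValue_add_le_of_complexity_le hmin hnorm.le
  rw [FreeGroup.toWord_inv (x * y), hmul_word, FreeGroup.invRev_append, FreeGroup.invRev_invRev,
    hxinv_word, hx_word] at hvalue
  rw [htake]
  by_contra! hlt
  have := wordValue_add_lt (a := a) (by simp [hq_len, hb_len]) (by omega) hlt
  rw [FreeGroup.invRev_invRev] at this
  omega

lemma two_mul_gromovProduct_le_of_complexity_le {x y : FreeGroup α}
    (hmin : complexity x ≤ complexity (x * y)) : 2 * gromovProduct x⁻¹ y ≤ y.norm := by
  have := norm_mul_add_gromovProduct x y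
  have := norm_le_of_complexity_le hmin
  omega

lemma gromovProduct_add_lt_of_complexity_le {x y z : FreeGroup α} (hy : y ≠ 1)
    (hxy : complexity x ≤ complexity (x * y)) (hyx : complexity y⁻¹ ≤ complexity (y⁻¹ * x⁻¹))
    (hyz : complexity y ≤ complexity (y * z)) (hzy : complexity z⁻¹ ≤ complexity (z⁻¹ * y⁻¹)) :
    gromovProduct x⁻¹ y + gromovProduct y⁻¹ z < y.norm := by
  have hxy_le := two_mul_gromovProduct_le_of_complexity_le hxy
  have hyx_le := two_mul_gromovProduct_le_of_complexity_le hyx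
  have hyz_le := two_mul_gromovProduct_le_of_complexity_le hyz
  have hzy_le := two_mul_gromovProduct_le_of_complexity_le hzy
  rw [inv_inv, gromovProduct_comm, FreeGroup.norm_inv_eq] at hyx_le hzy_le
  by_contra! hcon
  set k := gromovProduct x⁻¹ y with hk
  have hnorm : y.norm = 2 * k := by omega
  have hle := wordValue_take_le_of_complexity_le hnorm (by omega) hk.symm hxy
  have hge := wordValue_take_le_of_complexity_le (x := z⁻¹) (y := y⁻¹) (k := k)
    (by rwa [FreeGroup.norm_inv_eq]) (by rw [FreeGroup.norm_inv_eq]; omega)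
    (by rw [inv_inv, gromovProduct_comm]; omega) hzy
  rw [inv_inv] at hge
  have hhalf : y⁻¹.toWord.take k = y.toWord.take k :=
    eq_of_wordValue_eq (by simp [FreeGroup.toWord_inv]) (hge.antisymm hle)
  have hprefix : k ≤ gromovProduct y⁻¹ y := le_commonPrefixLength_iff.mpr
    ⟨by rw [← FreeGroup.norm, FreeGroup.norm_inv_eq]; omega, by rw [← FreeGroup.norm]; omega, hhalf⟩
  have := two_mul_gromovProduct_inv_self_lt hy
  omega

lemma isNielsenReduced_of_complexity_le {β : Type*} {f : FreeGroup β →* FreeGroup α}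
    (hne : ∀ a, f (mk [a]) ≠ 1)
    (hmin : ∀ a b : β × Bool, a.1 ≠ b.1 →
      complexity (f (mk [a])) ≤ complexity (f (mk [a]) * f (mk [b]))) :
    IsNielsenReduced f := by
  intro a b c habc
  simp only [FreeGroup.isReduced_cons_cons, IsReduced.singleton, and_true] at habc
  have hmin_inv : ∀ a b : β × Bool, a.1 ≠ b.1 →
      complexity (f (mk [b]))⁻¹ ≤ complexity ((f (mk [b]))⁻¹ * (f (mk [a]))⁻¹) := by
    intro a b hab
    simpa only [← map_inv, inv_mk_singleton] using hmin (b.1, !b.2) (a.1, !a.2) hab.symm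
  have hle_right : ∀ a b : β × Bool, a.1 ≠ b.1 →
      2 * gromovProduct (f (mk [a]))⁻¹ (f (mk [b])) ≤ (f (mk [b])).norm := fun a b hab =>
    two_mul_gromovProduct_le_of_complexity_le (hmin a b hab)
  have hle_left : ∀ a b : β × Bool, a.1 ≠ b.1 →
      2 * gromovProduct (f (mk [a]))⁻¹ (f (mk [b])) ≤ (f (mk [a])).norm := fun a b hab => by
    simpa only [inv_inv, gromovProduct_comm, FreeGroup.norm_inv_eq] using
      two_mul_gromovProduct_le_of_complexity_le (hmin_inv a b hab)
  have hself := two_mul_gromovProduct_inv_self_lt (hne b)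
  by_cases hab : a.1 = b.1 <;> by_cases hbc : b.1 = c.1
  · rw [Prod.ext hab (habc.1 hab), ← Prod.ext hbc (habc.2 hbc)]
    omega
  · rw [Prod.ext hab (habc.1 hab)]
    have := hle_left b c hbc
    omega
  · rw [← Prod.ext hbc (habc.2 hbc)]
    have := hle_right a b hab
    omega
  · exact gromovProduct_add_lt_of_complexity_le (hne b) (hmin a b hab) (hmin_inv a b hab)
      (hmin b c hbc) (hmin_inv b c hbc)

end Complexity

section NielsenGenerators

open FreeGroup (mk of lift)

variable {α : Type*}

lemma mk_pair_true (k : α) : mk [(k, true)] = of k := rfl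

lemma mk_pair_false (k : α) : mk [(k, false)] = (of k)⁻¹ := rfl

lemma hom_ext_of_letter {H : Type*} [Group H] {f g : FreeGroup α →* H} {l : α × Bool}
    (hl : f (mk [l]) = g (mk [l])) (hne : ∀ k, k ≠ l.1 → f (of k) = g (of k)) : f = g := by
  refine FreeGroup.ext_hom _ _ fun k => ?_
  by_cases hk : k = l.1
  · obtain ⟨k', - | -⟩ := l
    · simpa [hk, mk_pair_false] using hl
    · simpa [hk, mk_pair_true] using hl
  · exact hne k hk

section NielsenMove

variable [DecidableEq α]

/-- The endomorphism sending the letter `l` to `l * m` and fixing the other generators. -/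
def nielsenHom (l m : α × Bool) : FreeGroup α →* FreeGroup α :=
  lift (Function.update of l.1 (if l.2 then of l.1 * mk [m] else (mk [m])⁻¹ * of l.1))

lemma nielsenHom_mk_self (l m : α × Bool) : nielsenHom l m (mk [l]) = mk [l] * mk [m] := by
  obtain ⟨k, - | -⟩ := l
  · simp [nielsenHom, mk_pair_false]
  · simp [nielsenHom, mk_pair_true]

lemma nielsenHom_of {l : α × Bool} {k : α} (hk : k ≠ l.1) (m : α × Bool) :
    nielsenHom l m (of k) = of k := by
  simp [nielsenHom, hk]

lemma nielsenHom_mk {l x : α × Bool} (hx : x.1 ≠ l.1) (m : α × Bool) :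
    nielsenHom l m (mk [x]) = mk [x] := by
  obtain ⟨k, - | -⟩ := x
  · rw [mk_pair_false, map_inv, nielsenHom_of hx]
  · rw [mk_pair_true, nielsenHom_of hx]

lemma nielsenHom_inv_comp {l m : α × Bool} (h : l.1 ≠ m.1) :
    (nielsenHom l (m.1, !m.2)).comp (nielsenHom l m) = MonoidHom.id _ := by
  refine hom_ext_of_letter (l := l) ?_ fun k hk => ?_
  · rw [MonoidHom.comp_apply, nielsenHom_mk_self, map_mul, nielsenHom_mk_self,
      nielsenHom_mk h.symm, ← inv_mk_singleton, inv_mul_cancel_right, MonoidHom.id_apply]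
  · rw [MonoidHom.comp_apply, nielsenHom_of hk, nielsenHom_of hk, MonoidHom.id_apply]

/-- The elementary Nielsen move: the automorphism sending the letter `l` to `l * m` and fixing the
generators other than that of `l`. -/
def nielsenMove (l m : α × Bool) (h : l.1 ≠ m.1) : MulAut (FreeGroup α) :=
  MonoidHom.toMulEquiv (nielsenHom l m) (nielsenHom l (m.1, !m.2)) (nielsenHom_inv_comp h)
    (by simpa using nielsenHom_inv_comp (m := (m.1, !m.2)) h)

lemma nielsenMove_mk_self {l m : α × Bool} (h : l.1 ≠ m.1) :
    nielsenMove l m h (mk [l]) = mk [l] * mk [m] :=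
  nielsenHom_mk_self l m

lemma nielsenMove_of {l m : α × Bool} (h : l.1 ≠ m.1) {k : α} (hk : k ≠ l.1) :
    nielsenMove l m h (of k) = of k :=
  nielsenHom_of hk m

end NielsenMove

/-- The endomorphism sending each generator `k` to the generator `σ k` (if `ε k = true`) or to its
inverse. -/
def signedPermHom (σ : α → α) (ε : α → Bool) : FreeGroup α →* FreeGroup α :=
  lift fun k => mk [(σ k, ε k)]

lemma signedPermHom_of (σ : α → α) (ε : α → Bool) (k : α) :
    signedPermHom σ ε (of k) = mk [(σ k, ε k)] :=
  FreeGroup.lift_apply_of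

lemma signedPermHom_comp {σ τ : α → α} (h : Function.LeftInverse τ σ) (ε : α → Bool) :
    (signedPermHom τ (ε ∘ τ)).comp (signedPermHom σ ε) = MonoidHom.id _ := by
  refine FreeGroup.ext_hom _ _ fun k => ?_
  rw [MonoidHom.comp_apply, signedPermHom_of, MonoidHom.id_apply]
  cases hk : ε k
  · rw [mk_pair_false, map_inv, signedPermHom_of, Function.comp_apply, h, hk, mk_pair_false,
      inv_inv]
  · rw [mk_pair_true, signedPermHom_of, Function.comp_apply, h, hk, mk_pair_true]

/-- The automorphism permuting the generators by `σ` and inverting those `k` with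
`ε k = false`. -/
def signedPerm (σ : Equiv.Perm α) (ε : α → Bool) : MulAut (FreeGroup α) :=
  MonoidHom.toMulEquiv (signedPermHom σ ε) (signedPermHom σ.symm (ε ∘ σ.symm))
    (signedPermHom_comp σ.left_inv ε)
    (by simpa [Function.comp_assoc] using signedPermHom_comp σ.right_inv (ε ∘ σ.symm))

lemma signedPerm_of (σ : Equiv.Perm α) (ε : α → Bool) (k : α) :
    signedPerm σ ε (of k) = mk [(σ k, ε k)] :=
  signedPermHom_of σ ε k

lemma injective_fst_of_apply_of_eq_mk {β : Type*} {f : FreeGroup α →* FreeGroup β}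
    (hf : Function.Injective f) {s : α → β × Bool} (hs : ∀ k, f (of k) = mk [s k]) :
    Function.Injective fun k => (s k).1 := by
  classical
  intro k k' (hk : (s k).1 = (s k').1)
  by_cases hsign : (s k).2 = (s k').2
  · exact FreeGroup.of_injective (hf (by rw [hs, hs, Prod.ext hk hsign]))
  · have hinv : of k = (of k')⁻¹ := hf <| by
      rw [map_inv, hs, hs, inv_mk_singleton, ← hk, ← Bool.eq_not.mpr hsign]
    simpa [FreeGroup.toWord_inv, FreeGroup.invRev] using congrArg FreeGroup.toWord hinv

lemma exists_eq_mk_of_norm_eq_one [DecidableEq α] {g : FreeGroup α} (h : g.norm = 1) :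
    ∃ x, g = mk [x] := by
  obtain ⟨x, hx⟩ := List.length_eq_one_iff.mp h
  exact ⟨x, by rw [← hx, FreeGroup.mk_toWord]⟩

lemma exists_eq_signedPerm [Finite α] [DecidableEq α] {f : MulAut (FreeGroup α)}
    (hf : ∀ k, (f (of k)).norm ≤ 1) : ∃ σ ε, f = signedPerm σ ε := by
  have hletter : ∀ k, ∃ x, f (of k) = mk [x] := fun k =>
    exists_eq_mk_of_norm_eq_one <| (hf k).antisymm <| Nat.one_le_iff_ne_zero.mpr <|
      mt FreeGroup.norm_eq_zero.mp <| (map_ne_one_iff f f.injective).mpr (FreeGroup.of_ne_one k)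
  choose s hs using hletter
  have hinj := injective_fst_of_apply_of_eq_mk (f := f.toMonoidHom) f.injective hs
  let σ : Equiv.Perm α := Equiv.ofBijective _ (Finite.injective_iff_bijective.mp hinj)
  let ε : α → Bool := fun k => (s k).2
  have hext : f.toMonoidHom = (signedPerm σ ε).toMonoidHom :=
    FreeGroup.ext_hom _ _ fun k => (hs k).trans (signedPerm_of σ ε k).symm
  exact ⟨σ, ε, MulEquiv.ext fun g => DFunLike.congr_fun hext g⟩

variable [DecidableEq α]

/-- Nielsen's generators of the automorphism group of a free group: the elementary Nielsen moves
and the signed permutations of the generators. -/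
def nielsenGenerators (α : Type*) [DecidableEq α] : Set (MulAut (FreeGroup α)) :=
  Set.range (fun p : {p : (α × Bool) × (α × Bool) // p.1.1 ≠ p.2.1} =>
    nielsenMove p.1.1 p.1.2 p.2) ∪ Set.range (fun p : Equiv.Perm α × (α → Bool) =>
    signedPerm p.1 p.2)

lemma finite_nielsenGenerators [Finite α] : (nielsenGenerators α).Finite :=
  (Set.finite_range _).union (Set.finite_range _)

section TotalComplexity

variable [Fintype α]

/-- The quantity that the Nielsen reduction process decreases. -/
noncomputable def totalComplexity (f : MulAut (FreeGroup α)) : ℕ ×ₗ ℕ :=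
  ∑ k, complexity (f (of k))

lemma totalComplexity_mul_nielsenMove_add (f : MulAut (FreeGroup α)) {l m : α × Bool}
    (h : l.1 ≠ m.1) :
    totalComplexity (f * nielsenMove l m h) + complexity (f (mk [l])) =
      totalComplexity f + complexity (f (mk [l]) * f (mk [m])) := by
  have hletter : ∀ g : MulAut (FreeGroup α), complexity (g (of l.1)) = complexity (g (mk [l])) := by
    intro g
    obtain ⟨k, - | -⟩ := l
    · rw [mk_pair_false, map_inv, complexity_inv]
    · rw [mk_pair_true]
  have hrest : ∑ k ∈ Finset.univ.erase l.1, complexity ((f * nielsenMove l m h) (of k)) =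
      ∑ k ∈ Finset.univ.erase l.1, complexity (f (of k)) :=
    Finset.sum_congr rfl fun k hk => by
      rw [MulAut.mul_apply, nielsenMove_of h (Finset.ne_of_mem_erase hk)]
  rw [totalComplexity, totalComplexity, ← Finset.add_sum_erase _ _ (Finset.mem_univ l.1), hrest,
    ← Finset.add_sum_erase (a := l.1) _ (fun k => complexity (f (of k))) (Finset.mem_univ l.1),
    hletter, hletter, MulAut.mul_apply, nielsenMove_mk_self, map_mul]
  abel

end TotalComplexity

theorem closure_nielsenGenerators [Finite α] : Subgroup.closure (nielsenGenerators α) = ⊤ := by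
  cases nonempty_fintype α
  refine eq_top_iff.mpr fun f _ => ?_
  induction hc : totalComplexity f using WellFoundedLT.induction generalizing f with
  | _ c ih =>
  by_cases hmove : ∃ l m : α × Bool, l.1 ≠ m.1 ∧
      complexity (f (mk [l]) * f (mk [m])) < complexity (f (mk [l]))
  · obtain ⟨l, m, h, hlt⟩ := hmove
    have hsum := totalComplexity_mul_nielsenMove_add f h
    have hdecr : totalComplexity (f * nielsenMove l m h) < c := by
      rw [← hc]
      by_contra! hle
      exact (add_lt_add_of_le_of_lt hle hlt).ne' hsum
    have hmem : nielsenMove l m h ∈ Subgroup.closure (nielsenGenerators α) :=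
      Subgroup.subset_closure (Or.inl ⟨⟨(l, m), h⟩, rfl⟩)
    exact (Subgroup.mul_mem_cancel_right _ hmem).mp (ih _ hdecr _ trivial rfl)
  · push Not at hmove
    have hred : IsNielsenReduced f.toMonoidHom := isNielsenReduced_of_complexity_le
      (fun a => (map_ne_one_iff f f.injective).mpr (by simp [← FreeGroup.toWord_eq_nil_iff])) hmove
    obtain ⟨σ, ε, hf⟩ := exists_eq_signedPerm (f := f⁻¹) fun k => by
      simpa using hred.norm_le_norm_apply (f⁻¹ (of k))
    rw [← Subgroup.inv_mem_iff, hf]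
    exact Subgroup.subset_closure (Or.inr ⟨(σ, ε), rfl⟩)

end NielsenGenerators

instance groupFG_mulAut_freeGroup {α : Type*} [Finite α] : Group.FG (MulAut (FreeGroup α)) := by
  classical
  exact Group.fg_iff.mpr ⟨_, closure_nielsenGenerators, finite_nielsenGenerators⟩

section Abelianization

open FreeGroup (mk of lift)

variable {α : Type*} [DecidableEq α]

/-- The image of an element of a free group in the free abelian group on the same generators: its
`i`-th coordinate is the exponent sum of the generator `i`. -/
def exponentSum (g : FreeGroup α) : α → ℤ :=
  (lift (fun k => Multiplicative.ofAdd (Pi.single k (1 : ℤ) : α → ℤ)) g).toAdd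

lemma exponentSum_one : exponentSum (1 : FreeGroup α) = 0 := by simp [exponentSum]

lemma exponentSum_mul (g h : FreeGroup α) :
    exponentSum (g * h) = exponentSum g + exponentSum h := by
  simp [exponentSum]

lemma exponentSum_inv (g : FreeGroup α) : exponentSum g⁻¹ = -exponentSum g := by
  simp [exponentSum]

lemma exponentSum_of (k : α) : exponentSum (of k) = Pi.single k 1 := by simp [exponentSum]

/-- The exponent of the letter `(k, b)`, as an integer. -/
def letterSign (b : Bool) : ℤ := if b then 1 else -1

lemma exponentSum_mk_singleton (x : α × Bool) :
    exponentSum (mk [x]) = Pi.single x.1 (letterSign x.2) := by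
  obtain ⟨k, - | -⟩ := x
  · rw [mk_pair_false, exponentSum_inv, exponentSum_of, ← Pi.single_neg]
    rfl
  · rw [mk_pair_true, exponentSum_of]
    rfl

lemma exponentSum_map_apply [Fintype α] (f : FreeGroup α →* FreeGroup α) (g : FreeGroup α) (i : α) :
    exponentSum (f g) i = ∑ k, exponentSum (f (of k)) i * exponentSum g k := by
  induction g using FreeGroup.induction_on with
  | C1 => simp [exponentSum_one]
  | of k => simp [exponentSum_of, Pi.single_apply]
  | inv_of k ih => simp only [map_inv, exponentSum_inv, Pi.neg_apply, ih, mul_neg,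
      Finset.sum_neg_distrib]
  | mul g h hg hh => simp only [map_mul, exponentSum_mul, Pi.add_apply, hg, hh, mul_add,
      Finset.sum_add_distrib]

lemma exponentSum_nielsenMove_self {l m : α × Bool} (h : l.1 ≠ m.1) :
    exponentSum (nielsenMove l m h (of l.1)) =
      Pi.single l.1 1 + Pi.single m.1 (letterSign l.2 * letterSign m.2) := by
  have hl : exponentSum (nielsenMove l m h (mk [l])) =
      Pi.single l.1 (letterSign l.2) + Pi.single m.1 (letterSign m.2) := by
    rw [nielsenMove_mk_self, exponentSum_mul, exponentSum_mk_singleton, exponentSum_mk_singleton]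
  obtain ⟨k, - | -⟩ := l
  · rw [mk_pair_false, map_inv, exponentSum_inv, neg_eq_iff_eq_neg] at hl
    simp [hl, letterSign, ← Pi.single_neg, apply_ite, add_comm]
  · rw [mk_pair_true] at hl
    simp [hl, letterSign]

variable [Fintype α]

/-- The action of the automorphisms of a free group on its abelianization `α → ℤ`. -/
def abelianizationRep : MulAut (FreeGroup α) →* Matrix α α ℤ where
  toFun f := Matrix.of fun i j => exponentSum (f (of j)) i
  map_one' := by
    ext i j
    simp [exponentSum_of, Matrix.one_apply, Pi.single_apply]
  map_mul' f g := by
    ext i j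
    exact exponentSum_map_apply f.toMonoidHom (g (of j)) i

lemma abelianizationRep_apply (f : MulAut (FreeGroup α)) (i j : α) :
    abelianizationRep f i j = exponentSum (f (of j)) i :=
  rfl

lemma abelianizationRep_nielsenMove {l m : α × Bool} (h : l.1 ≠ m.1) :
    abelianizationRep (nielsenMove l m h) =
      Matrix.transvection m.1 l.1 (letterSign l.2 * letterSign m.2) := by
  ext i j
  rw [abelianizationRep_apply, Matrix.transvection, Matrix.add_apply, Matrix.one_apply,
    Matrix.single_apply]
  by_cases hj : j = l.1
  · subst hj
    simp [exponentSum_nielsenMove_self, Pi.single_apply, eq_comm (a := i) (b := m.1)]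
  · simp [nielsenMove_of h hj, exponentSum_of, Pi.single_apply, Ne.symm hj]

lemma abelianizationRep_signedPerm (σ : Equiv.Perm α) (ε : α → Bool) (i j : α) :
    abelianizationRep (signedPerm σ ε) i j = if i = σ j then letterSign (ε j) else 0 := by
  rw [abelianizationRep_apply, signedPerm_of, exponentSum_mk_singleton, Pi.single_apply]

lemma transpose_mem_mrange_of_closure_eq_top {n R : Type*} [Fintype n] [DecidableEq n] [CommRing R]
    {ρ : G →* Matrix n n R} {S : Set G} (hS : Subgroup.closure S = ⊤)
    (h : ∀ g ∈ S, (ρ g).transpose ∈ MonoidHom.mrange ρ) (g : G) :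
    (ρ g).transpose ∈ MonoidHom.mrange ρ := by
  have hg : g ∈ Subgroup.closure S := hS ▸ Subgroup.mem_top g
  induction hg using Subgroup.closure_induction with
  | mem g hg => exact h g hg
  | one => simp [one_mem]
  | mul g₁ g₂ _ _ h₁ h₂ =>
    rw [map_mul, Matrix.transpose_mul]
    exact mul_mem h₂ h₁
  | inv g _ hg =>
    obtain ⟨g', hg'⟩ := hg
    refine ⟨g'⁻¹, left_inv_eq_right_inv (a := ρ g') ?_ ?_⟩
    · rw [← map_mul, inv_mul_cancel, map_one]
    · rw [hg', ← Matrix.transpose_mul, ← map_mul, inv_mul_cancel, map_one, Matrix.transpose_one]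

lemma transpose_abelianizationRep_mem_mrange (f : MulAut (FreeGroup α)) :
    (abelianizationRep f).transpose ∈ MonoidHom.mrange (abelianizationRep (α := α)) := by
  refine transpose_mem_mrange_of_closure_eq_top closure_nielsenGenerators ?_ f
  rintro - (⟨⟨⟨l, m⟩, h⟩, rfl⟩ | ⟨⟨σ, ε⟩, rfl⟩)
  · refine ⟨nielsenMove m l h.symm, ?_⟩
    simp [abelianizationRep_nielsenMove, Matrix.transvection, mul_comm]
  · refine ⟨signedPerm σ.symm (ε ∘ σ.symm), ?_⟩
    ext i j
    rw [Matrix.transpose_apply, abelianizationRep_signedPerm, abelianizationRep_signedPerm]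
    by_cases h : j = σ i
    · simp [h]
    · simp [h, Equiv.eq_symm_apply, Ne.symm h]

lemma transvection_mem_mrange_abelianizationRep {i j : α} (hij : i ≠ j) (k : ℤ) :
    Matrix.transvection i j k ∈ MonoidHom.mrange (abelianizationRep (α := α)) := by
  have hmove : ∀ b, Matrix.transvection i j (letterSign b) ∈
      MonoidHom.mrange (abelianizationRep (α := α)) := fun b =>
    ⟨nielsenMove (j, true) (i, b) hij.symm, by
      simp [abelianizationRep_nielsenMove, show letterSign true = 1 from rfl]⟩
  induction k using Int.induction_on with
  | zero => simp [one_mem]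
  | succ k ih =>
    rw [← Matrix.transvection_mul_transvection_same _ _ hij]
    exact mul_mem ih (hmove true)
  | pred k ih =>
    rw [sub_eq_add_neg, ← Matrix.transvection_mul_transvection_same _ _ hij]
    exact mul_mem ih (hmove false)

lemma isArithmeticRep_abelianizationRep :
    IsArithmeticRep ((Int.castRingHom ℂ).mapMatrix.toMonoidHom.comp
      (abelianizationRep (α := α))) where
  integral f := mem_integralMatrices.mpr fun i j => ⟨abelianizationRep f i j, rfl⟩
  transpose_mem f := by
    obtain ⟨f', hf'⟩ := transpose_abelianizationRep_mem_mrange f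
    refine ⟨f', ?_⟩
    ext i j
    simp [hf']
  transvection_mem i j k hij := by
    obtain ⟨f, hf⟩ := transvection_mem_mrange_abelianizationRep hij k
    refine ⟨f, ?_⟩
    ext
    simp [hf, Matrix.transvection, Matrix.one_apply, Matrix.single_apply]

end Abelianization

end UniformGrowth

/-- for `n ≥ 2`, `Aut(Fₙ)` has uniformly exponential growth. -/
theorem aut_freeGroup_uniform_exponential_growth (n : ℕ) (hn : 2 ≤ n) :
    1 < minGrowth (MulAut (FreeGroup (Fin n))) :=
  have : Nontrivial (Fin n) := Fin.nontrivial_iff_two_le.mpr hn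
  UniformGrowth.isArithmeticRep_abelianizationRep.one_lt_minGrowth
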